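/- arXiv:2206.12477 — 2 statements merged into one kernel-verified Lean document; each statement's English description precedes it below -/
import Mathlib

section
/- For every integer d ≥ 2 there exists a constant C_d > 0, depending only on d, such that for every n with 2 ≤ d ≤ n/2 and every t ≥ C_d·n·log n, one has max_{G ∈ Ω^B_n(d)} ‖exp(t·Q_u)(G,·) − π_u‖_TV ≤ 1/4; i.e., the total variation mixing time t_mix(Q_u, 1/4) of the switch chain is at most C_d·n·log n. -/
/-!
The switch chain is compared with random transpositions. Put `N = n d`. A permutation of the `N`
slots `Fin n × Fin d` encodes a bipartite multigraph; each `d`-regular simple graph is encoded by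
the same number of permutations (`card_fib`), and a transposition between two permutations encoding
simple graphs realises a switching, or fixes the graph (`sum_tw_le_edgeSum`). Functional
inequalities for the transpositions which preserve simplicity thus descend to the switch chain.

On the whole symmetric group, `perm_entropy_aux` gives the sharp-order modified log-Sobolev and
Poincaré inequalities together, by revealing the permutation one position after the other. The
restriction to simple permutations is done in two different ways.

* Spectral gap. Let `Sig P` be the set of permutations with no repeated edge among the left slots
  in `P`. A function on `Sig (insert p P)` is extended to `Sig P` by averaging over the
  transpositions at `p` which repair the defect at `p`; all but `O(d³)` of the transpositions at `p`
  do. The Dirichlet form grows by a factor `1 + O_d(1/N)` only (`dirE_repExt_le`), so that after `N`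
  steps a constant factor is lost (`Sig_poincare`, `graph_poincare`).
* Entropy. A positive function on the simple permutations, extended by zero, is regularised by a
  tail of the Neumann series of the transposition walk (`exists_tail`). Few transpositions leave the
  simple permutations, and across those the logarithms differ by `O(log N)` at most. The result is a
  modified log-Sobolev inequality with an additive defect of order `log N` times the mean
  (`defective_mlsi`, `graph_mlsi`).

Started from a point mass, mixed with the uniform measure so as to be positive, the chain has
initial entropy `O(N log N)`. By the defective inequality the entropy is `O(log N)` after time
`O(N log N)` (`ent_decay`). A density of entropy `D` can be truncated at level `exp (O(D + 1))` with
a small loss of mass, and the Poincaré inequality then needs a further time of order `N (D + 1)`,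
which is `O(N log N)` again (`l1_of_ent`). This settles `N ≥ 200 d⁶` (`mixing_large`). For the
finitely many other `n`, some spectral gap exists because switchings connect all `d`-regular graphs
(`conn_all`), and the constant is enlarged accordingly.
-/

open Finset

noncomputable section

attribute [local instance] Classical.propDecidable

/-- Bipartite graphs on `[n] ⊔ [n]` as 0/1 (Boolean) biadjacency matrices. -/
abbrev BG (n : ℕ) := Fin n → Fin n → Bool

/-- `d`-regularity: all row and column sums equal `d`. -/
def IsBipReg (n d : ℕ) (A : BG n) : Prop :=
  (∀ i, (Finset.univ.filter fun j => A i j = true).card = d) ∧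
    (∀ j, (Finset.univ.filter fun i => A i j = true).card = d)

/-- `Ω^B_n(d)`: the set of simple bipartite `d`-regular graphs. -/
abbrev OmegaB (n d : ℕ) := {A : BG n // IsBipReg n d A}

/-- The result of the simple switching `⟨i₁, i₂, j₁, j₂⟩`: edges `(i₁,j₁)`, `(i₂,j₂)`
are destroyed and replaced by `(i₁,j₂)`, `(i₂,j₁)`. -/
def switchMove {n : ℕ} (A : BG n) (i₁ i₂ j₁ j₂ : Fin n) : BG n :=
  fun i j =>
    if (i = i₁ ∧ j = j₁) ∨ (i = i₂ ∧ j = j₂) then false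
    else if (i = i₁ ∧ j = j₂) ∨ (i = i₂ ∧ j = j₁) then true
    else A i j

/-- `B` is obtained from `A` by a valid simple switching. -/
def SwitchAdj {n : ℕ} (A B : BG n) : Prop :=
  ∃ i₁ i₂ j₁ j₂ : Fin n, i₁ ≠ i₂ ∧ j₁ ≠ j₂ ∧
    A i₁ j₁ = true ∧ A i₂ j₂ = true ∧ A i₁ j₂ = false ∧ A i₂ j₁ = false ∧
    B = switchMove A i₁ i₂ j₁ j₂

/-- Number of graphs reachable from `G` by one simple switching. -/
def numNeighbors (n d : ℕ) (G : OmegaB n d) : ℕ :=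
  (Finset.univ.filter fun G' : OmegaB n d => SwitchAdj G.1 G'.1).card

/-- The switch chain generator `Q_u`. -/
def Qu (n d : ℕ) (G₁ G₂ : OmegaB n d) : ℝ :=
  if G₁ = G₂ then -(numNeighbors n d G₁ : ℝ) * (2 / ((n * d : ℝ) * ((n * d : ℝ) - 1)))
  else if SwitchAdj G₁.1 G₂.1 then 2 / ((n * d : ℝ) * ((n * d : ℝ) - 1))
  else 0

/-- The uniform measure `π_u` on `Ω^B_n(d)`. -/
def piU (n d : ℕ) : OmegaB n d → ℝ := fun _ => (Fintype.card (OmegaB n d) : ℝ)⁻¹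

/-- Entropy `Ent_π(f) = E_π[f (log f - log E_π f)]`. -/
def entPi {Ω : Type*} [Fintype Ω] (π f : Ω → ℝ) : ℝ :=
  ∑ ω, π ω * f ω * (Real.log (f ω) - Real.log (∑ ω', π ω' * f ω'))

/-- Dirichlet form `E_π(log f, f)`. -/
def dirForm {Ω : Type*} [Fintype Ω] (π : Ω → ℝ) (Q : Ω → Ω → ℝ) (f : Ω → ℝ) : ℝ :=
  (1 / 2) * ∑ ω, ∑ ω', π ω * Q ω ω' * (f ω - f ω') * Real.log (f ω / f ω')

/-- The matrix exponential, defined by its power series. -/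
def matExp {m : Type*} [Fintype m] [DecidableEq m] (A : Matrix m m ℝ) : Matrix m m ℝ :=
  ∑' k : ℕ, ((k.factorial : ℝ)⁻¹) • A ^ k

/-- Total variation distance between two probability vectors. -/
def tvDist {Ω : Type*} [Fintype Ω] (μ ν : Ω → ℝ) : ℝ :=
  (1 / 2) * ∑ ω, |μ ω - ν ω|

/-- The generator `Q_u` viewed as a matrix. -/
def QuMat (n d : ℕ) : Matrix (OmegaB n d) (OmegaB n d) ℝ := Matrix.of (Qu n d)

/-! ### Entropy inequalities on the symmetric group -/

/-- The integrand `(x - y)(log x - log y)` of the Dirichlet form of the modified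
log-Sobolev inequality. -/
def phi (x y : ℝ) : ℝ := (x - y) * (Real.log x - Real.log y)

lemma phi_nonneg {x y : ℝ} (hx : 0 < x) (hy : 0 < y) : 0 ≤ phi x y := by
  unfold phi
  rcases le_total x y with h | h
  · have := Real.log_le_log hx h
    nlinarith
  · have := Real.log_le_log hy h
    nlinarith

/-- `phi` is positively homogeneous, and lies above its tangent plane at `(X, Y)`, which passes
through the origin. -/
lemma phi_support {X Y : ℝ} (hX : 0 < X) (hY : 0 < Y) :
    ∃ α β : ℝ, phi X Y = α * X + β * Y ∧
      ∀ x y : ℝ, 0 < x → 0 < y → α * x + β * y ≤ phi x y := by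
  refine ⟨Real.log X - Real.log Y + 1 - Y / X, Real.log Y - Real.log X + 1 - X / Y, ?_, ?_⟩
  · unfold phi
    field_simp
    ring
  · intro x y hx hy
    have h1 := Real.log_le_sub_one_of_pos (x := (y * X) / (x * Y)) (by positivity)
    have h2 := Real.log_le_sub_one_of_pos (x := (x * Y) / (y * X)) (by positivity)
    rw [Real.log_div (by positivity) (by positivity), Real.log_mul (by positivity) (by positivity),
      Real.log_mul (by positivity) (by positivity)] at h1 h2
    have h1' := mul_le_mul_of_nonneg_left h1 hx.le
    have h2' := mul_le_mul_of_nonneg_left h2 hy.le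
    have e1 : x * (y * X / (x * Y) - 1) = y * (X / Y) - x := by field_simp
    have e2 : y * (x * Y / (y * X) - 1) = x * (Y / X) - y := by field_simp
    rw [e1] at h1'
    rw [e2] at h2'
    unfold phi
    nlinarith

lemma phi_add_le {x y x' y' : ℝ} (hx : 0 < x) (hy : 0 < y) (hx' : 0 < x') (hy' : 0 < y') :
    phi (x + x') (y + y') ≤ phi x y + phi x' y' := by
  obtain ⟨α, β, h, H⟩ := phi_support (add_pos hx hx') (add_pos hy hy')
  have h1 := H x y hx hy
  have h2 := H x' y' hx' hy'
  rw [h]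
  linarith

lemma phi_convexOn : ConvexOn ℝ (Set.Ioi (0 : ℝ) ×ˢ Set.Ioi (0 : ℝ))
    (fun p : ℝ × ℝ => (p.1 - p.2) * (Real.log p.1 - Real.log p.2)) := by
  refine ⟨(convex_Ioi 0).prod (convex_Ioi 0), ?_⟩
  rintro ⟨x, y⟩ ⟨hx, hy⟩ ⟨x', y'⟩ ⟨hx', hy'⟩ a b ha hb hab
  simp only [Set.mem_Ioi] at hx hy hx' hy'
  have hX := (convex_Ioi (0 : ℝ)) (Set.mem_Ioi.2 hx) (Set.mem_Ioi.2 hx') ha hb hab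
  have hY := (convex_Ioi (0 : ℝ)) (Set.mem_Ioi.2 hy) (Set.mem_Ioi.2 hy') ha hb hab
  obtain ⟨α, β, h, H⟩ := phi_support hX hY
  have h1 := mul_le_mul_of_nonneg_left (H x y hx hy) ha
  have h2 := mul_le_mul_of_nonneg_left (H x' y' hx' hy') hb
  unfold phi at h h1 h2
  simp only [Prod.smul_mk, Prod.mk_add_mk, smul_eq_mul] at *
  rw [h]
  linarith

/-- A convex functional is bounded by the symmetrised form of its derivative:
`∑ η(g) - |s| η(mean g) ≤ (2|s|)⁻¹ ∑ ∑ (g v - g w)(θ (g v) - θ (g w))`. -/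
lemma conv_ent_le {ι : Type*} (s : Finset ι) (hs : s.Nonempty) {D : Set ℝ} (hD : Convex ℝ D)
    (η θ : ℝ → ℝ) (hη : ∀ x ∈ D, ∀ y ∈ D, η x - η y ≤ θ x * (x - y))
    (g : ι → ℝ) (hg : ∀ i ∈ s, g i ∈ D) :
    ∑ i ∈ s, η (g i) - s.card * η ((∑ i ∈ s, g i) / s.card) ≤
      (1 / (2 * s.card : ℝ)) * ∑ v ∈ s, ∑ w ∈ s, (g v - g w) * (θ (g v) - θ (g w)) := by
  have hc : (0 : ℝ) < s.card := by exact_mod_cast hs.card_pos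
  have hm : (∑ i ∈ s, g i) / s.card ∈ D := by
    have := hD.sum_mem (t := s) (w := fun _ => (s.card : ℝ)⁻¹) (z := g)
      (fun _ _ => by positivity) (by simp [hc.ne']) hg
    simpa [← Finset.mul_sum, div_eq_inv_mul] using this
  set m := (∑ i ∈ s, g i) / s.card with hmdef
  have h1 : ∑ i ∈ s, η (g i) - s.card * η m ≤ ∑ i ∈ s, θ (g i) * (g i - m) := by
    have : ∑ i ∈ s, η (g i) - s.card * η m = ∑ i ∈ s, (η (g i) - η m) := by
      simp [Finset.sum_sub_distrib]
    rw [this]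
    exact Finset.sum_le_sum fun i hi => hη _ (hg i hi) _ hm
  refine h1.trans (le_of_eq ?_)
  have hsum : ∑ i ∈ s, g i = s.card * m := by rw [hmdef]; field_simp
  have h2 : ∑ v ∈ s, ∑ w ∈ s, (g v - g w) * (θ (g v) - θ (g w))
      = 2 * s.card * ∑ i ∈ s, θ (g i) * g i - 2 * (∑ i ∈ s, g i) * ∑ i ∈ s, θ (g i) := by
    have : ∀ v w, (g v - g w) * (θ (g v) - θ (g w)) =
        θ (g v) * g v + θ (g w) * g w - g w * θ (g v) - g v * θ (g w) := by intros; ring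
    simp only [this, Finset.sum_add_distrib, Finset.sum_sub_distrib, Finset.sum_const,
      nsmul_eq_mul, ← Finset.mul_sum, ← Finset.sum_mul]
    ring
  rw [h2, hsum]
  have h3 : ∑ i ∈ s, θ (g i) * (g i - m) = ∑ i ∈ s, θ (g i) * g i - (∑ i ∈ s, θ (g i)) * m := by
    rw [Finset.sum_mul, ← Finset.sum_sub_distrib]
    exact Finset.sum_congr rfl fun i _ => by ring
  rw [h3]
  generalize ∑ i ∈ s, θ (g i) * g i = A
  generalize ∑ i ∈ s, θ (g i) = B
  generalize (s.card : ℝ) = c at hc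
  clear_value m
  have hc' := hc.ne'
  field_simp

section PermIneq

variable {I : Type*} [Fintype I] [DecidableEq I]

/-- Permutations agreeing with `ρ` on `K`. -/
def agree (ρ : Equiv.Perm I) (K : Finset I) : Finset (Equiv.Perm I) :=
  univ.filter fun σ => ∀ k ∈ K, σ k = ρ k

lemma mem_agree {ρ σ : Equiv.Perm I} {K : Finset I} :
    σ ∈ agree ρ K ↔ ∀ k ∈ K, σ k = ρ k := by simp [agree]

lemma agree_insert_swap {ρ σ : Equiv.Perm I} {K : Finset I} {k l : I} (hk : k ∉ K) (hl : l ∉ K) :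
    σ ∈ agree (ρ * Equiv.swap k l) (insert k K) ↔ σ ∈ agree ρ K ∧ σ k = ρ l := by
  simp only [mem_agree, Finset.mem_insert, forall_eq_or_imp, Equiv.Perm.mul_apply,
    Equiv.swap_apply_left]
  constructor
  · rintro ⟨h1, h2⟩
    refine ⟨fun a ha => ?_, h1⟩
    rw [h2 a ha, Equiv.swap_apply_of_ne_of_ne] <;> rintro rfl <;> contradiction
  · rintro ⟨h1, h2⟩
    refine ⟨h2, fun a ha => ?_⟩
    rw [h1 a ha, Equiv.swap_apply_of_ne_of_ne] <;> rintro rfl <;> contradiction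

/-- Splitting a sum over `agree ρ K` according to the value at a free position `k`. -/
lemma sum_agree_split (ρ : Equiv.Perm I) (K : Finset I) {k : I} (hk : k ∉ K)
    (F : Equiv.Perm I → ℝ) :
    ∑ σ ∈ agree ρ K, F σ =
      ∑ l ∈ Kᶜ, ∑ σ ∈ agree (ρ * Equiv.swap k l) (insert k K), F σ := by
  rw [← Finset.sum_fiberwise_of_maps_to (g := fun σ => ρ.symm (σ k)) (t := Kᶜ)]
  · refine Finset.sum_congr rfl fun l hl => Finset.sum_congr ?_ fun _ _ => rfl
    ext σ
    rw [agree_insert_swap hk (by simpa using hl), Finset.mem_filter, Equiv.symm_apply_eq]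
  · intro σ hσ
    rw [Finset.mem_compl]
    intro h
    have := mem_agree.1 hσ _ h
    rw [Equiv.apply_symm_apply] at this
    exact hk (σ.injective this ▸ h)

/-- Left multiplication by the transposition of two values couples the two slices of
`agree ρ K`. -/
lemma sum_slice_couple (ρ : Equiv.Perm I) (K : Finset I) {k l l' : I} (hk : k ∉ K)
    (hl : l ∉ K) (hl' : l' ∉ K) (F : Equiv.Perm I → ℝ) :
    ∑ σ ∈ agree (ρ * Equiv.swap k l') (insert k K), F σ =
      ∑ σ ∈ agree (ρ * Equiv.swap k l) (insert k K), F (σ * Equiv.swap k (σ⁻¹ (ρ l'))) := by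
  have key : ∀ (l l' : I), l ∉ K → l' ∉ K → ∀ σ ∈ agree (ρ * Equiv.swap k l) (insert k K),
      Equiv.swap (ρ l) (ρ l') * σ ∈ agree (ρ * Equiv.swap k l') (insert k K) := by
    intro l l' hl hl' σ hσ
    rw [agree_insert_swap hk hl] at hσ
    rw [agree_insert_swap hk hl', mem_agree]
    refine ⟨fun a ha => ?_, by simp [hσ.2]⟩
    rw [Equiv.Perm.mul_apply, mem_agree.1 hσ.1 a ha, Equiv.swap_apply_of_ne_of_ne]
    · intro h; exact hl (ρ.injective h ▸ ha)
    · intro h; exact hl' (ρ.injective h ▸ ha)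
  symm
  refine Finset.sum_bij' (fun σ _ => Equiv.swap (ρ l) (ρ l') * σ)
    (fun σ _ => Equiv.swap (ρ l') (ρ l) * σ) (key l l' hl hl') (key l' l hl' hl) ?_ ?_ ?_
  · intro σ _
    rw [← mul_assoc, Equiv.swap_comm, Equiv.swap_mul_self, one_mul]
  · intro σ _
    rw [← mul_assoc, Equiv.swap_comm, Equiv.swap_mul_self, one_mul]
  · intro σ hσ
    rw [agree_insert_swap hk hl] at hσ
    have : k = σ⁻¹ (ρ l) := by rw [← hσ.2]; simp
    congr 1
    conv_lhs => rw [this]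
    rw [Equiv.mul_swap_eq_swap_mul]
    simp

lemma card_slice (ρ : Equiv.Perm I) (K : Finset I) {k l : I} (hk : k ∉ K) (hl : l ∉ K) :
    (agree (ρ * Equiv.swap k l) (insert k K)).card = (agree (ρ * Equiv.swap k k) (insert k K)).card := by
  have := sum_slice_couple ρ K (l' := l) hk hk hl (fun _ => 1)
  simpa using this

/-- One step of the martingale argument: the entropy of the conditional means given the value at
the free position `k` is controlled by the transpositions involving `k`. -/
lemma slice_means_le {D : Set ℝ} (hD : Convex ℝ D)
    (η θ : ℝ → ℝ) (hη : ∀ x ∈ D, ∀ y ∈ D, η x - η y ≤ θ x * (x - y))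
    (hψ : ConvexOn ℝ (D ×ˢ D) fun p : ℝ × ℝ => (p.1 - p.2) * (θ p.1 - θ p.2))
    (f : Equiv.Perm I → ℝ) (hf : ∀ σ, f σ ∈ D) (ρ : Equiv.Perm I) (K : Finset I) {k : I}
    (hk : k ∉ K) :
    ∑ l ∈ Kᶜ, ((agree (ρ * Equiv.swap k l) (insert k K)).card : ℝ) *
        η ((∑ σ ∈ agree (ρ * Equiv.swap k l) (insert k K), f σ) /
          (agree (ρ * Equiv.swap k l) (insert k K)).card)
      - (agree ρ K).card * η ((∑ σ ∈ agree ρ K, f σ) / (agree ρ K).card) ≤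
    (1 / (2 * Kᶜ.card : ℝ)) * ∑ σ ∈ agree ρ K, ∑ l ∈ Kᶜ,
      (f σ - f (σ * Equiv.swap k l)) * (θ (f σ) - θ (f (σ * Equiv.swap k l))) := by
  set S : I → Finset (Equiv.Perm I) := fun l => agree (ρ * Equiv.swap k l) (insert k K) with hS
  set s : ℝ := ((S k).card : ℝ) with hs
  have hs0 : 0 < s := by
    rw [hs]
    have : (S k).Nonempty := ⟨ρ * Equiv.swap k k, by simp [hS, mem_agree]⟩
    exact_mod_cast this.card_pos
  have hcard : ∀ l ∈ Kᶜ, ((S l).card : ℝ) = s := fun l hl => by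
    rw [hs, hS]; exact_mod_cast card_slice ρ K hk (by simpa using hl)
  set g : I → ℝ := fun l => (∑ σ ∈ S l, f σ) / s with hg
  have hne : (Kᶜ).Nonempty := ⟨k, by simpa using hk⟩
  have hc : (0 : ℝ) < (Kᶜ).card := by exact_mod_cast hne.card_pos
  have hgD : ∀ l ∈ Kᶜ, g l ∈ D := by
    intro l hl
    have := hD.sum_mem (t := S l) (w := fun _ => s⁻¹) (z := f)
      (fun _ _ => by positivity) (by simp [hcard l hl, hs0.ne']) (fun σ _ => hf σ)
    simpa [← Finset.mul_sum, div_eq_inv_mul, hg] using this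
  have hcardK : ((agree ρ K).card : ℝ) = (Kᶜ).card * s := by
    have := sum_agree_split ρ K hk (fun _ => 1)
    simp only [Finset.sum_const, nsmul_eq_mul, mul_one] at this
    rw [this, Finset.sum_congr rfl hcard]
    simp
  have hsumK : ∑ σ ∈ agree ρ K, f σ = s * ∑ l ∈ Kᶜ, g l := by
    rw [sum_agree_split ρ K hk, Finset.mul_sum]
    refine Finset.sum_congr rfl fun l _ => ?_
    simp only [hg]
    field_simp
    rfl
  have hmain := conv_ent_le (Kᶜ) hne hD η θ hη g hgD
  have hL : ∑ l ∈ Kᶜ, ((S l).card : ℝ) * η ((∑ σ ∈ S l, f σ) / (S l).card)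
      - (agree ρ K).card * η ((∑ σ ∈ agree ρ K, f σ) / (agree ρ K).card)
      = s * (∑ l ∈ Kᶜ, η (g l) - (Kᶜ).card * η ((∑ l ∈ Kᶜ, g l) / (Kᶜ).card)) := by
    have h1 : ∑ l ∈ Kᶜ, ((S l).card : ℝ) * η ((∑ σ ∈ S l, f σ) / (S l).card)
        = s * ∑ l ∈ Kᶜ, η (g l) := by
      rw [Finset.mul_sum]
      exact Finset.sum_congr rfl fun l hl => by rw [hcard l hl]
    rw [h1, hsumK, hcardK]
    have : s * ∑ l ∈ Kᶜ, g l = (∑ l ∈ Kᶜ, g l) * s := mul_comm _ _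
    rw [this, mul_div_mul_right _ _ hs0.ne']
    ring
  rw [hL]
  refine (mul_le_mul_of_nonneg_left hmain hs0.le).trans ?_
  -- couple the slices `S l` and `S l'`, and use joint convexity
  have hpair : ∀ l ∈ Kᶜ, ∀ l' ∈ Kᶜ, s * ((g l - g l') * (θ (g l) - θ (g l'))) ≤
      ∑ σ ∈ S l, (f σ - f (σ * Equiv.swap k (σ⁻¹ (ρ l')))) *
        (θ (f σ) - θ (f (σ * Equiv.swap k (σ⁻¹ (ρ l'))))) := by
    intro l hl l' hl'
    have hc2 : g l' = (∑ σ ∈ S l, f (σ * Equiv.swap k (σ⁻¹ (ρ l')))) / s := by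
      simp only [hg, hS]
      rw [sum_slice_couple ρ K hk (by simpa using hl) (by simpa using hl') f]
    have := hψ.map_sum_le (t := S l) (w := fun _ => s⁻¹)
      (p := fun σ => (f σ, f (σ * Equiv.swap k (σ⁻¹ (ρ l')))))
      (fun _ _ => by positivity) (by simp [hcard l hl, hs0.ne'])
      (fun σ _ => ⟨hf _, hf _⟩)
    have e : (∑ σ ∈ S l, s⁻¹ • (f σ, f (σ * Equiv.swap k (σ⁻¹ (ρ l'))))) = (g l, g l') := by
      rw [hc2]
      ext
      · simp [Prod.fst_sum, ← Finset.mul_sum, hg, div_eq_inv_mul]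
      · simp [Prod.snd_sum, ← Finset.mul_sum, div_eq_inv_mul]
    rw [e] at this
    simp only [smul_eq_mul, ← Finset.mul_sum] at this
    calc s * ((g l - g l') * (θ (g l) - θ (g l'))) ≤ s * _ := mul_le_mul_of_nonneg_left this hs0.le
      _ = _ := by rw [← mul_assoc, mul_inv_cancel₀ hs0.ne', one_mul]
  have hreindex : ∀ σ ∈ agree ρ K, ∀ F : I → ℝ,
      ∑ l' ∈ Kᶜ, F (σ⁻¹ (ρ l')) = ∑ l ∈ Kᶜ, F l := by
    intro σ hσ F
    rw [mem_agree] at hσ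
    have hmap : ∀ a, a ∈ Kᶜ ↔ σ⁻¹ (ρ a) ∈ Kᶜ := by
      intro a
      simp only [Finset.mem_compl, not_iff_not]
      constructor
      · intro ha; rw [← hσ a ha]; simpa using ha
      · intro ha
        have := hσ _ ha
        change σ (σ.symm (ρ a)) = _ at this
        rw [Equiv.apply_symm_apply] at this
        exact (ρ.injective this) ▸ ha
    exact Finset.sum_equiv (ρ.trans (σ⁻¹ : Equiv.Perm I)) hmap (fun _ _ => rfl)
  calc s * ((1 / (2 * (Kᶜ).card : ℝ)) * ∑ v ∈ Kᶜ, ∑ w ∈ Kᶜ, (g v - g w) * (θ (g v) - θ (g w)))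
      = (1 / (2 * (Kᶜ).card : ℝ)) * ∑ v ∈ Kᶜ, ∑ w ∈ Kᶜ,
        s * ((g v - g w) * (θ (g v) - θ (g w))) := by
        simp only [← Finset.mul_sum]; ring
    _ ≤ (1 / (2 * (Kᶜ).card : ℝ)) * ∑ v ∈ Kᶜ, ∑ w ∈ Kᶜ,
        ∑ σ ∈ S v, (f σ - f (σ * Equiv.swap k (σ⁻¹ (ρ w)))) *
        (θ (f σ) - θ (f (σ * Equiv.swap k (σ⁻¹ (ρ w))))) := by
        refine mul_le_mul_of_nonneg_left ?_ (by positivity)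
        exact Finset.sum_le_sum fun v hv => Finset.sum_le_sum fun w hw => hpair v hv w hw
    _ = _ := by
        congr 1
        rw [sum_agree_split ρ K hk]
        refine Finset.sum_congr rfl fun v hv => ?_
        rw [Finset.sum_comm]
        refine Finset.sum_congr rfl fun σ hσ => ?_
        have hσ' := ((agree_insert_swap hk (by simpa using hv)).1 hσ).1
        exact hreindex σ hσ' (fun l => (f σ - f (σ * Equiv.swap k l)) *
          (θ (f σ) - θ (f (σ * Equiv.swap k l))))

/-- The `η`-entropy inequality for random transpositions of the free positions `Kᶜ`, by induction
on the number of free positions: reveal the image of a uniformly chosen free position. -/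
theorem perm_entropy_aux {D : Set ℝ} (hD : Convex ℝ D)
    (η θ : ℝ → ℝ) (hη : ∀ x ∈ D, ∀ y ∈ D, η x - η y ≤ θ x * (x - y))
    (hθ : ∀ x ∈ D, ∀ y ∈ D, 0 ≤ (x - y) * (θ x - θ y))
    (hψ : ConvexOn ℝ (D ×ˢ D) fun p : ℝ × ℝ => (p.1 - p.2) * (θ p.1 - θ p.2))
    (f : Equiv.Perm I → ℝ) (hf : ∀ σ, f σ ∈ D) (m : ℕ) :
    ∀ (ρ : Equiv.Perm I) (K : Finset I), (Kᶜ).card = m →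
    ∑ σ ∈ agree ρ K, η (f σ)
      - (agree ρ K).card * η ((∑ σ ∈ agree ρ K, f σ) / (agree ρ K).card) ≤
    (1 / (2 * m : ℝ)) * ∑ σ ∈ agree ρ K, ∑ a ∈ Kᶜ, ∑ b ∈ Kᶜ,
      (f σ - f (σ * Equiv.swap a b)) * (θ (f σ) - θ (f (σ * Equiv.swap a b))) := by
  induction m with
  | zero =>
    intro ρ K hK
    have hKu : K = univ := by
      rw [Finset.card_eq_zero] at hK
      simpa using hK
    subst hKu
    have : agree ρ univ = {ρ} := by
      ext σ
      simp [mem_agree, Equiv.ext_iff]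
    simp [this]
  | succ m ih =>
    intro ρ K hK
    set ψ : Equiv.Perm I → I → I → ℝ := fun σ a b =>
      (f σ - f (σ * Equiv.swap a b)) * (θ (f σ) - θ (f (σ * Equiv.swap a b))) with hψdef
    have hψ0 : ∀ σ a b, 0 ≤ ψ σ a b := fun σ a b => hθ _ (hf _) _ (hf _)
    have hψd : ∀ σ a, ψ σ a a = 0 := fun σ a => by
      have h1 : Equiv.swap a a = (1 : Equiv.Perm I) := Equiv.swap_self a
      simp only [hψdef, h1, mul_one, sub_self, zero_mul]
    set L := ∑ σ ∈ agree ρ K, η (f σ)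
      - (agree ρ K).card * η ((∑ σ ∈ agree ρ K, f σ) / (agree ρ K).card) with hLdef
    set T := ∑ σ ∈ agree ρ K, ∑ a ∈ Kᶜ, ∑ b ∈ Kᶜ, ψ σ a b with hT
    have hT0 : 0 ≤ T := Finset.sum_nonneg fun σ _ => Finset.sum_nonneg fun a _ =>
      Finset.sum_nonneg fun b _ => hψ0 σ a b
    have hstep : ∀ k ∈ Kᶜ, L ≤ (1 / (2 * m : ℝ)) *
        (∑ σ ∈ agree ρ K, ∑ a ∈ (Kᶜ).erase k, ∑ b ∈ (Kᶜ).erase k, ψ σ a b)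
        + (1 / (2 * (m + 1) : ℝ)) * ∑ σ ∈ agree ρ K, ∑ l ∈ Kᶜ, ψ σ k l := by
      intro k hk
      have hk' : k ∉ K := by simpa using hk
      have hcompl : (insert k K)ᶜ = (Kᶜ).erase k := by
        ext a; simp
      have hcc : ((insert k K)ᶜ).card = m := by
        rw [hcompl, Finset.card_erase_of_mem hk, hK]; rfl
      have h1 := slice_means_le hD η θ hη hψ f hf ρ K hk'
      have h2 : ∑ l ∈ Kᶜ, _ ≤ ∑ l ∈ Kᶜ, _ := Finset.sum_le_sum fun l (_ : l ∈ Kᶜ) =>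
        ih (ρ * Equiv.swap k l) (insert k K) hcc
      rw [Finset.sum_sub_distrib, ← sum_agree_split ρ K hk', ← Finset.mul_sum, hcompl,
        ← sum_agree_split ρ K hk'] at h2
      rw [hK] at h1
      push_cast at h1
      simp only [hLdef]
      linarith
    have hsum : ((m : ℝ) + 1) * L ≤ (1 / (2 * m : ℝ)) *
        (∑ k ∈ Kᶜ, ∑ σ ∈ agree ρ K, ∑ a ∈ (Kᶜ).erase k, ∑ b ∈ (Kᶜ).erase k, ψ σ a b)
        + (1 / (2 * (m + 1) : ℝ)) * T := by
      have := Finset.sum_le_sum hstep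
      rw [Finset.sum_const, hK, Finset.sum_add_distrib, ← Finset.mul_sum, ← Finset.mul_sum] at this
      rw [nsmul_eq_mul] at this
      push_cast at this
      have hTc : T = ∑ k ∈ Kᶜ, ∑ σ ∈ agree ρ K, ∑ l ∈ Kᶜ, ψ σ k l := Finset.sum_comm
      rw [hTc]
      exact this
    -- each pair `a ≠ b` survives for the `m - 1` choices of `k` different from both
    have hcount : ∑ k ∈ Kᶜ, ∑ σ ∈ agree ρ K, ∑ a ∈ (Kᶜ).erase k, ∑ b ∈ (Kᶜ).erase k, ψ σ a b
        ≤ ((m : ℝ) - 1) * T := by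
      rw [Finset.sum_comm, hT, Finset.mul_sum]
      refine Finset.sum_le_sum fun σ _ => ?_
      have e1 : ∀ k ∈ Kᶜ, ∑ a ∈ (Kᶜ).erase k, ∑ b ∈ (Kᶜ).erase k, ψ σ a b =
          ∑ a ∈ Kᶜ, ∑ b ∈ Kᶜ, ψ σ a b - ∑ b ∈ Kᶜ, ψ σ k b - ∑ a ∈ Kᶜ, ψ σ a k := by
        intro k hk
        have hin : ∀ a, ∑ b ∈ (Kᶜ).erase k, ψ σ a b = ∑ b ∈ Kᶜ, ψ σ a b - ψ σ a k := by
          intro a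
          rw [← Finset.add_sum_erase _ _ hk]; ring
        simp only [hin, Finset.sum_sub_distrib]
        rw [← Finset.add_sum_erase (Kᶜ) (fun a => ∑ b ∈ Kᶜ, ψ σ a b) hk,
          ← Finset.add_sum_erase (Kᶜ) (fun a => ψ σ a k) hk, hψd]
        ring
      rw [Finset.sum_congr rfl e1]
      simp only [Finset.sum_sub_distrib, Finset.sum_const, hK, nsmul_eq_mul]
      have hc : ∑ k ∈ Kᶜ, ∑ a ∈ Kᶜ, ψ σ a k = ∑ a ∈ Kᶜ, ∑ b ∈ Kᶜ, ψ σ a b := Finset.sum_comm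
      rw [hc]
      push_cast
      apply le_of_eq
      ring
    have hm1 : (0 : ℝ) < (m : ℝ) + 1 := by positivity
    push_cast
    change L ≤ 1 / (2 * ((m : ℝ) + 1)) * T
    have h3 : ((m : ℝ) + 1) * L ≤ (1 / 2) * T := by
      refine hsum.trans ?_
      have h4 := mul_le_mul_of_nonneg_left hcount (a := 1 / (2 * (m : ℝ))) (by positivity)
      have h5 : (1 / (2 * (m : ℝ))) * (((m : ℝ) - 1) * T) + (1 / (2 * ((m : ℝ) + 1))) * T
          ≤ (1 / 2) * T := by
        rw [← mul_assoc, ← add_mul]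
        refine mul_le_mul_of_nonneg_right ?_ hT0
        rcases Nat.eq_zero_or_pos m with rfl | hm
        · norm_num
        · have : (0 : ℝ) < m := by exact_mod_cast hm
          rw [← sub_nonneg]
          have e : (1 / 2 : ℝ) - (1 / (2 * (m : ℝ)) * ((m : ℝ) - 1) + 1 / (2 * ((m : ℝ) + 1)))
              = 1 / (2 * m * (m + 1)) := by
            field_simp
            ring
          rw [e]
          positivity
      linarith
    calc L = (1 / ((m : ℝ) + 1)) * (((m : ℝ) + 1) * L) := by field_simp
      _ ≤ (1 / ((m : ℝ) + 1)) * ((1 / 2) * T) := mul_le_mul_of_nonneg_left h3 (by positivity)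
      _ = _ := by field_simp

lemma agree_empty (ρ : Equiv.Perm I) : agree ρ ∅ = univ := by
  ext; simp [mem_agree]

/-- Modified log-Sobolev inequality for random transpositions. -/
theorem perm_mlsi (f : Equiv.Perm I → ℝ) (hf : ∀ σ, 0 < f σ) :
    ∑ σ, f σ * Real.log (f σ) - (∑ σ, f σ) * Real.log ((∑ σ, f σ) / Fintype.card (Equiv.Perm I)) ≤
    (1 / (2 * Fintype.card I : ℝ)) * ∑ σ, ∑ a, ∑ b, phi (f σ) (f (σ * Equiv.swap a b)) := by
  have h := perm_entropy_aux (I := I) (convex_Ioi (0 : ℝ))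
    (fun x => x * Real.log x) (fun x => Real.log x + 1) (by
      intro x hx y hy
      simp only [Set.mem_Ioi] at hx hy
      have := Real.log_le_sub_one_of_pos (x := x / y) (by positivity)
      rw [Real.log_div hx.ne' hy.ne'] at this
      have h2 := mul_le_mul_of_nonneg_left this hy.le
      have e : y * (x / y - 1) = x - y := by field_simp
      rw [e] at h2
      nlinarith)
    (by
      intro x hx y hy
      have := phi_nonneg (Set.mem_Ioi.1 hx) (Set.mem_Ioi.1 hy)
      unfold phi at this
      convert this using 2
      ring)
    (by
      convert phi_convexOn using 2
      ring)
    f hf _ 1 ∅ rfl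
  rw [agree_empty] at h
  simp only [Finset.compl_empty, Finset.card_univ] at h
  have hc : (0 : ℝ) < Fintype.card (Equiv.Perm I) := by exact_mod_cast Fintype.card_pos
  have e : (Fintype.card (Equiv.Perm I) : ℝ) * ((∑ σ, f σ) / Fintype.card (Equiv.Perm I) *
      Real.log ((∑ σ, f σ) / Fintype.card (Equiv.Perm I))) =
      (∑ σ, f σ) * Real.log ((∑ σ, f σ) / Fintype.card (Equiv.Perm I)) := by
    rw [← mul_assoc, mul_div_cancel₀ _ hc.ne']
  rw [e] at h
  convert h using 7
  unfold phi
  ring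

/-- Poincaré inequality for random transpositions. -/
theorem perm_poincare (f : Equiv.Perm I → ℝ) :
    ∑ σ, (f σ - (∑ σ, f σ) / Fintype.card (Equiv.Perm I)) ^ 2 ≤
    (1 / (Fintype.card I : ℝ)) * ∑ σ, ∑ a, ∑ b, (f σ - f (σ * Equiv.swap a b)) ^ 2 := by
  have h := perm_entropy_aux (I := I) (D := Set.univ) convex_univ
    (fun x => x ^ 2) (fun x => 2 * x) (by intro x _ y _; nlinarith [sq_nonneg (x - y)])
    (by intro x _ y _; nlinarith [sq_nonneg (x - y)])
    (by
      refine ⟨convex_univ.prod convex_univ, ?_⟩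
      rintro ⟨x, y⟩ - ⟨x', y'⟩ - a b ha hb hab
      simp only [Prod.smul_mk, Prod.mk_add_mk, smul_eq_mul]
      have hb' : b = 1 - a := by linarith
      subst hb'
      nlinarith [mul_nonneg (mul_nonneg ha hb) (sq_nonneg ((x - y) - (x' - y')))])
    f (fun _ => Set.mem_univ _) _ 1 ∅ rfl
  rw [agree_empty] at h
  simp only [Finset.compl_empty, Finset.card_univ] at h
  have hc : (0 : ℝ) < Fintype.card (Equiv.Perm I) := by exact_mod_cast Fintype.card_pos
  have e : ∑ σ, (f σ - (∑ σ, f σ) / Fintype.card (Equiv.Perm I)) ^ 2 =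
      ∑ σ, f σ ^ 2 - Fintype.card (Equiv.Perm I) * ((∑ σ, f σ) / Fintype.card (Equiv.Perm I)) ^ 2 := by
    set m := (∑ σ, f σ) / Fintype.card (Equiv.Perm I) with hm
    have hs : ∑ σ, f σ = Fintype.card (Equiv.Perm I) * m := by rw [hm]; field_simp
    simp only [sub_sq, Finset.sum_add_distrib, Finset.sum_sub_distrib, ← Finset.sum_mul,
      ← Finset.mul_sum, hs, Finset.sum_const, Finset.card_univ, nsmul_eq_mul]
    ring
  rw [e]
  refine h.trans (le_of_eq ?_)
  have e2 : ∀ σ a b, (f σ - f (σ * Equiv.swap a b)) * (2 * f σ - 2 * f (σ * Equiv.swap a b)) =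
      2 * (f σ - f (σ * Equiv.swap a b)) ^ 2 := by intros; ring
  simp only [e2, ← Finset.mul_sum]
  rw [← mul_assoc]
  congr 1
  by_cases h0 : (Fintype.card I : ℝ) = 0
  · simp [h0]
  · field_simp

end PermIneq

/-! ### Comparison of Dirichlet forms on nested sets of permutations -/

section Nested

variable {I : Type*} [DecidableEq I]

/-- `σ` composed with the transposition of the two positions `e.1`, `e.2`. -/
def tw (σ : Equiv.Perm I) (e : I × I) : Equiv.Perm I := σ * Equiv.swap e.1 e.2

lemma tw_tw (σ : Equiv.Perm I) (e : I × I) : tw (tw σ e) e = σ := by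
  simp [tw, mul_assoc]

variable [Fintype I]

/-- The (unnormalised) Dirichlet form of random transpositions restricted to `S`. -/
def dirE (S : Finset (Equiv.Perm I)) (f : Equiv.Perm I → ℝ) : ℝ :=
  ∑ σ, ∑ e, if σ ∈ S ∧ tw σ e ∈ S then (f σ - f (tw σ e)) ^ 2 else 0

lemma sum_tw_reverse (F : Equiv.Perm I → Equiv.Perm I → ℝ) :
    ∑ σ, ∑ e : I × I, F σ (tw σ e) = ∑ σ, ∑ e : I × I, F (tw σ e) σ := by
  rw [Finset.sum_comm, Finset.sum_comm (f := fun σ e => F (tw σ e) σ)]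
  refine Finset.sum_congr rfl fun e _ => ?_
  refine Fintype.sum_equiv (Equiv.mulRight (Equiv.swap e.1 e.2)) _ _ fun σ => ?_
  change F σ (tw σ e) = F (tw (tw σ e) e) (tw σ e)
  rw [tw_tw]

variable (S S₁ : Finset (Equiv.Perm I)) (p : I) (f : Equiv.Perm I → ℝ)

/-- Positions which can be exchanged with `p` so as to land in `S₁`. -/
def repairs (σ : Equiv.Perm I) : Finset I := univ.filter fun q => tw σ (p, q) ∈ S₁

/-- Mean of `f` over the repairs of `σ`. -/
def repMean (σ : Equiv.Perm I) : ℝ := (∑ q ∈ repairs S₁ p σ, f (tw σ (p, q))) / (repairs S₁ p σ).card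

/-- Variance sum of `f` over the repairs of `σ`. -/
def repVar (σ : Equiv.Perm I) : ℝ := ∑ q ∈ repairs S₁ p σ, (f (tw σ (p, q)) - repMean S₁ p f σ) ^ 2

/-- The extension of `f` from `S₁`, by averaging over repairs. -/
def repExt (σ : Equiv.Perm I) : ℝ := if σ ∈ S₁ then f σ else repMean S₁ p f σ

/-- Squared differences of `f` over the common repairs of `σ` and `τ`. -/
def repW (σ τ : Equiv.Perm I) : ℝ :=
  ∑ q, if tw σ (p, q) ∈ S₁ ∧ tw τ (p, q) ∈ S₁ then (f (tw σ (p, q)) - f (tw τ (p, q))) ^ 2 else 0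

variable {S S₁ p f}

lemma repVar_nonneg (σ : Equiv.Perm I) : 0 ≤ repVar S₁ p f σ :=
  Finset.sum_nonneg fun _ _ => sq_nonneg _

lemma sq_add_three (x y z : ℝ) : (x + y + z) ^ 2 ≤ 3 * (x ^ 2 + y ^ 2 + z ^ 2) := by
  nlinarith [sq_nonneg (x - y), sq_nonneg (y - z), sq_nonneg (x - z)]

variable {C : ℕ}

lemma common_card (h1 : ∀ σ ∈ S, ((repairs S₁ p σ)ᶜ).card ≤ C) (hN : 4 * C ≤ Fintype.card I)
    {σ τ : Equiv.Perm I} (hσ : σ ∈ S) (hτ : τ ∈ S) :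
    (Fintype.card I : ℝ) / 2 ≤ ((repairs S₁ p σ ∩ repairs S₁ p τ).card : ℝ) := by
  have h2 : ((repairs S₁ p σ ∩ repairs S₁ p τ)ᶜ).card ≤ 2 * C := by
    rw [Finset.compl_inter]
    refine (Finset.card_union_le _ _).trans ?_
    have := h1 σ hσ
    have := h1 τ hτ
    omega
  have h3 := Finset.card_add_card_compl (repairs S₁ p σ ∩ repairs S₁ p τ)
  have : Fintype.card I ≤ 2 * (repairs S₁ p σ ∩ repairs S₁ p τ).card := by omega
  have : (Fintype.card I : ℝ) ≤ 2 * (repairs S₁ p σ ∩ repairs S₁ p τ).card := by exact_mod_cast this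
  linarith

/-- The mean over all but boundedly many repairs deviates little from the mean over all. -/
lemma partial_mean (h1 : ∀ σ ∈ S, ((repairs S₁ p σ)ᶜ).card ≤ C)
    {σ τ : Equiv.Perm I} (hτ : τ ∈ S) :
    (∑ q ∈ repairs S₁ p σ ∩ repairs S₁ p τ, (f (tw σ (p, q)) - repMean S₁ p f σ)) ^ 2 ≤
      C * repVar S₁ p f σ := by
  set A := repairs S₁ p σ
  set B := repairs S₁ p τ
  have hz : ∑ q ∈ A, (f (tw σ (p, q)) - repMean S₁ p f σ) = 0 := by
    rw [Finset.sum_sub_distrib, Finset.sum_const, nsmul_eq_mul, repMean]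
    rcases Finset.eq_empty_or_nonempty A with h | h
    · simp [A, h]
    · have : (A.card : ℝ) ≠ 0 := by exact_mod_cast h.card_pos.ne'
      rw [mul_div_cancel₀ _ this, sub_self]
  have hs := Finset.sum_inter_add_sum_sdiff A B (fun q => f (tw σ (p, q)) - repMean S₁ p f σ)
  have he : (∑ q ∈ A ∩ B, (f (tw σ (p, q)) - repMean S₁ p f σ)) =
      -∑ q ∈ A \ B, (f (tw σ (p, q)) - repMean S₁ p f σ) := by linarith
  rw [he, neg_sq]
  refine (sq_sum_le_card_mul_sum_sq).trans ?_
  have hc : ((A \ B).card : ℝ) ≤ C := by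
    have : (A \ B).card ≤ (Bᶜ).card := Finset.card_le_card (by intro x; simp)
    exact_mod_cast this.trans (h1 τ hτ)
  refine mul_le_mul hc ?_ (Finset.sum_nonneg fun _ _ => sq_nonneg _) (by positivity)
  exact Finset.sum_le_sum_of_subset_of_nonneg Finset.sdiff_subset fun _ _ _ => sq_nonneg _

lemma repW_eq (σ τ : Equiv.Perm I) : repW S₁ p f σ τ =
    ∑ q ∈ repairs S₁ p σ ∩ repairs S₁ p τ, (f (tw σ (p, q)) - f (tw τ (p, q))) ^ 2 := by
  rw [repW, ← Finset.sum_filter]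
  congr 1
  ext q
  simp [repairs]

lemma div_sq_bound {N c x R : ℝ} (hN : 0 < N) (hc : N / 2 ≤ c) (h : (c * x) ^ 2 ≤ R) :
    x ^ 2 ≤ 4 / N ^ 2 * R := by
  have h1 : (N / 2) ^ 2 * x ^ 2 ≤ (c * x) ^ 2 := by
    rw [mul_pow]
    exact mul_le_mul_of_nonneg_right (by gcongr) (sq_nonneg _)
  rw [div_mul_eq_mul_div, le_div_iff₀ (by positivity)]
  nlinarith

/-- The extension varies little between two permutations of `S`: most of their repairs use the same
position, and over these the differences are collected in `repW`. -/
lemma mean_diff_le (h1 : ∀ σ ∈ S, ((repairs S₁ p σ)ᶜ).card ≤ C) (hN : 4 * C ≤ Fintype.card I)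
    (hN0 : 0 < Fintype.card I) {σ τ : Equiv.Perm I} (hσ : σ ∈ S) (hτ : τ ∈ S) :
    (repMean S₁ p f σ - repMean S₁ p f τ) ^ 2 ≤
      12 * C / (Fintype.card I : ℝ) ^ 2 * (repVar S₁ p f σ + repVar S₁ p f τ) +
      12 / (Fintype.card I : ℝ) * repW S₁ p f σ τ := by
  have hD := common_card h1 hN hσ hτ
  have hN' : (0 : ℝ) < Fintype.card I := by exact_mod_cast hN0
  have hDN : ((repairs S₁ p σ ∩ repairs S₁ p τ).card : ℝ) ≤ Fintype.card I := by
    exact_mod_cast Finset.card_le_univ _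
  have hA := partial_mean (f := f) h1 (σ := σ) hτ
  have hB := partial_mean (f := f) h1 (σ := τ) hσ
  rw [Finset.inter_comm] at hB
  have hW := repW_eq (S₁ := S₁) (p := p) (f := f) σ τ
  set D := repairs S₁ p σ ∩ repairs S₁ p τ
  have hM := sq_sum_le_card_mul_sum_sq (s := D) (f := fun q => f (tw σ (p, q)) - f (tw τ (p, q)))
  rw [← hW] at hM
  have hW0 : 0 ≤ repW S₁ p f σ τ := hW ▸ Finset.sum_nonneg fun _ _ => sq_nonneg _
  have key : (D.card : ℝ) * (repMean S₁ p f σ - repMean S₁ p f τ) =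
      (-∑ q ∈ D, (f (tw σ (p, q)) - repMean S₁ p f σ)) +
      (∑ q ∈ D, (f (tw σ (p, q)) - f (tw τ (p, q)))) +
      ∑ q ∈ D, (f (tw τ (p, q)) - repMean S₁ p f τ) := by
    simp only [Finset.sum_sub_distrib, Finset.sum_const, nsmul_eq_mul]
    ring
  have h3 : ((D.card : ℝ) * (repMean S₁ p f σ - repMean S₁ p f τ)) ^ 2 ≤
      3 * (C * repVar S₁ p f σ + Fintype.card I * repW S₁ p f σ τ + C * repVar S₁ p f τ) := by
    rw [key]
    refine (sq_add_three _ _ _).trans ?_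
    rw [neg_sq]
    have := mul_le_mul_of_nonneg_right hDN hW0
    linarith
  refine (div_sq_bound hN' hD h3).trans (le_of_eq ?_)
  field_simp
  ring

lemma cross_diff_le (h1 : ∀ σ ∈ S, ((repairs S₁ p σ)ᶜ).card ≤ C) (hN : 4 * C ≤ Fintype.card I)
    (hN0 : 0 < Fintype.card I) {σ τ : Equiv.Perm I} (hσ : σ ∈ S) (hτ : τ ∈ S) :
    (f σ - repMean S₁ p f τ) ^ 2 ≤
      12 / (Fintype.card I : ℝ) * (∑ q ∈ repairs S₁ p σ, (f σ - f (tw σ (p, q))) ^ 2) +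
      12 / (Fintype.card I : ℝ) * repW S₁ p f σ τ +
      12 * C / (Fintype.card I : ℝ) ^ 2 * repVar S₁ p f τ := by
  have hD := common_card h1 hN hσ hτ
  have hN' : (0 : ℝ) < Fintype.card I := by exact_mod_cast hN0
  have hDN : ((repairs S₁ p σ ∩ repairs S₁ p τ).card : ℝ) ≤ Fintype.card I := by
    exact_mod_cast Finset.card_le_univ _
  have hB := partial_mean (f := f) h1 (σ := τ) hσ
  rw [Finset.inter_comm] at hB
  have hW := repW_eq (S₁ := S₁) (p := p) (f := f) σ τ
  have hU : ∑ q ∈ repairs S₁ p σ ∩ repairs S₁ p τ, (f σ - f (tw σ (p, q))) ^ 2 ≤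
      ∑ q ∈ repairs S₁ p σ, (f σ - f (tw σ (p, q))) ^ 2 :=
    Finset.sum_le_sum_of_subset_of_nonneg Finset.inter_subset_left fun _ _ _ => sq_nonneg _
  set D := repairs S₁ p σ ∩ repairs S₁ p τ
  have hM := sq_sum_le_card_mul_sum_sq (s := D) (f := fun q => f (tw σ (p, q)) - f (tw τ (p, q)))
  have hM2 := sq_sum_le_card_mul_sum_sq (s := D) (f := fun q => f σ - f (tw σ (p, q)))
  rw [← hW] at hM
  have hW0 : 0 ≤ repW S₁ p f σ τ := hW ▸ Finset.sum_nonneg fun _ _ => sq_nonneg _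
  set U := ∑ q ∈ repairs S₁ p σ, (f σ - f (tw σ (p, q))) ^ 2
  have key : (D.card : ℝ) * (f σ - repMean S₁ p f τ) =
      (∑ q ∈ D, (f σ - f (tw σ (p, q)))) +
      (∑ q ∈ D, (f (tw σ (p, q)) - f (tw τ (p, q)))) +
      ∑ q ∈ D, (f (tw τ (p, q)) - repMean S₁ p f τ) := by
    simp only [Finset.sum_sub_distrib, Finset.sum_const, nsmul_eq_mul]
    ring
  have h3 : ((D.card : ℝ) * (f σ - repMean S₁ p f τ)) ^ 2 ≤
      3 * (Fintype.card I * U + Fintype.card I * repW S₁ p f σ τ + C * repVar S₁ p f τ) := by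
    rw [key]
    refine (sq_add_three _ _ _).trans ?_
    have := mul_le_mul_of_nonneg_right hDN hW0
    have h5 : (D.card : ℝ) * ∑ q ∈ D, (f σ - f (tw σ (p, q))) ^ 2 ≤ Fintype.card I * U :=
      mul_le_mul hDN hU (Finset.sum_nonneg fun _ _ => sq_nonneg _) hN'.le
    linarith
  refine (div_sq_bound hN' hD h3).trans (le_of_eq ?_)
  field_simp
  ring

lemma dirE_nonneg (S : Finset (Equiv.Perm I)) (f : Equiv.Perm I → ℝ) : 0 ≤ dirE S f :=
  Finset.sum_nonneg fun _ _ => Finset.sum_nonneg fun _ _ => by split_ifs <;> positivity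

/-- Differences over common repairs are differences along edges inside `S₁`, and each such edge is
used boundedly often. -/
lemma sum_repW_le (h1 : ∀ σ ∈ S, ((repairs S₁ p σ)ᶜ).card ≤ C) (hS : S₁ ⊆ S) :
    ∑ σ ∈ S \ S₁, ∑ e, repW S₁ p f σ (tw σ e) ≤ C * dirE S₁ f := by
  have hconj : ∀ (u : Equiv.Perm I) (q : I) (e : I × I),
      tw (tw (tw u (p, q)) e) (p, q) =
        tw u ((Equiv.prodCongr (Equiv.swap p q) (Equiv.swap p q)) e) := by
    intro u q e
    simp only [tw, Equiv.prodCongr_apply, Prod.map_fst, Prod.map_snd, Equiv.swap_apply_apply,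
      Equiv.swap_inv, mul_assoc]
  calc ∑ σ ∈ S \ S₁, ∑ e, repW S₁ p f σ (tw σ e)
      = ∑ q, ∑ σ, ∑ e, if σ ∈ S \ S₁ ∧ tw σ (p, q) ∈ S₁ ∧ tw (tw σ e) (p, q) ∈ S₁ then
          (f (tw σ (p, q)) - f (tw (tw σ e) (p, q))) ^ 2 else 0 := by
        symm
        rw [Finset.sum_comm, ← Finset.sum_subset (Finset.subset_univ (S \ S₁))]
        · refine Finset.sum_congr rfl fun σ hσ => ?_
          rw [Finset.sum_comm]
          refine Finset.sum_congr rfl fun e _ => ?_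
          rw [repW]
          simp [hσ]
        · intro σ _ hσ
          simp only [hσ, false_and, if_false, Finset.sum_const_zero]
    _ = ∑ q, ∑ u, ∑ e, if tw u (p, q) ∈ S \ S₁ ∧ u ∈ S₁ ∧ tw u e ∈ S₁ then
          (f u - f (tw u e)) ^ 2 else 0 := by
        refine Finset.sum_congr rfl fun q _ => ?_
        symm
        refine Fintype.sum_equiv (Equiv.mulRight (Equiv.swap p q)) _ _ fun u => ?_
        symm
        refine Fintype.sum_equiv (Equiv.prodCongr (Equiv.swap p q) (Equiv.swap p q)) _ _
          fun e => ?_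
        change (if tw u (p, q) ∈ S \ S₁ ∧ tw (tw u (p, q)) (p, q) ∈ S₁ ∧
          tw (tw (tw u (p, q)) e) (p, q) ∈ S₁ then
          (f (tw (tw u (p, q)) (p, q)) - f (tw (tw (tw u (p, q)) e) (p, q))) ^ 2 else 0) = _
        rw [hconj, tw_tw]
    _ = ∑ u, ((univ.filter fun q => tw u (p, q) ∈ S \ S₁).card : ℝ) *
          ∑ e, if u ∈ S₁ ∧ tw u e ∈ S₁ then (f u - f (tw u e)) ^ 2 else 0 := by
        rw [Finset.sum_comm]
        refine Finset.sum_congr rfl fun u _ => ?_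
        rw [Finset.card_filter, Nat.cast_sum, Finset.sum_mul]
        refine Finset.sum_congr rfl fun q _ => ?_
        by_cases hq : tw u (p, q) ∈ S \ S₁ <;> simp [hq]
    _ ≤ C * dirE S₁ f := by
        rw [dirE, Finset.mul_sum]
        refine Finset.sum_le_sum fun u _ => ?_
        by_cases hu : u ∈ S₁
        · refine mul_le_mul_of_nonneg_right ?_
            (Finset.sum_nonneg fun _ _ => by split_ifs <;> positivity)
          have : (univ.filter fun q => tw u (p, q) ∈ S \ S₁).card ≤ ((repairs S₁ p u)ᶜ).card := by
            refine Finset.card_le_card fun q => ?_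
            simp only [Finset.mem_filter, Finset.mem_univ, true_and, Finset.mem_sdiff,
              Finset.mem_compl, repairs]
            exact fun h => h.2
          exact_mod_cast this.trans (h1 u (hS hu))
        · simp [hu]

lemma repW_comm (σ τ : Equiv.Perm I) : repW S₁ p f σ τ = repW S₁ p f τ σ := by
  refine Finset.sum_congr rfl fun q _ => ?_
  exact if_congr and_comm (by ring) rfl

lemma repW_nonneg (σ τ : Equiv.Perm I) : 0 ≤ repW S₁ p f σ τ :=
  Finset.sum_nonneg fun _ _ => by split_ifs <;> positivity

/-- Total contribution of the pairs joining `S₁` to `S \ S₁`. -/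
def crossE (S S₁ : Finset (Equiv.Perm I)) (p : I) (f : Equiv.Perm I → ℝ) : ℝ :=
  ∑ σ, ∑ e, if σ ∈ S₁ ∧ tw σ e ∈ S \ S₁ then (f σ - repMean S₁ p f (tw σ e)) ^ 2 else 0

lemma sum_repVar_le : ∑ σ ∈ S \ S₁, repVar S₁ p f σ ≤ crossE S S₁ p f := by
  have h := sum_tw_reverse (I := I) (fun σ τ => if σ ∈ S₁ ∧ τ ∈ S \ S₁ then
    (f σ - repMean S₁ p f τ) ^ 2 else 0)
  rw [crossE, h, ← Finset.sum_subset (Finset.subset_univ (S \ S₁))]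
  · refine Finset.sum_le_sum fun σ hσ => ?_
    simp only [hσ, and_true]
    rw [Fintype.sum_prod_type, repVar, repairs, Finset.sum_filter]
    exact Finset.single_le_sum (f := fun x => ∑ y, if tw σ (x, y) ∈ S₁ then
      (f (tw σ (x, y)) - repMean S₁ p f σ) ^ 2 else 0)
      (fun x _ => Finset.sum_nonneg fun _ _ => by split_ifs <;> positivity) (Finset.mem_univ p)
  · intro σ _ hσ
    simp only [hσ, and_false, if_false, Finset.sum_const_zero]

/-- The edges across are few: they contribute `O(1/N)` times the Dirichlet form of `S₁`, up to a
multiple of `crossE` itself, which is absorbed. -/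
lemma crossE_le (h1 : ∀ σ ∈ S, ((repairs S₁ p σ)ᶜ).card ≤ C)
    (h2 : ∀ σ ∈ S₁, (univ.filter fun e => tw σ e ∈ S \ S₁).card ≤ C)
    (h3 : ∀ σ ∈ S \ S₁, (univ.filter fun e => tw σ e ∈ S₁).card ≤ C * Fintype.card I)
    (hS : S₁ ⊆ S) (hN : 4 * C ≤ Fintype.card I) (hN2 : 24 * C ^ 2 ≤ Fintype.card I)
    (hN0 : 0 < Fintype.card I) :
    crossE S S₁ p f ≤ 48 * C / (Fintype.card I : ℝ) * dirE S₁ f := by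
  have hN' : (0 : ℝ) < Fintype.card I := by exact_mod_cast hN0
  set N : ℝ := (Fintype.card I : ℝ) with hNdef
  have hT := sum_repVar_le (S := S) (S₁ := S₁) (p := p) (f := f)
  have hT0 : 0 ≤ ∑ σ ∈ S \ S₁, repVar S₁ p f σ := Finset.sum_nonneg fun _ _ => repVar_nonneg _
  have a1 : ∑ σ, ∑ e, (if σ ∈ S₁ ∧ tw σ e ∈ S \ S₁ then
      ∑ q ∈ repairs S₁ p σ, (f σ - f (tw σ (p, q))) ^ 2 else 0) ≤ C * dirE S₁ f := by
    rw [dirE, Finset.mul_sum]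
    refine Finset.sum_le_sum fun σ _ => ?_
    by_cases hσ : σ ∈ S₁
    · simp only [hσ, true_and]
      rw [← Finset.sum_filter, Finset.sum_const, nsmul_eq_mul]
      refine mul_le_mul (by exact_mod_cast h2 σ hσ) ?_
        (Finset.sum_nonneg fun _ _ => sq_nonneg _) (by positivity)
      rw [Fintype.sum_prod_type, repairs, Finset.sum_filter]
      exact Finset.single_le_sum (f := fun x => ∑ y, if tw σ (x, y) ∈ S₁ then
        (f σ - f (tw σ (x, y))) ^ 2 else 0)
        (fun x _ => Finset.sum_nonneg fun _ _ => by split_ifs <;> positivity) (Finset.mem_univ p)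
    · simp [hσ]
  have a2 : ∑ σ, ∑ e, (if σ ∈ S₁ ∧ tw σ e ∈ S \ S₁ then
      repW S₁ p f σ (tw σ e) else 0) ≤ C * dirE S₁ f := by
    have h := sum_tw_reverse (I := I) (fun σ τ => if σ ∈ S₁ ∧ τ ∈ S \ S₁ then
      repW S₁ p f σ τ else 0)
    refine h.le.trans (le_trans ?_ (sum_repW_le (f := f) h1 hS))
    rw [← Finset.sum_subset (Finset.subset_univ (S \ S₁))]
    · refine Finset.sum_le_sum fun σ hσ => Finset.sum_le_sum fun e _ => ?_
      rw [repW_comm]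
      split_ifs
      · exact le_rfl
      · exact repW_nonneg _ _
    · intro σ _ hσ
      simp only [hσ, and_false, if_false, Finset.sum_const_zero]
  have a3 : ∑ σ, ∑ e, (if σ ∈ S₁ ∧ tw σ e ∈ S \ S₁ then repVar S₁ p f (tw σ e) else 0) ≤
      C * N * ∑ σ ∈ S \ S₁, repVar S₁ p f σ := by
    have h := sum_tw_reverse (I := I) (fun σ τ => if σ ∈ S₁ ∧ τ ∈ S \ S₁ then
      repVar S₁ p f τ else 0)
    refine h.le.trans ?_
    rw [← Finset.sum_subset (Finset.subset_univ (S \ S₁)), Finset.mul_sum]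
    · refine Finset.sum_le_sum fun σ hσ => ?_
      simp only [hσ, and_true]
      rw [← Finset.sum_filter, Finset.sum_const, nsmul_eq_mul]
      refine mul_le_mul_of_nonneg_right ?_ (repVar_nonneg _)
      rw [hNdef]
      exact_mod_cast h3 σ hσ
    · intro σ _ hσ
      simp only [hσ, and_false, if_false, Finset.sum_const_zero]
  have hX : crossE S S₁ p f ≤ 12 / N * (C * dirE S₁ f) + 12 / N * (C * dirE S₁ f) +
      12 * C / N ^ 2 * (C * N * ∑ σ ∈ S \ S₁, repVar S₁ p f σ) := by
    refine le_trans ?_ (add_le_add (add_le_add (mul_le_mul_of_nonneg_left a1 (by positivity))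
      (mul_le_mul_of_nonneg_left a2 (by positivity)))
      (mul_le_mul_of_nonneg_left a3 (by positivity)))
    rw [crossE]
    simp only [Finset.mul_sum, ← Finset.sum_add_distrib]
    refine Finset.sum_le_sum fun σ _ => Finset.sum_le_sum fun e _ => ?_
    split_ifs with h
    · have := cross_diff_le (f := f) h1 hN hN0 (hS h.1) (Finset.sdiff_subset h.2)
      simpa only [Finset.mul_sum] using this
    · simp
  have e1 : 12 * C / N ^ 2 * (C * N * ∑ σ ∈ S \ S₁, repVar S₁ p f σ) =
      12 * C ^ 2 / N * ∑ σ ∈ S \ S₁, repVar S₁ p f σ := by field_simp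
  have e2 : (12 * C ^ 2 / N : ℝ) ≤ 1 / 2 := by
    rw [div_le_iff₀ hN']
    have : (24 * C ^ 2 : ℝ) ≤ N := by rw [hNdef]; exact_mod_cast hN2
    linarith
  have e3 := mul_le_mul_of_nonneg_right e2 hT0
  have e4 : 12 / N * (C * dirE S₁ f) = 12 * C / N * dirE S₁ f := by ring
  have e5 : 48 * C / N * dirE S₁ f = 4 * (12 * C / N * dirE S₁ f) := by ring
  rw [e1, e4] at hX
  rw [e5]
  linarith

/-- One step of the extension: passing from `S₁` to the larger set `S` multiplies the Dirichlet
form by at most `1 + O(1/N)`. -/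
theorem dirE_repExt_le (h1 : ∀ σ ∈ S, ((repairs S₁ p σ)ᶜ).card ≤ C)
    (h2 : ∀ σ ∈ S₁, (univ.filter fun e => tw σ e ∈ S \ S₁).card ≤ C)
    (h3 : ∀ σ ∈ S \ S₁, (univ.filter fun e => tw σ e ∈ S₁).card ≤ C * Fintype.card I)
    (hS : S₁ ⊆ S) (hN : 4 * C ≤ Fintype.card I) (hN2 : 24 * C ^ 2 ≤ Fintype.card I)
    (hN0 : 0 < Fintype.card I) :
    dirE S (repExt S₁ p f) ≤
      (1 + (1152 * C ^ 2 + 108 * C) / (Fintype.card I : ℝ)) * dirE S₁ f := by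
  have hN' : (0 : ℝ) < Fintype.card I := by exact_mod_cast hN0
  have hX := crossE_le (f := f) h1 h2 h3 hS hN hN2 hN0
  have hT := sum_repVar_le (S := S) (S₁ := S₁) (p := p) (f := f)
  have hW := sum_repW_le (f := f) h1 hS
  have hsum : ∀ F : Equiv.Perm I → I × I → ℝ,
      ∑ σ, ∑ e, (if σ ∈ S \ S₁ then F σ e else 0) = ∑ σ ∈ S \ S₁, ∑ e, F σ e := by
    intro F
    rw [← Finset.sum_subset (Finset.subset_univ (S \ S₁))]
    · exact Finset.sum_congr rfl fun σ hσ => by simp only [hσ, if_true]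
    · intro σ _ hσ
      simp only [hσ, if_false, Finset.sum_const_zero]
  have hV : ∑ σ, ∑ e : I × I, (if σ ∈ S \ S₁ then repVar S₁ p f σ else 0) =
      (Fintype.card I : ℝ) ^ 2 * ∑ σ ∈ S \ S₁, repVar S₁ p f σ := by
    rw [hsum, Finset.mul_sum]
    refine Finset.sum_congr rfl fun σ _ => ?_
    rw [Finset.sum_const, nsmul_eq_mul, Finset.card_univ, Fintype.card_prod]
    push_cast
    ring
  have hV' : ∑ σ, ∑ e : I × I, (if tw σ e ∈ S \ S₁ then repVar S₁ p f (tw σ e) else 0) =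
      (Fintype.card I : ℝ) ^ 2 * ∑ σ ∈ S \ S₁, repVar S₁ p f σ := by
    rw [← hV]
    exact sum_tw_reverse (I := I) (fun σ τ => if τ ∈ S \ S₁ then repVar S₁ p f τ else 0)
  have hrev : ∑ σ, ∑ e, (if σ ∈ S \ S₁ ∧ tw σ e ∈ S₁ then
      (repMean S₁ p f σ - f (tw σ e)) ^ 2 else 0) = crossE S S₁ p f := by
    have h := sum_tw_reverse (I := I) (fun σ τ => if σ ∈ S \ S₁ ∧ τ ∈ S₁ then
      (repMean S₁ p f σ - f τ) ^ 2 else 0)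
    rw [h, crossE]
    refine Finset.sum_congr rfl fun σ _ => Finset.sum_congr rfl fun e _ => ?_
    exact if_congr and_comm (by ring) rfl
  set N : ℝ := (Fintype.card I : ℝ) with hNdef
  have main : dirE S (repExt S₁ p f) ≤ dirE S₁ f + crossE S S₁ p f + crossE S S₁ p f +
      (12 * C / N ^ 2 * (N ^ 2 * ∑ σ ∈ S \ S₁, repVar S₁ p f σ) +
       12 * C / N ^ 2 * (N ^ 2 * ∑ σ ∈ S \ S₁, repVar S₁ p f σ) +
       12 / N * ∑ σ ∈ S \ S₁, ∑ e, repW S₁ p f σ (tw σ e)) := by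
    rw [← hsum]
    nth_rewrite 1 [← hV]
    rw [← hV']
    nth_rewrite 2 [← hrev]
    rw [dirE, dirE, crossE]
    simp only [Finset.mul_sum, ← Finset.sum_add_distrib]
    refine Finset.sum_le_sum fun σ _ => Finset.sum_le_sum fun e _ => ?_
    have g1 := repVar_nonneg (S₁ := S₁) (p := p) (f := f) σ
    have g2 := repVar_nonneg (S₁ := S₁) (p := p) (f := f) (tw σ e)
    have g3 := repW_nonneg (S₁ := S₁) (p := p) (f := f) σ (tw σ e)
    have c1 : 0 ≤ 12 * C / N ^ 2 := by positivity
    have c2 : 0 ≤ 12 / N := by positivity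
    have k1 := mul_nonneg c1 g1
    have k2 := mul_nonneg c1 g2
    have k3 := mul_nonneg c2 g3
    -- An edge inside `S₁` counts in `dirE S₁ f`, an edge across in one of the two copies of
    -- `crossE`, and an edge inside `S \ S₁` in the remaining terms.
    by_cases a : σ ∈ S₁ <;> by_cases b : tw σ e ∈ S₁
    · simp [a, b, hS a, hS b, repExt]
    · by_cases b' : tw σ e ∈ S
      · simp [a, b, hS a, b', repExt]
        exact k2
      · simp [a, b, b']
    · by_cases a' : σ ∈ S
      · simp [a, b, hS b, a', repExt]
        linarith
      · simp [a, b, a']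
    · by_cases a' : σ ∈ S <;> by_cases b' : tw σ e ∈ S
      · have := mean_diff_le (f := f) h1 hN hN0 a' b'
        rw [← hNdef] at this
        simp [a, b, a', b', repExt]
        linarith
      · simp [a, b, a', b']
        linarith
      · simp [a, b, a', b']
        exact k2
      · simp [a, b, a', b']
  have e1 : 12 * C / N ^ 2 * (N ^ 2 * ∑ σ ∈ S \ S₁, repVar S₁ p f σ) =
      12 * C * ∑ σ ∈ S \ S₁, repVar S₁ p f σ := by field_simp
  have e2 : 12 * (C : ℝ) * ∑ σ ∈ S \ S₁, repVar S₁ p f σ ≤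
      12 * C * (48 * C / N * dirE S₁ f) :=
    mul_le_mul_of_nonneg_left (hT.trans hX) (by positivity)
  have e3 : 12 / N * ∑ σ ∈ S \ S₁, ∑ e, repW S₁ p f σ (tw σ e) ≤ 12 / N * (C * dirE S₁ f) :=
    mul_le_mul_of_nonneg_left hW (by positivity)
  rw [e1] at main
  have e4 : (1 + (1152 * C ^ 2 + 108 * C) / N) * dirE S₁ f = dirE S₁ f +
    48 * C / N * dirE S₁ f + 48 * C / N * dirE S₁ f + (12 * C * (48 * C / N * dirE S₁ f) +
    12 * C * (48 * C / N * dirE S₁ f) + 12 / N * (C * dirE S₁ f)) := by ring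
  rw [e4]
  linarith

end Nested

/-! ### The configuration model: simple permutations -/

section Config

/-- The slots (half-edges): `d` at each of `n` vertices. A permutation of the slots matches the
left slots with the right slots. -/
abbrev Slot (n d : ℕ) := Fin n × Fin d

variable {n d : ℕ}

/-- The permutations with no repeated edge among the left slots in `P`. -/
def Sig (P : Finset (Slot n d)) : Finset (Equiv.Perm (Slot n d)) :=
  univ.filter fun σ => ∀ x ∈ P, ∀ y ∈ P, x ≠ y → x.1 = y.1 → (σ x).1 ≠ (σ y).1

/-- The permutations which encode a simple graph. -/
abbrev simpleP (n d : ℕ) : Finset (Equiv.Perm (Slot n d)) := Sig univ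

lemma mem_Sig {P : Finset (Slot n d)} {σ : Equiv.Perm (Slot n d)} :
    σ ∈ Sig P ↔ ∀ x ∈ P, ∀ y ∈ P, x ≠ y → x.1 = y.1 → (σ x).1 ≠ (σ y).1 := by
  simp [Sig]

lemma tw_apply_left (σ : Equiv.Perm (Slot n d)) (e : Slot n d × Slot n d) :
    tw σ e e.1 = σ e.2 := by simp [tw]

lemma tw_apply_right (σ : Equiv.Perm (Slot n d)) (e : Slot n d × Slot n d) :
    tw σ e e.2 = σ e.1 := by simp [tw]

lemma tw_apply_of_ne (σ : Equiv.Perm (Slot n d)) (e : Slot n d × Slot n d) {x : Slot n d}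
    (h1 : x ≠ e.1) (h2 : x ≠ e.2) : tw σ e x = σ x := by
  rw [tw, Equiv.Perm.mul_apply, Equiv.swap_apply_of_ne_of_ne h1 h2]

/-- The slots whose content is a neighbour of the left vertex `i`. -/
def nbrSlots (σ : Equiv.Perm (Slot n d)) (i : Fin n) : Finset (Slot n d) :=
  univ.image fun c : Fin d × Fin d => σ.symm ((σ (i, c.1)).1, c.2)

/-- The slots of left vertices adjacent to the right vertex `j`. -/
def adjSlots (σ : Equiv.Perm (Slot n d)) (j : Fin n) : Finset (Slot n d) :=
  univ.image fun c : Fin d × Fin d => ((σ.symm (j, c.1)).1, c.2)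

lemma mem_nbrSlots {σ : Equiv.Perm (Slot n d)} {q x : Slot n d} (h : (σ q).1 = (σ x).1) :
    q ∈ nbrSlots σ x.1 := by
  simp only [nbrSlots, Finset.mem_image, Finset.mem_univ, true_and]
  refine ⟨(x.2, (σ q).2), ?_⟩
  rw [Equiv.symm_apply_eq]
  exact Prod.ext h.symm rfl

lemma mem_adjSlots {σ : Equiv.Perm (Slot n d)} {q x : Slot n d} (h : x.1 = q.1) :
    q ∈ adjSlots σ (σ x).1 := by
  simp only [adjSlots, Finset.mem_image, Finset.mem_univ, true_and]
  refine ⟨((σ x).2, q.2), ?_⟩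
  simp [h]

lemma card_nbrSlots (σ : Equiv.Perm (Slot n d)) (i : Fin n) : (nbrSlots σ i).card ≤ d ^ 2 := by
  refine Finset.card_image_le.trans ?_
  simp [sq]

lemma card_adjSlots (σ : Equiv.Perm (Slot n d)) (i : Fin n) : (adjSlots σ i).card ≤ d ^ 2 := by
  refine Finset.card_image_le.trans ?_
  simp [sq]

/-- Transpositions that may create a repeated edge at the left vertex `i`. -/
def collSet (σ : Equiv.Perm (Slot n d)) (i : Fin n) : Finset (Slot n d × Slot n d) :=
  ((univ.image fun c : Fin d => (i, c)) ×ˢ nbrSlots σ i) ∪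
    (nbrSlots σ i ×ˢ (univ.image fun c : Fin d => (i, c)))

lemma card_collSet (σ : Equiv.Perm (Slot n d)) (i : Fin n) : (collSet σ i).card ≤ 2 * d ^ 3 := by
  have h1 : (univ.image fun c : Fin d => (i, c)).card ≤ d := by
    refine Finset.card_image_le.trans ?_
    simp
  have h2 := card_nbrSlots σ i
  refine (Finset.card_union_le _ _).trans ?_
  rw [Finset.card_product, Finset.card_product]
  have := Nat.mul_le_mul h1 h2
  nlinarith

lemma mem_slots_at {x : Slot n d} {i : Fin n} (h : x.1 = i) :
    x ∈ univ.image fun c : Fin d => (i, c) := by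
  simp only [Finset.mem_image, Finset.mem_univ, true_and]
  exact ⟨x.2, Prod.ext h.symm rfl⟩

lemma mem_collSet {σ : Equiv.Perm (Slot n d)} {e : Slot n d × Slot n d} {x y : Slot n d}
    (hxy : x.1 = y.1) (h1 : (σ x).1 ≠ (σ y).1) (h2 : (tw σ e x).1 = (tw σ e y).1) :
    e ∈ collSet σ x.1 := by
  have hne : x ≠ y := fun h => h1 (by rw [h])
  -- One of `x`, `y` is moved by the transposition; its new content repeats the other's.
  have key : ∀ x y : Slot n d, x ≠ y → (σ x).1 ≠ (σ y).1 → (tw σ e x).1 = (tw σ e y).1 →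
      x = e.1 → e.2 ∈ nbrSlots σ y.1 := by
    intro x y hne h1 h2 hx
    subst hx
    rw [tw_apply_left] at h2
    rcases eq_or_ne y e.2 with h | h
    · subst h
      rw [tw_apply_right] at h2
      exact absurd h2.symm h1
    · rw [tw_apply_of_ne σ e hne.symm h] at h2
      exact mem_nbrSlots h2
  have key' : ∀ x y : Slot n d, x ≠ y → (σ x).1 ≠ (σ y).1 → (tw σ e x).1 = (tw σ e y).1 →
      x = e.2 → e.1 ∈ nbrSlots σ y.1 := by
    intro x y hne h1 h2 hx
    subst hx
    rw [tw_apply_right] at h2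
    rcases eq_or_ne y e.1 with h | h
    · subst h
      rw [tw_apply_left] at h2
      exact absurd h2.symm h1
    · rw [tw_apply_of_ne σ e h hne.symm] at h2
      exact mem_nbrSlots h2
  simp only [collSet, Finset.mem_union, Finset.mem_product]
  by_cases ha : x = e.1
  · exact Or.inl ⟨mem_slots_at (by rw [ha]), hxy ▸ key x y hne h1 h2 ha⟩
  by_cases hb : x = e.2
  · exact Or.inr ⟨hxy ▸ key' x y hne h1 h2 hb, mem_slots_at (by rw [hb])⟩
  by_cases ha' : y = e.1
  · exact Or.inl ⟨mem_slots_at (by rw [hxy, ha']), key y x hne.symm h1.symm h2.symm ha'⟩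
  by_cases hb' : y = e.2
  · exact Or.inr ⟨key' y x hne.symm h1.symm h2.symm hb', mem_slots_at (by rw [hxy, hb'])⟩
  rw [tw_apply_of_ne σ e ha hb, tw_apply_of_ne σ e ha' hb'] at h2
  exact absurd h2 h1

/-- Few transpositions destroy simplicity. -/
lemma card_leave_simple {σ : Equiv.Perm (Slot n d)} (hσ : σ ∈ simpleP n d) :
    (univ.filter fun e => tw σ e ∉ simpleP n d).card ≤ n * (2 * d ^ 3) := by
  have hsub : (univ.filter fun e => tw σ e ∉ simpleP n d) ⊆
      univ.biUnion fun i : Fin n => collSet σ i := by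
    intro e he
    simp only [Finset.mem_filter, Finset.mem_univ, true_and, mem_Sig, not_forall, true_implies]
      at he
    obtain ⟨x, y, hne, hxy, h⟩ := he
    rw [not_not] at h
    rw [mem_Sig] at hσ
    simp only [Finset.mem_biUnion, Finset.mem_univ, true_and]
    exact ⟨x.1, mem_collSet hxy (hσ x (Finset.mem_univ _) y (Finset.mem_univ _) hne hxy) h⟩
  refine (Finset.card_le_card hsub).trans (Finset.card_biUnion_le.trans ?_)
  refine (Finset.sum_le_sum fun i _ => card_collSet σ i).trans ?_
  simp

variable {P : Finset (Slot n d)} {p : Slot n d}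

lemma Sig_insert_subset : Sig (insert p P) ⊆ Sig P := by
  intro σ h
  rw [mem_Sig] at h ⊢
  exact fun x hx y hy => h x (Finset.mem_insert_of_mem hx) y (Finset.mem_insert_of_mem hy)

/-- All but boundedly many transpositions at `p` repair the possible defect at `p`. -/
lemma card_not_repairs {σ : Equiv.Perm (Slot n d)} (hσ : σ ∈ Sig P) :
    ((repairs (Sig (insert p P)) p σ)ᶜ).card ≤ 2 * d ^ 2 := by
  have hsub : (repairs (Sig (insert p P)) p σ)ᶜ ⊆ nbrSlots σ p.1 ∪ adjSlots σ (σ p).1 := by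
    intro q hq
    by_contra hcon
    rw [Finset.mem_union, not_or] at hcon
    obtain ⟨hb1, hb2⟩ := hcon
    apply Finset.mem_compl.1 hq
    simp only [repairs, Finset.mem_filter, Finset.mem_univ, true_and]
    have hqp : q.1 ≠ p.1 := fun h => hb2 (mem_adjSlots h.symm)
    have tp : tw σ (p, q) p = σ q := tw_apply_left σ (p, q)
    have tq : tw σ (p, q) q = σ p := tw_apply_right σ (p, q)
    have tx : ∀ x, x ≠ p → x ≠ q → tw σ (p, q) x = σ x := fun x h1 h2 =>
      tw_apply_of_ne σ (p, q) h1 h2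
    have ap : ∀ y, y ≠ p → y.1 = p.1 → (tw σ (p, q) y).1 ≠ (tw σ (p, q) p).1 := by
      intro y h1 h2 h3
      have h4 : y ≠ q := fun h => hqp (h ▸ h2)
      rw [tx y h1 h4, tp] at h3
      exact hb1 (h2 ▸ mem_nbrSlots h3.symm)
    have aq : ∀ y, y ≠ q → y.1 = q.1 → (tw σ (p, q) y).1 ≠ (tw σ (p, q) q).1 := by
      intro y h1 h2 h3
      have h4 : y ≠ p := fun h => hqp (h ▸ h2).symm
      rw [tx y h4 h1, tq] at h3
      exact hb2 (h3 ▸ mem_adjSlots h2)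
    rw [mem_Sig] at hσ ⊢
    intro x hx y hy hxy h1
    by_cases hxp : x = p
    · subst hxp
      exact (ap y hxy.symm h1.symm).symm
    by_cases hyp : y = p
    · subst hyp
      exact ap x hxy h1
    by_cases hxq : x = q
    · subst hxq
      exact (aq y hxy.symm h1.symm).symm
    by_cases hyq : y = q
    · subst hyq
      exact aq x hxy h1
    rw [tx x hxp hxq, tx y hyp hyq]
    exact hσ x (Finset.mem_of_mem_insert_of_ne hx hxp) y (Finset.mem_of_mem_insert_of_ne hy hyp)
      hxy h1
  refine (Finset.card_le_card hsub).trans ((Finset.card_union_le _ _).trans ?_)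
  have := card_nbrSlots σ p.1
  have := card_adjSlots σ (σ p).1
  omega

/-- A permutation in `Sig P` but not in `Sig (insert p P)` has a repeated edge at `p`. -/
lemma exists_defect {σ : Equiv.Perm (Slot n d)} (h : σ ∈ Sig P \ Sig (insert p P)) :
    ∃ y ∈ insert p P, y ≠ p ∧ p.1 = y.1 ∧ (σ p).1 = (σ y).1 := by
  rw [Finset.mem_sdiff, mem_Sig, mem_Sig] at h
  obtain ⟨h1, h2⟩ := h
  by_contra hcon
  push Not at hcon
  apply h2
  intro x hx y hy hxy h3
  by_cases hxp : x = p
  · subst hxp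
    exact hcon y hy hxy.symm h3
  by_cases hyp : y = p
  · subst hyp
    exact (hcon x hx hxy h3.symm).symm
  exact h1 x (Finset.mem_of_mem_insert_of_ne hx hxp) y (Finset.mem_of_mem_insert_of_ne hy hyp)
      hxy h3

lemma card_break {σ : Equiv.Perm (Slot n d)} (hσ : σ ∈ Sig (insert p P)) :
    (univ.filter fun e => tw σ e ∈ Sig P \ Sig (insert p P)).card ≤ 2 * d ^ 3 := by
  refine (Finset.card_le_card fun e he => ?_).trans (card_collSet σ p.1)
  simp only [Finset.mem_filter, Finset.mem_univ, true_and] at he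
  obtain ⟨y, hy, hyp, h1, h2⟩ := exists_defect he
  exact mem_collSet h1 (mem_Sig.1 hσ p (Finset.mem_insert_self _ _) y hy hyp.symm h1) h2

lemma card_fix {σ : Equiv.Perm (Slot n d)} (hσ : σ ∈ Sig P \ Sig (insert p P)) :
    (univ.filter fun e => tw σ e ∈ Sig (insert p P)).card ≤ 4 * Fintype.card (Slot n d) := by
  obtain ⟨y, hy, hyp, h1, h2⟩ := exists_defect hσ
  have hsub : (univ.filter fun e => tw σ e ∈ Sig (insert p P)) ⊆
      (({p, y} : Finset (Slot n d)) ×ˢ univ) ∪ (univ ×ˢ ({p, y} : Finset (Slot n d))) := by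
    intro e he
    simp only [Finset.mem_filter, Finset.mem_univ, true_and] at he
    by_contra hcon
    simp only [Finset.mem_union, Finset.mem_product, Finset.mem_insert, Finset.mem_singleton,
      Finset.mem_univ, and_true, true_and, not_or] at hcon
    obtain ⟨⟨a1, a2⟩, a3, a4⟩ := hcon
    have := mem_Sig.1 he p (Finset.mem_insert_self _ _) y hy hyp.symm h1
    rw [tw_apply_of_ne σ e (Ne.symm a1) (Ne.symm a3),
      tw_apply_of_ne σ e (Ne.symm a2) (Ne.symm a4)] at this
    exact this h2
  refine (Finset.card_le_card hsub).trans ((Finset.card_union_le _ _).trans ?_)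
  rw [Finset.card_product, Finset.card_product, Finset.card_univ]
  have : ({p, y} : Finset (Slot n d)).card ≤ 2 := Finset.card_le_two
  nlinarith

/-- Spectral gap for the transpositions which preserve `Sig P`, by successively extending
functions from `Sig (insert p P)` to `Sig P`. -/
lemma Sig_poincare (hd : 2 ≤ d) (hN : 200 * d ^ 6 ≤ n * d) (P : Finset (Slot n d)) :
    ∀ f : Equiv.Perm (Slot n d) → ℝ, ∃ c, ∑ σ ∈ Sig P, (f σ - c) ^ 2 ≤
      1 / (n * d : ℝ) * (1 + 5000 * d ^ 6 / (n * d : ℝ)) ^ P.card * dirE (Sig P) f := by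
  have hcard : Fintype.card (Slot n d) = n * d := by simp
  have hd3 : 8 ≤ d ^ 3 := Nat.pow_le_pow_left hd 3
  have hd6 : d ^ 6 = d ^ 3 * d ^ 3 := by ring
  have hN0 : 0 < n * d := by nlinarith
  have hN0' : (0 : ℝ) < (n * d : ℝ) := by exact_mod_cast hN0
  have hN1 : 4 * (2 * d ^ 3) ≤ n * d := by nlinarith
  have hN2 : 24 * (2 * d ^ 3) ^ 2 ≤ n * d := by
    have : 24 * (2 * d ^ 3) ^ 2 = 96 * d ^ 6 := by ring
    omega
  induction P using Finset.induction_on with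
  | empty =>
    intro f
    refine ⟨(∑ σ, f σ) / Fintype.card (Equiv.Perm (Slot n d)), ?_⟩
    · have h := perm_poincare f
      have hS : Sig (∅ : Finset (Slot n d)) = univ := by ext σ; simp [mem_Sig]
      rw [hS]
      simp only [dirE, Finset.mem_univ, and_self, if_true, Finset.card_empty, pow_zero, mul_one]
      rw [hcard] at h
      push_cast at h
      simp only [Fintype.sum_prod_type (f := fun e => (f _ - f (tw _ e)) ^ 2)]
      exact h
  | insert p P hp ih =>
    intro f
    obtain ⟨c, hc⟩ := ih (repExt (Sig (insert p P)) p f)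
    refine ⟨c, ?_⟩
    have hstep := dirE_repExt_le (S := Sig P) (S₁ := Sig (insert p P)) (p := p) (f := f)
      (C := 2 * d ^ 3)
      (fun σ h => (card_not_repairs h).trans
        (Nat.mul_le_mul_left _ (Nat.pow_le_pow_right (by omega) (by omega))))
      (fun σ h => card_break h)
      (fun σ h => (card_fix h).trans (Nat.mul_le_mul_right _ (by omega)))
      Sig_insert_subset (by rw [hcard]; exact hN1) (by rw [hcard]; exact hN2)
      (by rw [hcard]; omega)
    rw [hcard] at hstep
    have hE := dirE_nonneg (Sig (insert p P)) f
    have hcoef : (1 + (1152 * ((2 * d ^ 3 : ℕ) : ℝ) ^ 2 + 108 * ((2 * d ^ 3 : ℕ) : ℝ)) /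
        ((n * d : ℕ) : ℝ)) ≤ 1 + 5000 * d ^ 6 / (n * d : ℝ) := by
      push_cast
      have : (8 : ℝ) ≤ (d : ℝ) ^ 3 := by exact_mod_cast hd3
      have e6 : (d : ℝ) ^ 6 = (d : ℝ) ^ 3 * (d : ℝ) ^ 3 := by ring
      gcongr
      rw [e6]
      nlinarith
    calc ∑ σ ∈ Sig (insert p P), (f σ - c) ^ 2
        = ∑ σ ∈ Sig (insert p P), (repExt (Sig (insert p P)) p f σ - c) ^ 2 :=
          Finset.sum_congr rfl fun σ h => by simp [repExt, h]
      _ ≤ ∑ σ ∈ Sig P, (repExt (Sig (insert p P)) p f σ - c) ^ 2 :=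
          Finset.sum_le_sum_of_subset_of_nonneg Sig_insert_subset fun _ _ _ => sq_nonneg _
      _ ≤ _ := hc
      _ ≤ 1 / (n * d : ℝ) * (1 + 5000 * d ^ 6 / (n * d : ℝ)) ^ P.card *
          ((1 + 5000 * d ^ 6 / (n * d : ℝ)) * dirE (Sig (insert p P)) f) := by
          refine mul_le_mul_of_nonneg_left (hstep.trans ?_) (by positivity)
          exact mul_le_mul_of_nonneg_right hcoef hE
      _ = _ := by
          rw [Finset.card_insert_of_notMem hp]
          ring

/-- Spectral gap for the transpositions which preserve simplicity: the `n d` factors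
`1 + 5000 d ^ 6 / (n d)` multiply up to a constant. -/
theorem simple_poincare (hd : 2 ≤ d) (hN : 200 * d ^ 6 ≤ n * d)
    (f : Equiv.Perm (Slot n d) → ℝ) : ∃ c, ∑ σ ∈ simpleP n d, (f σ - c) ^ 2 ≤
      Real.exp (5000 * d ^ 6) / (n * d : ℝ) * dirE (simpleP n d) f := by
  obtain ⟨c, hc⟩ := Sig_poincare hd hN univ f
  refine ⟨c, hc.trans (mul_le_mul_of_nonneg_right ?_ (dirE_nonneg _ _))⟩
  have hd0 : 0 < d := by omega
  have hN0 : 0 < n * d := lt_of_lt_of_le (by positivity) hN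
  have hN0' : (0 : ℝ) < (n * d : ℝ) := by exact_mod_cast hN0
  have h : (1 + 5000 * d ^ 6 / (n * d : ℝ)) ^ (univ : Finset (Slot n d)).card ≤
      Real.exp (5000 * d ^ 6) := by
    have h1 : 1 + 5000 * d ^ 6 / (n * d : ℝ) ≤ Real.exp (5000 * d ^ 6 / (n * d : ℝ)) := by
      linarith [Real.add_one_le_exp (5000 * d ^ 6 / (n * d : ℝ))]
    refine (pow_le_pow_left₀ (by positivity) h1 _).trans (le_of_eq ?_)
    rw [← Real.exp_nat_mul]
    congr 1
    simp only [Finset.card_univ, Fintype.card_prod, Fintype.card_fin]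
    push_cast
    rw [mul_div_cancel₀ _ hN0'.ne']
  rw [mul_comm, div_eq_mul_one_div (Real.exp _)]
  exact mul_le_mul_of_nonneg_right h (one_div_nonneg.2 hN0'.le)

end Config

/-! ### From permutations to graphs -/

section Descent

variable {n d : ℕ}

/-- The bipartite graph encoded by a permutation of the slots (multiple edges are merged). -/
def gr (σ : Equiv.Perm (Slot n d)) : BG n := fun i j => decide (∃ a, (σ (i, a)).1 = j)

lemma gr_true {σ : Equiv.Perm (Slot n d)} {i j : Fin n} :
    gr σ i j = true ↔ ∃ a, (σ (i, a)).1 = j := by simp [gr]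

lemma gr_false {σ : Equiv.Perm (Slot n d)} {i j : Fin n} :
    gr σ i j = false ↔ ¬∃ a, (σ (i, a)).1 = j := by simp [gr]

lemma simple_inj {σ : Equiv.Perm (Slot n d)} (h : σ ∈ simpleP n d) {x y : Slot n d}
    (h1 : x.1 = y.1) (h2 : (σ x).1 = (σ y).1) : x = y := by
  by_contra hxy
  exact mem_Sig.1 h x (Finset.mem_univ _) y (Finset.mem_univ _) hxy h1 h2

lemma simple_row_inj {σ : Equiv.Perm (Slot n d)} (h : σ ∈ simpleP n d) (i : Fin n) :
    Function.Injective fun a => (σ (i, a)).1 := fun a b hab =>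
  congrArg Prod.snd (simple_inj (x := (i, a)) (y := (i, b)) h rfl hab)

lemma simple_col_inj {σ : Equiv.Perm (Slot n d)} (h : σ ∈ simpleP n d) (j : Fin n) :
    Function.Injective fun b => (σ.symm (j, b)).1 := fun a b hab => by
  have := simple_inj (x := σ.symm (j, a)) (y := σ.symm (j, b)) h hab (by simp)
  exact congrArg Prod.snd (σ.symm.injective this)

lemma gr_true' {σ : Equiv.Perm (Slot n d)} {i j : Fin n} :
    gr σ i j = true ↔ ∃ b, (σ.symm (j, b)).1 = i := by
  rw [gr_true]
  constructor
  · rintro ⟨a, rfl⟩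
    exact ⟨(σ (i, a)).2, by simp⟩
  · rintro ⟨b, rfl⟩
    exact ⟨(σ.symm (j, b)).2, by simp⟩

lemma gr_reg {σ : Equiv.Perm (Slot n d)} (h : σ ∈ simpleP n d) : IsBipReg n d (gr σ) := by
  constructor
  · intro i
    have : (univ.filter fun j => gr σ i j = true) = univ.image fun a => (σ (i, a)).1 := by
      ext j
      simp [gr_true]
    rw [this, Finset.card_image_of_injective _ (simple_row_inj h i)]
    simp
  · intro j
    have : (univ.filter fun i => gr σ i j = true) = univ.image fun b => (σ.symm (j, b)).1 := by
      ext i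
      simp [gr_true']
    rw [this, Finset.card_image_of_injective _ (simple_col_inj h j)]
    simp

/-- The simple permutations encoding the graph `A`. -/
def fib (d : ℕ) (A : BG n) : Finset (Equiv.Perm (Slot n d)) :=
  (simpleP n d).filter fun σ => gr σ = A

/-- The pairs of labellings, of the edges at each left vertex and of the edges at each right
vertex, by `Fin d`. They are in bijection with the permutations encoding `A`. -/
abbrev Labels (d : ℕ) (A : BG n) :=
  (∀ i, Fin d ≃ {j // A i j = true}) × (∀ j, Fin d ≃ {i // A i j = true})

/-- The permutation sending the left slot of each edge to its right slot. -/
def labelPerm {A : BG n} (L : Labels d A) : Equiv.Perm (Slot n d) where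
  toFun x := ((L.1 x.1 x.2).1, (L.2 (L.1 x.1 x.2).1).symm ⟨x.1, (L.1 x.1 x.2).2⟩)
  invFun y := ((L.2 y.1 y.2).1, (L.1 (L.2 y.1 y.2).1).symm ⟨y.1, (L.2 y.1 y.2).2⟩)
  left_inv := by
    rintro ⟨i, a⟩
    have key : ∀ (j : Fin n) (hj : A i j = true) (z : {i // A i j = true}),
        z = ⟨i, hj⟩ → ((L.1 z.1).symm ⟨j, z.2⟩) = (L.1 i).symm ⟨j, hj⟩ := by
      rintro j hj _ rfl
      rfl
    refine Prod.ext ?_ ?_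
    · simp
    · refine (heq_iff_eq.1 (HEq.trans (heq_of_eq (key _ (L.1 i a).2 _ ?_)) HEq.rfl)).trans ?_
      · simp
      · exact (L.1 i).symm_apply_apply a
  right_inv := by
    rintro ⟨j, b⟩
    have key : ∀ (i : Fin n) (hi : A i j = true) (z : {j // A i j = true}),
        z = ⟨j, hi⟩ → ((L.2 z.1).symm ⟨i, z.2⟩) = (L.2 j).symm ⟨i, hi⟩ := by
      rintro j hj _ rfl
      rfl
    refine Prod.ext ?_ ?_
    · simp
    · refine (key _ (L.2 j b).2 _ ?_).trans ?_
      · simp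
      · exact (L.2 j).symm_apply_apply b

lemma labelPerm_mem {A : BG n} (L : Labels d A) : labelPerm L ∈ fib d A := by
  have hf : ∀ x, (labelPerm L x).1 = (L.1 x.1 x.2).1 := fun x => rfl
  rw [fib, Finset.mem_filter, mem_Sig]
  refine ⟨?_, ?_⟩
  · rintro ⟨i, a⟩ - ⟨i', b⟩ - hne h1 h2
    obtain rfl : i = i' := h1
    rw [hf, hf] at h2
    exact hne (congrArg _ ((L.1 i).injective (Subtype.ext h2)))
  · ext i j
    rw [Bool.eq_iff_iff, gr_true]
    constructor
    · rintro ⟨a, rfl⟩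
      exact (L.1 i a).2
    · intro h
      exact ⟨(L.1 i).symm ⟨j, h⟩, by rw [hf]; simp⟩

lemma labelPerm_injective {A : BG n} : Function.Injective (labelPerm (d := d) (A := A)) := by
  intro L L' h
  refine Prod.ext ?_ ?_
  · funext i
    ext a : 2
    exact congrArg Prod.fst (Equiv.congr_fun h (i, a))
  · funext j
    ext b : 2
    exact congrArg Prod.fst (Equiv.congr_fun (congrArg Equiv.symm h) (j, b))

lemma labelPerm_surj (A : OmegaB n d) {σ : Equiv.Perm (Slot n d)} (hσ : σ ∈ fib d A.1) :
    ∃ L : Labels d A.1, labelPerm L = σ := by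
  obtain ⟨hs, hg⟩ := Finset.mem_filter.1 hσ
  have b1 : ∀ i, Function.Bijective fun a : Fin d =>
      (⟨(σ (i, a)).1, by rw [← hg]; exact gr_true.2 ⟨a, rfl⟩⟩ : {j // A.1 i j = true}) := by
    intro i
    refine (Fintype.bijective_iff_injective_and_card _).2 ⟨?_, ?_⟩
    · intro a b hab
      exact simple_row_inj hs i (congrArg Subtype.val hab)
    · rw [Fintype.card_fin, Fintype.card_subtype]
      exact (A.2.1 i).symm
  have b2 : ∀ j, Function.Bijective fun b : Fin d =>
      (⟨(σ.symm (j, b)).1, by rw [← hg]; exact gr_true'.2 ⟨b, rfl⟩⟩ : {i // A.1 i j = true}) := by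
    intro j
    refine (Fintype.bijective_iff_injective_and_card _).2 ⟨?_, ?_⟩
    · intro a b hab
      exact simple_col_inj hs j (congrArg Subtype.val hab)
    · rw [Fintype.card_fin, Fintype.card_subtype]
      exact (A.2.2 j).symm
  refine ⟨⟨fun i => Equiv.ofBijective _ (b1 i), fun j => Equiv.ofBijective _ (b2 j)⟩, ?_⟩
  ext1 x
  refine Prod.ext rfl ?_
  change (Equiv.ofBijective _ (b2 (σ x).1)).symm ⟨x.1, _⟩ = (σ x).2
  rw [Equiv.symm_apply_eq]
  refine Subtype.ext ?_
  change x.1 = (σ.symm ((σ x).1, (σ x).2)).1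
  simp

/-- Every graph is encoded by the same number of permutations. -/
lemma card_fib (A : OmegaB n d) : (fib d A.1).card = d.factorial ^ n * d.factorial ^ n := by
  have h1 : (fib d A.1).card = Fintype.card (Labels d A.1) := by
    rw [← Finset.card_univ]
    symm
    refine Finset.card_bij (fun L _ => labelPerm L) (fun L _ => labelPerm_mem L)
      (fun L _ L' _ h => labelPerm_injective h) fun σ hσ => ?_
    obtain ⟨L, hL⟩ := labelPerm_surj A hσ
    exact ⟨L, Finset.mem_univ _, hL⟩
  have e1 : ∀ i, Nonempty (Fin d ≃ {j // A.1 i j = true}) := fun i => by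
    refine ⟨Fintype.equivOfCardEq ?_⟩
    rw [Fintype.card_fin, Fintype.card_subtype]
    exact (A.2.1 i).symm
  have e2 : ∀ j, Nonempty (Fin d ≃ {i // A.1 i j = true}) := fun j => by
    refine ⟨Fintype.equivOfCardEq ?_⟩
    rw [Fintype.card_fin, Fintype.card_subtype]
    exact (A.2.2 j).symm
  rw [h1, Fintype.card_prod, Fintype.card_pi, Fintype.card_pi]
  congr 1
  · rw [Finset.prod_congr rfl fun i _ => (Fintype.card_equiv (e1 i).some).trans
      (congrArg Nat.factorial (Fintype.card_fin d))]
    simp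
  · rw [Finset.prod_congr rfl fun i _ => (Fintype.card_equiv (e2 i).some).trans
      (congrArg Nat.factorial (Fintype.card_fin d))]
    simp

/-- The number of permutations encoding a given `d`-regular graph. -/
def kap (n d : ℕ) : ℝ := (d.factorial : ℝ) ^ n * (d.factorial : ℝ) ^ n

lemma kap_pos (n d : ℕ) : 0 < kap n d := by
  have : (0 : ℝ) < d.factorial := by exact_mod_cast d.factorial_pos
  unfold kap
  positivity

lemma sum_simple (H : BG n → ℝ) :
    ∑ σ ∈ simpleP n d, H (gr σ) = kap n d * ∑ G : OmegaB n d, H G.1 := by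
  have h1 := Finset.sum_fiberwise_of_maps_to (s := simpleP n d)
    (t := univ.filter fun A : BG n => IsBipReg n d A) (g := gr)
    (fun σ h => by simp [gr_reg h]) (fun σ => H (gr σ))
  rw [← h1, Finset.mul_sum, ← Finset.sum_subtype_eq_sum_filter, Finset.subtype_univ]
  refine Finset.sum_congr rfl fun A _ => ?_
  rw [Finset.sum_congr rfl (g := fun _ => H A.1) fun σ h => by rw [(Finset.mem_filter.1 h).2],
    Finset.sum_const, nsmul_eq_mul]
  congr 1
  have := card_fib A
  rw [fib] at this
  rw [this, kap]
  push_cast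
  rfl

lemma tw_gr_eq {σ : Equiv.Perm (Slot n d)} {e : Slot n d × Slot n d}
    (h : e.1.1 = e.2.1 ∨ (σ e.1).1 = (σ e.2).1) : gr (tw σ e) = gr σ := by
  have key : ∀ σ : Equiv.Perm (Slot n d), (e.1.1 = e.2.1 ∨ (σ e.1).1 = (σ e.2).1) →
      ∀ i j, gr σ i j = true → gr (tw σ e) i j = true := by
    intro σ h i j
    rw [gr_true, gr_true]
    rintro ⟨a, ha⟩
    by_cases h1 : (i, a) = e.1
    · rcases h with h | h
      · refine ⟨e.2.2, ?_⟩
        have : (i, e.2.2) = e.2 := Prod.ext ((congrArg Prod.fst h1).trans h) rfl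
        rw [this, tw_apply_right, ← h1, ha]
      · exact ⟨a, by rw [h1, tw_apply_left, ← h, ← h1, ha]⟩
    by_cases h2 : (i, a) = e.2
    · rcases h with h | h
      · refine ⟨e.1.2, ?_⟩
        have : (i, e.1.2) = e.1 := Prod.ext ((congrArg Prod.fst h2).trans h.symm) rfl
        rw [this, tw_apply_left, ← h2, ha]
      · exact ⟨a, by rw [h2, tw_apply_right, h, ← h2, ha]⟩
    exact ⟨a, by rw [tw_apply_of_ne σ e h1 h2, ha]⟩
  ext i j
  rw [Bool.eq_iff_iff]
  refine ⟨fun h' => ?_, key σ h i j⟩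
  have := key (tw σ e) (by rw [tw_apply_left, tw_apply_right]; exact h.imp id Eq.symm) i j h'
  rwa [tw_tw] at this

/-- A transposition between simple permutations realises a simple switching. -/
lemma tw_gr_switch {σ : Equiv.Perm (Slot n d)} {e : Slot n d × Slot n d}
    (hσ : σ ∈ simpleP n d) (hτ : tw σ e ∈ simpleP n d)
    (h1 : e.1.1 ≠ e.2.1) (h2 : (σ e.1).1 ≠ (σ e.2).1) :
    gr σ e.1.1 (σ e.1).1 = true ∧ gr σ e.2.1 (σ e.2).1 = true ∧
    gr σ e.1.1 (σ e.2).1 = false ∧ gr σ e.2.1 (σ e.1).1 = false ∧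
    gr (tw σ e) = switchMove (gr σ) e.1.1 e.2.1 (σ e.1).1 (σ e.2).1 := by
  obtain ⟨⟨i₁, a₁⟩, ⟨i₂, a₂⟩⟩ := e
  have t1 := tw_apply_left σ ((i₁, a₁), (i₂, a₂))
  have t2 := tw_apply_right σ ((i₁, a₁), (i₂, a₂))
  have t3 : ∀ x, x ≠ (i₁, a₁) → x ≠ (i₂, a₂) → tw σ ((i₁, a₁), (i₂, a₂)) x = σ x :=
    fun x => tw_apply_of_ne σ ((i₁, a₁), (i₂, a₂))
  generalize tw σ ((i₁, a₁), (i₂, a₂)) = τ at *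
  dsimp only at h1 h2 t1 t2 ⊢
  refine ⟨gr_true.2 ⟨a₁, rfl⟩, gr_true.2 ⟨a₂, rfl⟩, ?_, ?_, ?_⟩
  · rw [gr_false]
    rintro ⟨a, ha⟩
    have n1 : (i₁, a) ≠ (i₁, a₁) := fun h => h2 (by rw [← ha, h])
    have n2 : (i₁, a) ≠ (i₂, a₂) := fun h => h1 (congrArg Prod.fst h)
    exact n1 (simple_inj hτ rfl (by rw [t3 _ n1 n2, t1, ha]))
  · rw [gr_false]
    rintro ⟨a, ha⟩
    have n1 : (i₂, a) ≠ (i₂, a₂) := fun h => h2 (by rw [← ha, h])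
    have n2 : (i₂, a) ≠ (i₁, a₁) := fun h => h1 (congrArg Prod.fst h).symm
    exact n1 (simple_inj hτ rfl (by rw [t3 _ n2 n1, t2, ha]))
  · ext i j
    unfold switchMove
    split_ifs with c1 c2
    · rw [gr_false]
      rintro ⟨a, ha⟩
      rcases c1 with ⟨rfl, rfl⟩ | ⟨rfl, rfl⟩
      · have n2 : (i, a) ≠ (i₂, a₂) := fun h => h1 (congrArg Prod.fst h)
        by_cases n1 : (i, a) = (i, a₁)
        · rw [n1, t1] at ha
          exact h2 ha.symm
        · rw [t3 _ n1 n2] at ha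
          exact n1 (simple_inj hσ rfl ha)
      · have n2 : (i, a) ≠ (i₁, a₁) := fun h => h1 (congrArg Prod.fst h).symm
        by_cases n1 : (i, a) = (i, a₂)
        · rw [n1, t2] at ha
          exact h2 ha
        · rw [t3 _ n2 n1] at ha
          exact n1 (simple_inj hσ rfl ha)
    · rw [gr_true]
      rcases c2 with ⟨rfl, rfl⟩ | ⟨rfl, rfl⟩
      · exact ⟨a₁, by rw [t1]⟩
      · exact ⟨a₂, by rw [t2]⟩
    · rw [Bool.eq_iff_iff, gr_true, gr_true]
      refine exists_congr fun a => ?_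
      by_cases n1 : (i, a) = (i₁, a₁)
      · obtain rfl : i = i₁ := congrArg Prod.fst n1
        rw [n1, t1]
        exact ⟨fun h => absurd (Or.inl ⟨rfl, h.symm⟩) c2, fun h => absurd (Or.inl ⟨rfl, h.symm⟩) c1⟩
      by_cases n2 : (i, a) = (i₂, a₂)
      · obtain rfl : i = i₂ := congrArg Prod.fst n2
        rw [n2, t2]
        exact ⟨fun h => absurd (Or.inr ⟨rfl, h.symm⟩) c2, fun h => absurd (Or.inr ⟨rfl, h.symm⟩) c1⟩
      rw [t3 _ n1 n2]

/-- The rows in which two graphs differ. -/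
def diffRows (A B : BG n) : Finset (Fin n) := univ.filter fun i => A i ≠ B i

lemma gr_tw_cases {σ : Equiv.Perm (Slot n d)} {e : Slot n d × Slot n d}
    (hσ : σ ∈ simpleP n d) (hτ : tw σ e ∈ simpleP n d) (hne : gr (tw σ e) ≠ gr σ) :
    SwitchAdj (gr σ) (gr (tw σ e)) ∧ diffRows (gr σ) (gr (tw σ e)) = {e.1.1, e.2.1} := by
  have h1 : e.1.1 ≠ e.2.1 := fun h => hne (tw_gr_eq (Or.inl h))
  have h2 : (σ e.1).1 ≠ (σ e.2).1 := fun h => hne (tw_gr_eq (Or.inr h))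
  obtain ⟨b1, b2, b3, b4, b5⟩ := tw_gr_switch hσ hτ h1 h2
  refine ⟨⟨_, _, _, _, h1, h2, b1, b2, b3, b4, b5⟩, ?_⟩
  ext i
  simp only [diffRows, Finset.mem_filter, Finset.mem_univ, true_and, Finset.mem_insert,
    Finset.mem_singleton]
  constructor
  · intro h
    by_contra hcon
    rw [not_or] at hcon
    apply h
    rw [b5]
    funext j
    simp [switchMove, hcon.1, hcon.2]
  · rintro (rfl | rfl) h
    · have := congrFun h (σ e.1).1
      rw [b1, b5] at this
      simp [switchMove] at this
    · have := congrFun h (σ e.2).1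
      rw [b2, b5] at this
      simp [switchMove] at this

/-- A given graph is reached by a bounded number of transpositions. -/
lemma card_reach {σ : Equiv.Perm (Slot n d)} (hσ : σ ∈ simpleP n d) {B : BG n} (hB : B ≠ gr σ) :
    (univ.filter fun e => tw σ e ∈ simpleP n d ∧ gr (tw σ e) = B).card ≤ 4 * d ^ 2 := by
  rcases Finset.eq_empty_or_nonempty
    (univ.filter fun e => tw σ e ∈ simpleP n d ∧ gr (tw σ e) = B) with h | ⟨e₀, h₀⟩
  · rw [h]
    simp
  have hd : ∀ e ∈ (univ.filter fun e => tw σ e ∈ simpleP n d ∧ gr (tw σ e) = B),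
      diffRows (gr σ) B = {e.1.1, e.2.1} := by
    intro e he
    obtain ⟨h1, h2⟩ := (Finset.mem_filter.1 he).2
    have := (gr_tw_cases hσ h1 (by rw [h2]; exact hB)).2
    rwa [h2] at this
  have hc : (diffRows (gr σ) B).card ≤ 2 := by
    rw [hd e₀ h₀]
    exact Finset.card_le_two
  have hsub : (univ.filter fun e => tw σ e ∈ simpleP n d ∧ gr (tw σ e) = B) ⊆
      (diffRows (gr σ) B ×ˢ (univ : Finset (Fin d))) ×ˢ
        (diffRows (gr σ) B ×ˢ (univ : Finset (Fin d))) := by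
    intro e he
    simp [hd e he]
  refine (Finset.card_le_card hsub).trans ?_
  simp only [Finset.card_product, Finset.card_univ, Fintype.card_fin]
  have := Nat.mul_le_mul_right d hc
  exact (Nat.mul_le_mul this this).trans (le_of_eq (by ring))

/-- Sum of `F` over the ordered pairs of graphs which differ by a switching. -/
def edgeSum (n d : ℕ) (F : BG n → BG n → ℝ) : ℝ :=
  ∑ G : OmegaB n d, ∑ G' : OmegaB n d, if SwitchAdj G.1 G'.1 then F G.1 G'.1 else 0

/-- Sums over transpositions between simple permutations are controlled by sums over
switchings. -/
lemma sum_tw_le_edgeSum (F : BG n → BG n → ℝ) (hF : ∀ G G' : OmegaB n d, 0 ≤ F G.1 G'.1)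
    (hF0 : ∀ A, F A A = 0) :
    ∑ σ, ∑ e, (if σ ∈ simpleP n d ∧ tw σ e ∈ simpleP n d then F (gr σ) (gr (tw σ e)) else 0) ≤
      kap n d * (4 * d ^ 2 * edgeSum n d F) := by
  have h := sum_simple (d := d) (fun A => 4 * (d : ℝ) ^ 2 * ∑ G' : OmegaB n d,
    if SwitchAdj A G'.1 then F A G'.1 else 0)
  rw [edgeSum, Finset.mul_sum (s := univ) (a := 4 * (d : ℝ) ^ 2), ← h,
    ← Finset.sum_subset (Finset.subset_univ (simpleP n d))
      (fun σ _ hσ => by simp only [hσ, false_and, if_false, Finset.sum_const_zero])]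
  refine Finset.sum_le_sum fun σ hσ => ?_
  simp only [hσ, true_and]
  set A : OmegaB n d := ⟨gr σ, gr_reg hσ⟩ with hA
  have step : ∀ e, (if tw σ e ∈ simpleP n d then F (gr σ) (gr (tw σ e)) else 0) =
      ∑ G' : OmegaB n d, if tw σ e ∈ simpleP n d ∧ gr (tw σ e) = G'.1 then
        (if SwitchAdj (gr σ) G'.1 then F (gr σ) G'.1 else 0) else 0 := by
    intro e
    by_cases he : tw σ e ∈ simpleP n d
    · simp only [he, true_and, if_true]
      rw [Finset.sum_eq_single (⟨gr (tw σ e), gr_reg he⟩ : OmegaB n d)]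
      · simp only [if_true]
        split_ifs with hs
        · rfl
        · by_cases hne : gr (tw σ e) = gr σ
          · rw [hne, hF0]
          · exact absurd (gr_tw_cases hσ he hne).1 hs
      · intro b _ hb
        rw [if_neg]
        intro h
        exact hb (Subtype.ext h.symm)
      · simp
    · simp [he]
  simp only [step]
  rw [Finset.sum_comm, Finset.mul_sum]
  refine Finset.sum_le_sum fun G' _ => ?_
  rw [← Finset.sum_filter, Finset.sum_const, nsmul_eq_mul]
  split_ifs with hs
  · refine mul_le_mul_of_nonneg_right ?_ (hF A G')
    have hne : G'.1 ≠ gr σ := by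
      obtain ⟨i₁, i₂, j₁, j₂, h1, h2, b1, b2, b3, b4, b5⟩ := hs
      intro h
      rw [h] at b5
      have := congrFun (congrFun b5 i₁) j₁
      rw [b1] at this
      simp [switchMove] at this
    exact_mod_cast card_reach hσ hne
  · simp

/-- Extension of a function on regular graphs to all graphs. -/
def extG (u : OmegaB n d → ℝ) (A : BG n) : ℝ := if h : IsBipReg n d A then u ⟨A, h⟩ else 1

lemma extG_val (u : OmegaB n d → ℝ) (G : OmegaB n d) : extG u G.1 = u G := by
  simp [extG, G.2]

/-- Poincaré inequality for the switch chain, with the order `n d` of the gap of random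
transpositions. -/
theorem graph_poincare (hd : 2 ≤ d) (hN : 200 * d ^ 6 ≤ n * d) (u : OmegaB n d → ℝ) :
    ∃ c, ∑ G, (u G - c) ^ 2 ≤ Real.exp (5000 * d ^ 6) / (n * d : ℝ) * (4 * d ^ 2 *
      ∑ G : OmegaB n d, ∑ G' : OmegaB n d, if SwitchAdj G.1 G'.1 then (u G - u G') ^ 2 else 0) := by
  obtain ⟨c, hc⟩ := simple_poincare hd hN fun σ => extG u (gr σ)
  refine ⟨c, ?_⟩
  have h1 := sum_simple (d := d) fun A => (extG u A - c) ^ 2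
  have h2 := sum_tw_le_edgeSum (d := d) (fun A B => (extG u A - extG u B) ^ 2)
    (fun _ _ => sq_nonneg _) (fun A => by simp)
  rw [h1] at hc
  have hk := kap_pos n d
  have h3 := hc.trans (mul_le_mul_of_nonneg_left h2 (by positivity))
  rw [mul_left_comm] at h3
  have h4 := le_of_mul_le_mul_left h3 hk
  simpa only [edgeSum, extG_val] using h4

end Descent

/-! ### A defective modified log-Sobolev inequality on subsets of the symmetric group -/

section Defective

variable {I : Type*} [DecidableEq I] [Fintype I]

/-- Sum of `g` over all transposition neighbours. -/
def trSum (g : Equiv.Perm I → ℝ) (σ : Equiv.Perm I) : ℝ := ∑ e : I × I, g (tw σ e)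

lemma sum_trSum (g : Equiv.Perm I → ℝ) :
    ∑ σ, trSum g σ = (Fintype.card I : ℝ) ^ 2 * ∑ σ, g σ := by
  unfold trSum
  rw [sum_tw_reverse (fun _ τ => g τ), Finset.mul_sum]
  refine Finset.sum_congr rfl fun σ _ => ?_
  rw [Finset.sum_const, nsmul_eq_mul, Finset.card_univ, Fintype.card_prod]
  push_cast
  ring

/-- Every nonnegative function `g` admits a correction `h` of small total mass such that `g + h`
changes by at most a polynomial factor along each transposition: `h` is the tail of the Neumann
series of the transposition walk, damped by `N ^ 4`, with `N` the number of positions. -/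
lemma exists_tail (hN : 2 ≤ Fintype.card I) (g : Equiv.Perm I → ℝ) (hg : ∀ σ, 0 ≤ g σ) :
    ∃ h : Equiv.Perm I → ℝ, (∀ σ, 0 ≤ h σ) ∧
      (∀ σ e, g (tw σ e) + h (tw σ e) ≤ (Fintype.card I : ℝ) ^ 4 * h σ) ∧
      ∑ σ, h σ ≤ 2 / (Fintype.card I : ℝ) ^ 2 * ∑ σ, g σ := by
  have hN' : (2 : ℝ) ≤ Fintype.card I := by exact_mod_cast hN
  set N : ℝ := (Fintype.card I : ℝ) with hNdef
  set m := ∑ σ, g σ with hm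
  have hm0 : 0 ≤ m := Finset.sum_nonneg fun σ _ => hg σ
  set r : ℝ := 1 / N ^ 2 with hr
  have hN2 : 4 ≤ N ^ 2 := by nlinarith
  have hr0 : 0 ≤ r := by positivity
  have hr1 : r ≤ 1 / 4 := by
    rw [hr]
    exact one_div_le_one_div_of_le (by norm_num) hN2
  -- Each term has `1 / N ^ 2` times the mass of the previous one, as `trSum` sums `N ^ 2` values.
  let a : ℕ → Equiv.Perm I → ℝ := fun k => (fun f σ => trSum f σ / N ^ 4)^[k] g
  have a_succ : ∀ k σ, a (k + 1) σ = trSum (a k) σ / N ^ 4 := by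
    intro k σ
    simp only [a, Function.iterate_succ_apply']
  have a_nn : ∀ k σ, 0 ≤ a k σ := by
    intro k
    induction k with
    | zero => exact hg
    | succ k ih =>
      intro σ
      rw [a_succ]
      exact div_nonneg (Finset.sum_nonneg fun e _ => ih _) (by positivity)
  have a_sum : ∀ k, ∑ σ, a k σ = m * r ^ k := by
    intro k
    induction k with
    | zero => simp [a, hm]
    | succ k ih =>
      simp only [a_succ]
      rw [← Finset.sum_div, sum_trSum, ih, ← hNdef]
      have hrN : r * N ^ 2 = 1 := by
        rw [hr]
        field_simp
      rw [div_eq_iff (by positivity)]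
      linear_combination (-(m * r ^ k * N ^ 2)) * hrN
  have a_le : ∀ k σ, a k σ ≤ m * r ^ k := fun k σ => by
    rw [← a_sum k]
    exact Finset.single_le_sum (fun τ _ => a_nn k τ) (Finset.mem_univ σ)
  have hgeo : Summable fun k : ℕ => m * r ^ k :=
    (summable_geometric_of_lt_one hr0 (by linarith)).mul_left m
  have hs : ∀ σ, Summable fun k => a k σ := fun σ =>
    Summable.of_nonneg_of_le (fun k => a_nn k σ) (fun k => a_le k σ) hgeo
  have hs1 : ∀ σ, Summable fun k => a (k + 1) σ := fun σ => (summable_nat_add_iff 1).2 (hs σ)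
  have hgh : ∀ σ, g σ + ∑' k, a (k + 1) σ = ∑' k, a k σ := fun σ => by
    rw [(hs σ).tsum_eq_zero_add]
    rfl
  refine ⟨fun σ => ∑' k, a (k + 1) σ, fun σ => tsum_nonneg fun k => a_nn _ _, ?_, ?_⟩
  · intro σ e
    rw [hgh, ← tsum_mul_left]
    refine (hs _).tsum_le_tsum (fun k => ?_) ((hs1 σ).mul_left _)
    rw [a_succ, mul_div_cancel₀ _ (by positivity)]
    exact Finset.single_le_sum (f := fun e => a k (tw σ e)) (fun e _ => a_nn _ _)
      (Finset.mem_univ e)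
  · rw [← Summable.tsum_finsetSum fun σ _ => hs1 σ]
    simp only [a_sum]
    have : ∑' k : ℕ, m * r ^ (k + 1) = m * r * (1 - r)⁻¹ := by
      rw [← tsum_geometric_of_lt_one hr0 (by linarith), ← tsum_mul_left]
      exact tsum_congr fun k => by ring
    rw [this, mul_assoc, mul_comm m]
    refine mul_le_mul_of_nonneg_right ?_ hm0
    rw [← div_eq_mul_inv, div_le_iff₀ (by linarith)]
    have : 2 / N ^ 2 = 2 * r := by rw [hr]; ring
    rw [this]
    nlinarith

lemma phi_le_of_ratio {x y M s : ℝ} (hx : 0 < x) (hy : 0 < y) (hM : 1 ≤ M) (h1 : x ≤ M * y)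
    (h2 : y ≤ M * x) (hs : x + y ≤ s) : phi x y ≤ s * Real.log M := by
  have hM0 : 0 < M := by linarith
  have l1 := Real.log_le_log hx h1
  have l2 := Real.log_le_log hy h2
  rw [Real.log_mul hM0.ne' hy.ne'] at l1
  rw [Real.log_mul hM0.ne' hx.ne'] at l2
  have hl := Real.log_nonneg hM
  have h3 : (x + y) * Real.log M ≤ s * Real.log M := mul_le_mul_of_nonneg_right hs hl
  refine le_trans ?_ h3
  unfold phi
  rcases le_total x y with h | h
  · nlinarith
  · nlinarith

/-- The entropy of `g` on `S` is at most the entropy of `g + h` on the whole group, up to an error of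
the order of the total mass. -/
lemma entropy_lower {S : Finset (Equiv.Perm I)} {g h : Equiv.Perm I → ℝ} (hS : S.Nonempty)
    (hgS : ∀ σ ∈ S, 0 < g σ) (hg0 : ∀ σ ∉ S, g σ = 0) (hh : ∀ σ, 0 < h σ)
    (hH : ∑ σ, h σ ≤ ∑ σ, g σ) :
    ∑ σ ∈ S, g σ * Real.log (g σ) - (∑ σ ∈ S, g σ) * Real.log ((∑ σ ∈ S, g σ) / S.card) ≤
      (∑ σ, (g σ + h σ) * Real.log (g σ + h σ) - (∑ σ, (g σ + h σ)) *
        Real.log ((∑ σ, (g σ + h σ)) / Fintype.card (Equiv.Perm I))) + 2 * ∑ σ, g σ := by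
  have hgs : ∑ σ, g σ = ∑ σ ∈ S, g σ :=
    (Finset.sum_subset (Finset.subset_univ S) fun σ _ h => hg0 σ h).symm
  have hm : 0 < ∑ σ ∈ S, g σ := Finset.sum_pos hgS hS
  have hHpos : 0 < ∑ σ, h σ := Finset.sum_pos (fun σ _ => hh σ) Finset.univ_nonempty
  rw [hgs] at hH
  rw [Finset.sum_add_distrib, hgs]
  have hX : (0 : ℝ) < Fintype.card (Equiv.Perm I) := by exact_mod_cast Fintype.card_pos
  have hSc : (0 : ℝ) < S.card := by exact_mod_cast hS.card_pos
  have hSX : (S.card : ℝ) ≤ Fintype.card (Equiv.Perm I) := by exact_mod_cast Finset.card_le_univ S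
  set m := ∑ σ ∈ S, g σ
  set H := ∑ σ, h σ with hHdef
  set X : ℝ := (Fintype.card (Equiv.Perm I) : ℝ) with hXdef
  -- Jensen's inequality for `h`, from the tangent line of `x log x` at the mean.
  have j1 : H * Real.log (H / X) ≤ ∑ σ, h σ * Real.log (h σ) := by
    have hc : 0 < H / X := by positivity
    have : ∀ σ, h σ * Real.log (H / X) + h σ - H / X ≤ h σ * Real.log (h σ) := by
      intro σ
      have := Real.log_le_sub_one_of_pos (x := (H / X) / h σ) (div_pos hc (hh σ))
      rw [Real.log_div hc.ne' (hh σ).ne'] at this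
      have h2 := mul_le_mul_of_nonneg_left this (hh σ).le
      have h3 : h σ * (H / X / h σ - 1) = H / X - h σ := by
        have := (hh σ).ne'
        field_simp
      rw [h3] at h2
      linarith
    have h4 := Finset.sum_le_sum fun σ (_ : σ ∈ (univ : Finset (Equiv.Perm I))) => this σ
    rw [Finset.sum_sub_distrib, Finset.sum_add_distrib, ← Finset.sum_mul, ← hHdef,
      Finset.sum_const, Finset.card_univ, nsmul_eq_mul, ← hXdef, mul_div_cancel₀ _ hX.ne'] at h4
    linarith
  have j2 : ∑ σ ∈ S, g σ * Real.log (g σ) + ∑ σ, h σ * Real.log (h σ) ≤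
      ∑ σ, (g σ + h σ) * Real.log (g σ + h σ) := by
    have : ∑ σ ∈ S, g σ * Real.log (g σ) = ∑ σ, g σ * Real.log (g σ) :=
      Finset.sum_subset (Finset.subset_univ S) fun σ _ h => by rw [hg0 σ h, zero_mul]
    rw [this, ← Finset.sum_add_distrib]
    refine Finset.sum_le_sum fun σ _ => ?_
    by_cases hσ : σ ∈ S
    · have a1 := Real.log_le_log (hgS σ hσ) (show g σ ≤ g σ + h σ by linarith [hh σ])
      have a2 := Real.log_le_log (hh σ) (show h σ ≤ g σ + h σ by linarith [hgS σ hσ])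
      have b1 := mul_le_mul_of_nonneg_left a1 (hgS σ hσ).le
      have b2 := mul_le_mul_of_nonneg_left a2 (hh σ).le
      linarith
    · rw [hg0 σ hσ]
      simp
  have hF : 0 < m + H := by linarith
  have c1 : m * Real.log ((m + H) / m) ≤ H := by
    have := Real.log_le_sub_one_of_pos (x := (m + H) / m) (by positivity)
    have h2 := mul_le_mul_of_nonneg_left this hm.le
    have h3 : m * ((m + H) / m - 1) = H := by field_simp; ring
    linarith
  have c2 : H * Real.log ((m + H) / H) ≤ m := by
    have := Real.log_le_sub_one_of_pos (x := (m + H) / H) (by positivity)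
    have h2 := mul_le_mul_of_nonneg_left this hHpos.le
    have h3 : H * ((m + H) / H - 1) = m := by field_simp; ring
    linarith
  have c3 : m * Real.log S.card ≤ m * Real.log X :=
    mul_le_mul_of_nonneg_left (Real.log_le_log hSc hSX) hm.le
  rw [Real.log_div hF.ne' hm.ne'] at c1
  rw [Real.log_div hF.ne' hHpos.ne'] at c2
  rw [Real.log_div hHpos.ne' hX.ne'] at j1
  rw [Real.log_div hm.ne' hSc.ne', Real.log_div hF.ne' hX.ne']
  simp only [mul_sub, add_mul] at *
  linarith

/-- Modified log-Sobolev inequality, with an additive defect, for the transpositions which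
preserve a set `S` that few transpositions leave: apply the inequality of the whole group to the
extension `g + h` of `f`, where `h` is small and the edges which leave `S` contribute at most a
logarithmic factor times the mass. -/
theorem defective_mlsi {S : Finset (Equiv.Perm I)} (hS : S.Nonempty) {L : ℝ}
    (hL : ∀ σ ∈ S, ((univ.filter fun e => tw σ e ∉ S).card : ℝ) ≤ L)
    (hN : 2 ≤ Fintype.card I) (f : Equiv.Perm I → ℝ) (hf : ∀ σ ∈ S, 0 < f σ) :
    ∑ σ ∈ S, f σ * Real.log (f σ) - (∑ σ ∈ S, f σ) * Real.log ((∑ σ ∈ S, f σ) / S.card) ≤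
      1 / (2 * Fintype.card I : ℝ) * ((∑ σ, ∑ e, if σ ∈ S ∧ tw σ e ∈ S then
        phi (f σ) (f (tw σ e)) else 0) +
        4 * Real.log (Fintype.card I) * ((4 + 2 * L) * ∑ σ ∈ S, f σ)) + 2 * ∑ σ ∈ S, f σ := by
  let g : Equiv.Perm I → ℝ := fun σ => if σ ∈ S then f σ else 0
  have gS : ∀ σ ∈ S, g σ = f σ := fun σ h => by simp [g, h]
  have g0 : ∀ σ ∉ S, g σ = 0 := fun σ h => by simp [g, h]
  have gnn : ∀ σ, 0 ≤ g σ := fun σ => by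
    by_cases h : σ ∈ S
    · rw [gS σ h]; exact (hf σ h).le
    · rw [g0 σ h]
  obtain ⟨h, hnn, hadj, hsum⟩ := exists_tail hN g gnn
  have hN' : (2 : ℝ) ≤ Fintype.card I := by exact_mod_cast hN
  set N : ℝ := (Fintype.card I : ℝ) with hNdef
  have hN4 : 0 < N ^ 4 := by positivity
  have hN41 : 1 ≤ N ^ 4 := one_le_pow₀ (by linarith)
  -- `h` is positive because transpositions connect all permutations.
  have hpos : ∀ σ, 0 < h σ := by
    obtain ⟨σ₀, h₀⟩ := hS
    have base : ∀ e, 0 < h (tw σ₀ e) := fun e => by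
      have h1 := hadj (tw σ₀ e) e
      rw [tw_tw, gS σ₀ h₀] at h1
      have := hf σ₀ h₀
      have := hnn σ₀
      exact pos_of_mul_pos_right (a := N ^ 4) (by linarith) hN4.le
    have key : ∀ π : Equiv.Perm I, 0 < h (σ₀ * π) := by
      intro π
      refine Equiv.Perm.swap_induction_on' π ?_ ?_
      · have : Nonempty I := Fintype.card_pos_iff.1 (by omega)
        obtain ⟨x⟩ := this
        have h1 := base (x, x)
        have h2 : tw σ₀ (x, x) = σ₀ * 1 := by
          have : Equiv.swap x x = (1 : Equiv.Perm I) := Equiv.swap_self x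
          simp only [tw, this]
        rwa [h2] at h1
      · intro π x y _ hπ
        have h1 := hadj (σ₀ * (π * Equiv.swap x y)) (x, y)
        have h2 : tw (σ₀ * (π * Equiv.swap x y)) (x, y) = σ₀ * π := by
          simp [tw, mul_assoc]
        rw [h2] at h1
        have := gnn (σ₀ * π)
        exact pos_of_mul_pos_right (a := N ^ 4) (by linarith) hN4.le
    intro σ
    have := key (σ₀⁻¹ * σ)
    rwa [mul_inv_cancel_left] at this
  have hm0 : 0 ≤ ∑ σ, g σ := Finset.sum_nonneg fun σ _ => gnn σ
  have hH : ∑ σ, h σ ≤ ∑ σ, g σ := by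
    refine hsum.trans ?_
    have : 2 / N ^ 2 ≤ 1 := by
      rw [div_le_one (by positivity)]
      nlinarith
    calc _ ≤ 1 * ∑ σ, g σ := mul_le_mul_of_nonneg_right this hm0
      _ = _ := one_mul _
  have hgs : ∑ σ, g σ = ∑ σ ∈ S, f σ := by
    rw [← Finset.sum_subset (Finset.subset_univ S) fun σ _ h => g0 σ h]
    exact Finset.sum_congr rfl gS
  have hlow := entropy_lower hS (fun σ hσ => by rw [gS σ hσ]; exact hf σ hσ) g0 hpos hH
  have hup := perm_mlsi (fun σ => g σ + h σ) (fun σ => by linarith [gnn σ, hpos σ])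
  have e1 : ∑ σ ∈ S, g σ * Real.log (g σ) = ∑ σ ∈ S, f σ * Real.log (f σ) :=
    Finset.sum_congr rfl fun σ hσ => by rw [gS σ hσ]
  have e2 : ∑ σ ∈ S, g σ = ∑ σ ∈ S, f σ := Finset.sum_congr rfl gS
  rw [e1, e2, hgs] at hlow
  have hlog4 : Real.log (N ^ 4) = 4 * Real.log N := by
    rw [Real.log_pow]
    norm_num
  have hlog0 : 0 ≤ Real.log (N ^ 4) := Real.log_nonneg hN41
  have pw : ∀ σ e, phi (g σ + h σ) (g (tw σ e) + h (tw σ e)) ≤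
      (if σ ∈ S ∧ tw σ e ∈ S then phi (f σ) (f (tw σ e)) else 0) +
      Real.log (N ^ 4) * (h σ + h (tw σ e) + (if tw σ e ∉ S then g σ else 0) +
        (if σ ∉ S then g (tw σ e) else 0)) := by
    intro σ e
    have r1 := hadj σ e
    have r2 := hadj (tw σ e) e
    rw [tw_tw] at r2
    have p1 := hpos σ
    have p2 := hpos (tw σ e)
    have q1 := gnn σ
    have q2 := gnn (tw σ e)
    have m1 : N ^ 4 * h σ ≤ N ^ 4 * (g σ + h σ) :=
      mul_le_mul_of_nonneg_left (by linarith) hN4.le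
    have m2 : N ^ 4 * h (tw σ e) ≤ N ^ 4 * (g (tw σ e) + h (tw σ e)) :=
      mul_le_mul_of_nonneg_left (by linarith) hN4.le
    by_cases a : σ ∈ S ∧ tw σ e ∈ S
    · simp only [a, and_self, if_true, not_true, if_false, add_zero]
      rw [gS σ a.1, gS _ a.2]
      refine (phi_add_le (hf σ a.1) (hf _ a.2) p1 p2).trans (add_le_add_right ?_ _)
      rw [mul_comm]
      exact phi_le_of_ratio p1 p2 hN41 (by linarith) (by linarith) le_rfl
    · rw [if_neg a, zero_add, mul_comm]
      refine phi_le_of_ratio (by linarith) (by linarith) hN41 (by linarith) (by linarith) ?_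
      rcases not_and_or.1 a with b | b
      · rw [g0 σ b, if_pos b]
        split_ifs <;> linarith
      · rw [g0 _ b, if_pos b]
        split_ifs <;> linarith
  have t1 : ∑ σ, ∑ e : I × I, h σ = N ^ 2 * ∑ σ, h σ := by
    rw [Finset.mul_sum]
    refine Finset.sum_congr rfl fun σ _ => ?_
    rw [Finset.sum_const, nsmul_eq_mul, Finset.card_univ, Fintype.card_prod, hNdef]
    push_cast
    ring
  have t2 : ∑ σ, ∑ e : I × I, h (tw σ e) = N ^ 2 * ∑ σ, h σ := sum_trSum h
  have t3 : ∑ σ, ∑ e : I × I, (if tw σ e ∉ S then g σ else 0) ≤ L * ∑ σ, g σ := by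
    rw [Finset.mul_sum]
    refine Finset.sum_le_sum fun σ _ => ?_
    rw [← Finset.sum_filter, Finset.sum_const, nsmul_eq_mul]
    by_cases hσ : σ ∈ S
    · exact mul_le_mul_of_nonneg_right (hL σ hσ) (gnn σ)
    · rw [g0 σ hσ, mul_zero, mul_zero]
  have t4 : ∑ σ, ∑ e : I × I, (if σ ∉ S then g (tw σ e) else 0) ≤ L * ∑ σ, g σ := by
    rw [sum_tw_reverse (fun σ τ => if σ ∉ S then g τ else 0)]
    exact t3
  have hlogsum : ∑ σ, ∑ e, phi (g σ + h σ) (g (tw σ e) + h (tw σ e)) ≤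
      (∑ σ, ∑ e, if σ ∈ S ∧ tw σ e ∈ S then phi (f σ) (f (tw σ e)) else 0) +
        4 * Real.log N * ((4 + 2 * L) * ∑ σ ∈ S, f σ) := by
    refine (Finset.sum_le_sum fun σ _ => Finset.sum_le_sum fun e _ => pw σ e).trans ?_
    simp only [Finset.sum_add_distrib, ← Finset.mul_sum]
    refine add_le_add_right ?_ _
    rw [t1, t2, hlog4]
    rw [hlog4] at hlog0
    refine mul_le_mul_of_nonneg_left ?_ hlog0
    have t5 : N ^ 2 * ∑ σ, h σ ≤ 2 * ∑ σ, g σ := by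
      have := mul_le_mul_of_nonneg_left hsum (show 0 ≤ N ^ 2 by positivity)
      rwa [← mul_assoc, mul_div_cancel₀ _ (by positivity)] at this
    rw [← hgs]
    linarith
  have e3 : ∑ σ, ∑ a, ∑ b, phi (g σ + h σ) (g (σ * Equiv.swap a b) + h (σ * Equiv.swap a b)) =
      ∑ σ, ∑ e, phi (g σ + h σ) (g (tw σ e) + h (tw σ e)) := by
    refine Finset.sum_congr rfl fun σ _ => ?_
    rw [Fintype.sum_prod_type]
    rfl
  rw [e3] at hup
  have h6 := mul_le_mul_of_nonneg_left hlogsum (show 0 ≤ 1 / (2 * N) by positivity)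
  linarith

end Defective

section GraphMLSI

variable {n d : ℕ}

/-- Defective modified log-Sobolev inequality for the switch chain. -/
theorem graph_mlsi (hnd : 3 ≤ n * d) [Nonempty (OmegaB n d)] (u : OmegaB n d → ℝ)
    (hu : ∀ G, 0 < u G) :
    ∑ G, u G * Real.log (u G) - (∑ G, u G) * Real.log ((∑ G, u G) / Fintype.card (OmegaB n d)) ≤
      2 * d ^ 2 / (n * d : ℝ) * (∑ G : OmegaB n d, ∑ G' : OmegaB n d,
        if SwitchAdj G.1 G'.1 then phi (u G) (u G') else 0) +
      (8 * d ^ 2 + 8) * Real.log (n * d) * ∑ G, u G := by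
  have hcard : Fintype.card (Slot n d) = n * d := by simp
  have hk := kap_pos n d
  have s0 := sum_simple (d := d) fun _ : BG n => (1 : ℝ)
  have s1 := sum_simple (d := d) fun A : BG n => extG u A * Real.log (extG u A)
  have s2 := sum_simple (d := d) fun A : BG n => extG u A
  have s3 := sum_tw_le_edgeSum (d := d) (fun A B : BG n => phi (extG u A) (extG u B))
    (fun G G' => by rw [extG_val, extG_val]; exact phi_nonneg (hu G) (hu G'))
    (fun A => by simp [phi])
  simp only [edgeSum, extG_val, Finset.sum_const, nsmul_eq_mul, mul_one, Finset.card_univ]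
    at s0 s1 s2 s3
  have hO : (0 : ℝ) < Fintype.card (OmegaB n d) := by exact_mod_cast Fintype.card_pos
  have hSne : (simpleP n d).Nonempty := by
    rw [← Finset.card_pos]
    have : (0 : ℝ) < ((simpleP n d).card : ℝ) := by
      rw [s0]
      positivity
    exact_mod_cast this
  have h := defective_mlsi hSne (L := (n * (2 * d ^ 3) : ℕ))
    (fun σ hσ => by exact_mod_cast card_leave_simple hσ) (by rw [hcard]; omega)
    (fun σ => extG u (gr σ))
    (fun σ hσ => by
      have := hu ⟨gr σ, gr_reg hσ⟩
      rwa [← extG_val u] at this)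
  rw [s0, s1, s2, hcard] at h
  have hnd' : (3 : ℝ) ≤ (n * d : ℝ) := by exact_mod_cast hnd
  have hlog : 1 ≤ Real.log (n * d) := by
    rw [Real.le_log_iff_exp_le (by linarith)]
    have := Real.exp_one_lt_d9
    linarith
  have h2 := mul_le_mul_of_nonneg_left (add_le_add_left s3
    (4 * Real.log ((n * d : ℕ) : ℝ) * ((4 + 2 * ((n * (2 * d ^ 3) : ℕ) : ℝ)) *
      (kap n d * ∑ G, u G)))) (show 0 ≤ 1 / (2 * ((n * d : ℕ) : ℝ)) by positivity)
  have h3 := h.trans (add_le_add_left h2 _)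
  rw [mul_div_mul_left _ _ hk.ne'] at h3
  set m := ∑ G, u G
  have hm : 0 < m := Finset.sum_pos (fun G _ => hu G) Finset.univ_nonempty
  set E := ∑ G : OmegaB n d, ∑ G' : OmegaB n d, if SwitchAdj G.1 G'.1 then phi (u G) (u G') else 0
  push_cast at h3
  set l := Real.log (n * d : ℝ)
  have hN0 : (0 : ℝ) < n * d := by linarith
  refine le_of_mul_le_mul_left (a := kap n d) ?_ hk
  refine le_trans (le_of_eq (by ring)) (h3.trans ?_)
  have e : 1 / (2 * (n * d : ℝ)) * (kap n d * (4 * d ^ 2 * E) +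
      4 * l * ((4 + 2 * (n * (2 * d ^ 3))) * (kap n d * m))) + 2 * (kap n d * m) =
      kap n d * (2 * d ^ 2 / (n * d : ℝ) * E + ((8 / (n * d : ℝ) + 8 * d ^ 2) * l + 2) * m) := by
    have hn0 : (n : ℝ) ≠ 0 := left_ne_zero_of_mul hN0.ne'
    have hd0 : (d : ℝ) ≠ 0 := right_ne_zero_of_mul hN0.ne'
    field_simp
    ring
  rw [e]
  refine mul_le_mul_of_nonneg_left (add_le_add_right (mul_le_mul_of_nonneg_right ?_ hm.le) _) hk.le
  have : 8 / (n * d : ℝ) ≤ 3 := by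
    rw [div_le_iff₀ hN0]
    linarith
  nlinarith

end GraphMLSI

/-! ### The semigroup generated by a symmetric generator -/

section Semigroup

variable {Ω : Type*} [Fintype Ω] [DecidableEq Ω]

/-- Matrices as bounded operators; this transports the exponential to a normed algebra. -/
def opE : Matrix Ω Ω ℝ →ₐ[ℝ] ((Ω → ℝ) →L[ℝ] (Ω → ℝ)) :=
  (Module.End.toContinuousLinearMap (𝕜 := ℝ) (Ω → ℝ)).toAlgHom.comp
    (Matrix.toLinAlgEquiv' (R := ℝ)).toAlgHom

lemma opE_apply (A : Matrix Ω Ω ℝ) (v : Ω → ℝ) : opE A v = A.mulVec v := rfl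

/-- The series defining `matExp` converges entrywise, so that `matExp` is the exponential of the
associated operator. -/
lemma matExp_spec (A : Matrix Ω Ω ℝ) :
    (∀ ω ω', HasSum (fun k : ℕ => ((k.factorial : ℝ)⁻¹) * (A ^ k) ω ω') (matExp A ω ω')) ∧
      opE (matExp A) = NormedSpace.exp (opE A) := by
  have h := NormedSpace.exp_series_hasSum_exp' (𝕂 := ℝ) (opE A)
  have h1 : ∀ (v : Ω → ℝ) ω, HasSum (fun k : ℕ => ((k.factorial : ℝ)⁻¹) * (A ^ k).mulVec v ω)
      (NormedSpace.exp (opE A) v ω) := fun v ω => by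
    have h2 := h.mapL ((ContinuousLinearMap.proj (R := ℝ) (φ := fun _ : Ω => ℝ) ω).comp
      (ContinuousLinearMap.apply ℝ (Ω → ℝ) v))
    convert h2 using 2 with k
    · simp [← map_pow, opE_apply]
    · rfl
  have h2 : ∀ ω ω', HasSum (fun k : ℕ => ((k.factorial : ℝ)⁻¹) * (A ^ k) ω ω')
      (NormedSpace.exp (opE A) (Pi.single ω' 1) ω) := fun ω ω' => by
    simpa using h1 (Pi.single ω' 1) ω
  have h3 : HasSum (fun k : ℕ => ((k.factorial : ℝ)⁻¹) • A ^ k)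
      (Matrix.of fun ω ω' => NormedSpace.exp (opE A) (Pi.single ω' 1) ω) :=
    Pi.hasSum.2 fun ω => Pi.hasSum.2 fun ω' => h2 ω ω'
  have h4 : matExp A = _ := h3.tsum_eq
  rw [h4]
  refine ⟨h2, ?_⟩
  refine ContinuousLinearMap.coe_injective (LinearMap.pi_ext' fun ω' => LinearMap.ext_ring ?_)
  ext ω
  simp [opE_apply]

/-- The action `P_t u = exp (t Q) u` of the semigroup on functions. -/
def semi (Q : Matrix Ω Ω ℝ) (t : ℝ) (u : Ω → ℝ) : Ω → ℝ := (matExp (t • Q)).mulVec u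

lemma semi_hasDerivAt (Q : Matrix Ω Ω ℝ) (u : Ω → ℝ) (t : ℝ) (ω : Ω) :
    HasDerivAt (fun t => semi Q t u ω) (Q.mulVec (semi Q t u) ω) t := by
  have h := hasDerivAt_exp_smul_const' (𝕂 := ℝ) (opE Q) t
  have h1 := (((ContinuousLinearMap.proj (R := ℝ) (φ := fun _ : Ω => ℝ) ω).comp
      (ContinuousLinearMap.apply ℝ (Ω → ℝ) u)).hasFDerivAt).comp_hasDerivAt t h
  simp only [← map_smul, ← (matExp_spec _).2] at h1
  rw [← map_mul] at h1
  simp only [semi, Matrix.mulVec_mulVec]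
  exact h1

lemma matExp_add (A B : Matrix Ω Ω ℝ) (h : Commute A B) (u : Ω → ℝ) :
    (matExp (A + B)).mulVec u = (matExp A).mulVec ((matExp B).mulVec u) := by
  let _ := NormedAlgebra.restrictScalars ℚ ℝ ((Ω → ℝ) →L[ℝ] (Ω → ℝ))
  have h1 := NormedSpace.exp_add_of_commute (𝔸 := (Ω → ℝ) →L[ℝ] (Ω → ℝ)) (h.map opE)
  rw [← map_add, ← (matExp_spec _).2, ← (matExp_spec _).2, ← (matExp_spec _).2, ← map_mul] at h1
  have := DFunLike.congr_fun h1 u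
  rw [opE_apply, opE_apply, ← Matrix.mulVec_mulVec] at this
  rw [this, Matrix.mulVec_mulVec]

lemma matExp_scalar (c : ℝ) (u : Ω → ℝ) :
    (matExp (c • (1 : Matrix Ω Ω ℝ))).mulVec u = Real.exp c • u := by
  rw [← opE_apply, (matExp_spec _).2, map_smul, map_one, ← Algebra.algebraMap_eq_smul_one,
    ← NormedSpace.algebraMap_exp_comm, ← Real.exp_eq_exp_ℝ, Algebra.algebraMap_eq_smul_one]
  rfl

lemma semi_zero (Q : Matrix Ω Ω ℝ) (u : Ω → ℝ) : semi Q 0 u = u := by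
  have := matExp_scalar 0 u
  rw [semi, zero_smul]
  rwa [zero_smul, Real.exp_zero, one_smul] at this

lemma semi_add (Q : Matrix Ω Ω ℝ) (s t : ℝ) (u : Ω → ℝ) :
    semi Q (s + t) u = semi Q s (semi Q t u) := by
  rw [semi, add_smul, matExp_add _ _ (((Commute.refl Q).smul_left s).smul_right t)]
  rfl

lemma semi_sub (Q : Matrix Ω Ω ℝ) (t : ℝ) (u v : Ω → ℝ) (ω : Ω) :
    semi Q t (fun x => u x - v x) ω = semi Q t u ω - semi Q t v ω := by
  have := congrFun (Matrix.mulVec_sub (matExp (t • Q)) u v) ω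
  exact this

/-- Symmetric generators of continuous-time Markov chains. -/
structure IsGen (Q : Matrix Ω Ω ℝ) : Prop where
  symm : ∀ x y, Q x y = Q y x
  off : ∀ x y, x ≠ y → 0 ≤ Q x y
  row : ∀ x, ∑ y, Q x y = 0

variable {Q : Matrix Ω Ω ℝ}

lemma matExp_symm (hQ : IsGen Q) (t : ℝ) (x y : Ω) : matExp (t • Q) x y = matExp (t • Q) y x := by
  refine ((matExp_spec (t • Q)).1 x y).unique ?_
  convert (matExp_spec (t • Q)).1 y x using 3 with k
  have : (t • Q).transpose = t • Q := by
    ext i j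
    simp [hQ.symm i j]
  rw [← Matrix.transpose_apply ((t • Q) ^ k), Matrix.transpose_pow, this]

lemma semi_nonneg (hQ : IsGen Q) {t : ℝ} (ht : 0 ≤ t) {u : Ω → ℝ} (hu : ∀ x, 0 ≤ u x) (x : Ω) :
    0 ≤ semi Q t u x := by
  -- Shift the generator by a multiple of the identity, to make all entries nonnegative.
  set l : ℝ := ∑ z, |Q z z| with hl
  have hB : ∀ y z, 0 ≤ (Q + l • (1 : Matrix Ω Ω ℝ)) y z := by
    intro y z
    by_cases h : y = z
    · subst h
      have h1 : |Q y y| ≤ l :=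
        Finset.single_le_sum (f := fun z => |Q z z|) (fun z _ => abs_nonneg _) (Finset.mem_univ y)
      have := neg_abs_le (Q y y)
      simp
      linarith
    · simpa [Matrix.one_apply_ne h] using hQ.off y z h
  have hBk : ∀ (k : ℕ) y z, 0 ≤ ((t • (Q + l • (1 : Matrix Ω Ω ℝ))) ^ k) y z := by
    intro k
    induction k with
    | zero =>
      intro y z
      rw [pow_zero, Matrix.one_apply]
      split_ifs <;> norm_num
    | succ k ih =>
      intro y z
      rw [pow_succ, Matrix.mul_apply]
      exact Finset.sum_nonneg fun w _ => mul_nonneg (ih y w) (mul_nonneg ht (hB w z))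
  have hE : ∀ y z, 0 ≤ matExp (t • (Q + l • (1 : Matrix Ω Ω ℝ))) y z := fun y z =>
    ((matExp_spec _).1 y z).nonneg fun k => mul_nonneg (by positivity) (hBk k y z)
  have e : t • Q = (-(t * l)) • (1 : Matrix Ω Ω ℝ) + t • (Q + l • (1 : Matrix Ω Ω ℝ)) := by
    rw [smul_add, smul_smul, neg_smul]
    abel
  rw [semi, e, matExp_add _ _ ((Commute.one_left _).smul_left _), matExp_scalar, Pi.smul_apply,
    smul_eq_mul]
  exact mul_nonneg (Real.exp_pos _).le
    (Finset.sum_nonneg fun z _ => mul_nonneg (hE x z) (hu z))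

/-- Integration by parts. -/
lemma sum_mul_gen (hQ : IsGen Q) (g v : Ω → ℝ) :
    ∑ x, g x * Q.mulVec v x = -(1 / 2) * ∑ x, ∑ y, Q x y * ((g x - g y) * (v x - v y)) := by
  have h1 : ∑ x, ∑ y, Q x y * (g x * v x) = 0 :=
    Finset.sum_eq_zero fun x _ => by rw [← Finset.sum_mul, hQ.row, zero_mul]
  have h2 : ∑ x, ∑ y, Q x y * (g y * v y) = 0 := by
    rw [Finset.sum_comm]
    refine Finset.sum_eq_zero fun x _ => ?_
    simp only [hQ.symm _ x]
    rw [← Finset.sum_mul, hQ.row, zero_mul]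
  have h3 : ∑ x, ∑ y, Q x y * (g x * v y) = ∑ x, g x * Q.mulVec v x := by
    refine Finset.sum_congr rfl fun x _ => ?_
    rw [Matrix.mulVec, dotProduct, Finset.mul_sum]
    exact Finset.sum_congr rfl fun y _ => by ring
  have h4 : ∑ x, ∑ y, Q x y * (g y * v x) = ∑ x, g x * Q.mulVec v x := by
    rw [← h3, Finset.sum_comm]
    exact Finset.sum_congr rfl fun x _ => Finset.sum_congr rfl fun y _ => by rw [hQ.symm]
  have : ∑ x, ∑ y, Q x y * ((g x - g y) * (v x - v y)) =
      ∑ x, ∑ y, Q x y * (g x * v x) + ∑ x, ∑ y, Q x y * (g y * v y) -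
      ∑ x, ∑ y, Q x y * (g x * v y) - ∑ x, ∑ y, Q x y * (g y * v x) := by
    simp only [← Finset.sum_add_distrib, ← Finset.sum_sub_distrib]
    exact Finset.sum_congr rfl fun x _ => Finset.sum_congr rfl fun y _ => by ring
  rw [this, h1, h2, h3, h4]
  ring

lemma sum_gen (hQ : IsGen Q) (v : Ω → ℝ) : ∑ x, Q.mulVec v x = 0 := by
  simpa using sum_mul_gen hQ (fun _ => 1) v

lemma sum_semi (hQ : IsGen Q) (t : ℝ) (u : Ω → ℝ) : ∑ x, semi Q t u x = ∑ x, u x := by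
  have h : ∀ t, HasDerivAt (fun t => ∑ x, semi Q t u x) 0 t := fun t => by
    have := HasDerivAt.fun_sum fun x (_ : x ∈ (univ : Finset Ω)) => semi_hasDerivAt Q u t x
    rwa [sum_gen hQ] at this
  have h2 := is_const_of_deriv_eq_zero (fun t => (h t).differentiableAt) (fun t => (h t).deriv) t 0
  simpa only [semi_zero] using h2

lemma semi_const (hQ : IsGen Q) (t c : ℝ) (x : Ω) : semi Q t (fun _ => c) x = c := by
  have h := sum_semi hQ t (Pi.single x c)
  simp only [semi, Matrix.mulVec_single, MulOpposite.smul_eq_mul_unop, Matrix.col_apply,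
    Pi.smul_apply, MulOpposite.unop_op, Finset.sum_pi_single', Finset.mem_univ, if_true] at h
  refine Eq.trans (Finset.sum_congr rfl fun y _ => ?_) h
  rw [matExp_symm hQ]

lemma semi_pos (hQ : IsGen Q) {t : ℝ} (ht : 0 ≤ t) {u : Ω → ℝ} (hu : ∀ x, 0 < u x) (x : Ω) :
    0 < semi Q t u x := by
  obtain ⟨y, -, hy⟩ := Finset.exists_min_image univ u ⟨x, Finset.mem_univ x⟩
  have h := semi_nonneg hQ ht (u := fun z => u z - u y)
    (fun z => sub_nonneg.2 (hy z (Finset.mem_univ z))) x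
  rw [semi_sub, semi_const hQ] at h
  linarith [hu y]

lemma sum_abs_semi_le (hQ : IsGen Q) {t : ℝ} (ht : 0 ≤ t) (u : Ω → ℝ) :
    ∑ x, |semi Q t u x| ≤ ∑ x, |u x| := by
  rw [← sum_semi hQ t fun x => |u x|]
  refine Finset.sum_le_sum fun x _ => abs_le'.2 ⟨?_, ?_⟩
  · have := semi_nonneg hQ ht (u := fun x => |u x| - u x) (fun x => sub_nonneg.2 (le_abs_self _)) x
    rw [semi_sub] at this
    linarith
  · have := semi_nonneg hQ ht (u := fun x => |u x| - -u x)
      (fun x => sub_nonneg.2 (neg_le_abs _)) x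
    rw [semi_sub, show (fun x => -u x) = fun x => 0 - u x by simp, semi_sub, semi_const hQ] at this
    linarith

/-- The entropy of `u` relative to the counting measure, normalised to vanish on constants. -/
def entS (u : Ω → ℝ) : ℝ :=
  ∑ x, u x * Real.log (u x) - (∑ x, u x) * Real.log ((∑ x, u x) / Fintype.card Ω)

/-- A defective modified log-Sobolev inequality makes the entropy decay exponentially, down to
the level of the defect. -/
theorem ent_decay (hQ : IsGen Q) {A B : ℝ} (hA : 0 < A)
    (h : ∀ u : Ω → ℝ, (∀ x, 0 < u x) →
      entS u ≤ A * ((1 / 2) * ∑ x, ∑ y, Q x y * phi (u x) (u y)) + B * ∑ x, u x)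
    {u : Ω → ℝ} (hu : ∀ x, 0 < u x) {t : ℝ} (ht : 0 ≤ t) :
    entS (semi Q t u) - B * ∑ x, u x ≤ Real.exp (-(t / A)) * (entS u - B * ∑ x, u x) := by
  have hd : ∀ t, 0 ≤ t → HasDerivAt (fun t => entS (semi Q t u))
      (-((1 / 2) * ∑ x, ∑ y, Q x y * phi (semi Q t u x) (semi Q t u y))) t := by
    intro t ht
    have hp := semi_pos hQ ht hu
    have h1 := HasDerivAt.fun_sum fun x (_ : x ∈ (univ : Finset Ω)) =>
      (semi_hasDerivAt Q u t x).mul ((semi_hasDerivAt Q u t x).log (hp x).ne')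
    have h2 := h1.sub_const ((∑ x, u x) * Real.log ((∑ x, u x) / Fintype.card Ω))
    have e : (fun t => entS (semi Q t u)) = fun t =>
        ∑ x, ((fun t => semi Q t u x) * fun t => Real.log (semi Q t u x)) t -
          (∑ x, u x) * Real.log ((∑ x, u x) / Fintype.card Ω) := by
      funext t
      simp [entS, sum_semi hQ]
    rw [e]
    refine h2.congr_deriv ?_
    have h3 := sum_mul_gen hQ (fun x => Real.log (semi Q t u x)) (semi Q t u)
    have h4 : ∀ x, Q.mulVec (semi Q t u) x * Real.log (semi Q t u x) +
        semi Q t u x * (Q.mulVec (semi Q t u) x / semi Q t u x) =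
        Real.log (semi Q t u x) * Q.mulVec (semi Q t u) x + Q.mulVec (semi Q t u) x := fun x => by
      rw [mul_div_cancel₀ _ (hp x).ne', mul_comm]
    rw [Finset.sum_congr rfl fun x _ => h4 x, Finset.sum_add_distrib, sum_gen hQ, h3, add_zero,
      neg_mul]
    congr 2
    exact Finset.sum_congr rfl fun x _ => Finset.sum_congr rfl fun y _ => by unfold phi; ring
  have hf : ∀ t, 0 ≤ t → HasDerivAt
      (fun t => Real.exp (t / A) * (entS (semi Q t u) - B * ∑ x, u x))
      (Real.exp (t / A) * (1 / A) * (entS (semi Q t u) - B * ∑ x, u x) + Real.exp (t / A) *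
        -((1 / 2) * ∑ x, ∑ y, Q x y * phi (semi Q t u x) (semi Q t u y))) t := fun t ht =>
    (((hasDerivAt_id t).div_const A).exp).mul ((hd t ht).sub_const _)
  have hanti : AntitoneOn (fun t => Real.exp (t / A) * (entS (semi Q t u) - B * ∑ x, u x))
      (Set.Ici 0) := by
    refine antitoneOn_of_deriv_nonpos (convex_Ici 0)
      (fun t ht => (hf t ht).continuousAt.continuousWithinAt)
      (fun t ht => (hf t (interior_subset ht)).differentiableAt.differentiableWithinAt) ?_
    intro t ht
    have ht0 : 0 ≤ t := interior_subset ht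
    rw [(hf t ht0).deriv]
    have h1 := h (semi Q t u) (semi_pos hQ ht0 hu)
    rw [sum_semi hQ] at h1
    set D := (1 / 2) * ∑ x, ∑ y, Q x y * phi (semi Q t u x) (semi Q t u y)
    have h2 : 1 / A * (entS (semi Q t u) - B * ∑ x, u x) ≤ D := by
      rw [one_div, inv_mul_le_iff₀ hA]
      linarith
    have h3 := mul_le_mul_of_nonneg_left h2 (Real.exp_pos (t / A)).le
    linarith
  have h0 := hanti (Set.mem_Ici.2 le_rfl) (Set.mem_Ici.2 ht) ht
  simp only [zero_div, Real.exp_zero, one_mul, semi_zero] at h0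
  rw [Real.exp_neg, ← div_eq_inv_mul, le_div_iff₀ (Real.exp_pos _), mul_comm]
  exact h0

/-- A Poincaré inequality makes the variance decay exponentially. -/
theorem var_decay (hQ : IsGen Q) [Nonempty Ω] {K : ℝ} (hK : 0 < K)
    (h : ∀ u : Ω → ℝ, ∃ c, ∑ x, (u x - c) ^ 2 ≤ K * ((1 / 2) * ∑ x, ∑ y, Q x y * (u x - u y) ^ 2))
    (u : Ω → ℝ) {t : ℝ} (ht : 0 ≤ t) :
    ∑ x, (semi Q t u x - (∑ z, u z) / Fintype.card Ω) ^ 2 ≤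
      Real.exp (-(2 * t / K)) * ∑ x, u x ^ 2 := by
  set m := (∑ z, u z) / Fintype.card Ω with hm
  have hX : (0 : ℝ) < Fintype.card Ω := by exact_mod_cast Fintype.card_pos
  have hmX : Fintype.card Ω * m = ∑ z, u z := by
    rw [hm]
    field_simp
  have expand : ∀ (v : Ω → ℝ) (c : ℝ), ∑ x, (v x - c) ^ 2 =
      ∑ x, v x ^ 2 - 2 * c * ∑ x, v x + Fintype.card Ω * c ^ 2 := by
    intro v c
    simp only [sub_sq, Finset.sum_add_distrib, Finset.sum_sub_distrib, Finset.sum_const,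
      Finset.card_univ, nsmul_eq_mul, Finset.mul_sum]
    congr 2
    exact Finset.sum_congr rfl fun x _ => by ring
  have hd : ∀ t, HasDerivAt (fun t => ∑ x, (semi Q t u x - m) ^ 2)
      (-2 * ((1 / 2) * ∑ x, ∑ y, Q x y * (semi Q t u x - semi Q t u y) ^ 2)) t := by
    intro t
    have h1 := HasDerivAt.fun_sum fun x (_ : x ∈ (univ : Finset Ω)) =>
      ((semi_hasDerivAt Q u t x).sub_const m).fun_pow 2
    refine h1.congr_deriv ?_
    have h3 := sum_mul_gen hQ (fun x => semi Q t u x - m) (semi Q t u)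
    have h4 : ∑ x, (((2 : ℕ) : ℝ) * (semi Q t u x - m) ^ (2 - 1) * Q.mulVec (semi Q t u) x) =
        2 * ∑ x, (semi Q t u x - m) * Q.mulVec (semi Q t u) x := by
      rw [Finset.mul_sum]
      refine Finset.sum_congr rfl fun x _ => ?_
      norm_num
      ring
    rw [h4, h3, neg_mul, mul_neg, neg_mul]
    congr 3
    exact Finset.sum_congr rfl fun x _ => Finset.sum_congr rfl fun y _ => by ring
  have hf : ∀ t, HasDerivAt (fun t => Real.exp (2 * t / K) * ∑ x, (semi Q t u x - m) ^ 2)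
      (Real.exp (2 * t / K) * (2 * 1 / K) * ∑ x, (semi Q t u x - m) ^ 2 + Real.exp (2 * t / K) *
        (-2 * ((1 / 2) * ∑ x, ∑ y, Q x y * (semi Q t u x - semi Q t u y) ^ 2))) t := fun t =>
    ((((hasDerivAt_id t).const_mul 2).div_const K).exp).mul (hd t)
  have hanti : Antitone (fun t => Real.exp (2 * t / K) * ∑ x, (semi Q t u x - m) ^ 2) := by
    refine antitone_of_deriv_nonpos (fun t => (hf t).differentiableAt) fun t => ?_
    rw [(hf t).deriv]
    obtain ⟨c, hc⟩ := h (semi Q t u)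
    have h1 : ∑ x, (semi Q t u x - m) ^ 2 ≤ ∑ x, (semi Q t u x - c) ^ 2 := by
      rw [expand, expand, sum_semi hQ, ← hmX]
      nlinarith [mul_nonneg hX.le (sq_nonneg (m - c))]
    set D := (1 / 2) * ∑ x, ∑ y, Q x y * (semi Q t u x - semi Q t u y) ^ 2
    have h2 : 1 / K * ∑ x, (semi Q t u x - m) ^ 2 ≤ D := by
      rw [one_div, inv_mul_le_iff₀ hK]
      linarith
    have h3 := mul_le_mul_of_nonneg_left h2 (Real.exp_pos (2 * t / K)).le
    have e : Real.exp (2 * t / K) * (2 * 1 / K) * ∑ x, (semi Q t u x - m) ^ 2 =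
      2 * (Real.exp (2 * t / K) * (1 / K * ∑ x, (semi Q t u x - m) ^ 2)) := by ring
    rw [e]
    linarith
  have h0 := hanti ht
  simp only [mul_zero, zero_div, Real.exp_zero, one_mul, semi_zero] at h0
  have h1 : ∑ x, (u x - m) ^ 2 ≤ ∑ x, u x ^ 2 := by
    rw [expand, ← hmX]
    nlinarith [mul_nonneg hX.le (sq_nonneg m)]
  rw [Real.exp_neg, ← div_eq_inv_mul, le_div_iff₀ (Real.exp_pos _), mul_comm]
  exact h0.trans h1

/-- Once the entropy of a density `f` is bounded, the Poincaré inequality brings the chain close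
to equilibrium: truncating `f` at a high level loses little mass, and the truncated function has
bounded variance. -/
theorem l1_of_ent (hQ : IsGen Q) [Nonempty Ω] {K D : ℝ} (hK : 0 < K) (hD : 0 ≤ D)
    (h : ∀ u : Ω → ℝ, ∃ c, ∑ x, (u x - c) ^ 2 ≤ K * ((1 / 2) * ∑ x, ∑ y, Q x y * (u x - u y) ^ 2))
    {f : Ω → ℝ} (hf : ∀ x, 0 < f x) (hf1 : ∑ x, f x = Fintype.card Ω)
    (hent : entS f ≤ D * Fintype.card Ω) {s : ℝ} (hs : K * (16 * (D + 1) + 3) ≤ s) :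
    ∑ x, |semi Q s f x - 1| ≤ (1 / 8) * Fintype.card Ω := by
  set X : ℝ := (Fintype.card Ω : ℝ) with hXdef
  have hX : (0 : ℝ) < X := by
    rw [hXdef]
    exact_mod_cast Fintype.card_pos
  have hs0 : 0 ≤ s := le_trans (by positivity) hs
  rw [entS, hf1, div_self hX.ne', Real.log_one, mul_zero, sub_zero] at hent
  -- At this level the truncation loses mass at most `X / 32`.
  set M := Real.exp (32 * (D + 1)) with hM
  let g : Ω → ℝ := fun x => min (f x) M
  have hg0 : ∀ x, 0 ≤ g x := fun x => le_min (hf x).le (Real.exp_pos _).le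
  have htrunc : ∑ x, |f x - g x| ≤ X / 32 := by
    have h1 : ∀ x, 32 * (D + 1) * |f x - g x| ≤ f x * Real.log (f x) + 1 := by
      intro x
      rcases le_total (f x) M with hx | hx
      · have e : g x = f x := min_eq_left hx
        rw [e, sub_self, abs_zero, mul_zero]
        have := Real.one_sub_inv_le_log_of_pos (hf x)
        have h2 := mul_le_mul_of_nonneg_left this (hf x).le
        rw [mul_sub, mul_inv_cancel₀ (hf x).ne'] at h2
        linarith [hf x]
      · have e : g x = M := min_eq_right hx
        have hl : 32 * (D + 1) ≤ Real.log (f x) := by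
          rwa [Real.le_log_iff_exp_le (hf x)]
        rw [e, abs_of_nonneg (sub_nonneg.2 hx)]
        have h2 := mul_le_mul_of_nonneg_left hl (hf x).le
        have h3 : 0 ≤ (D + 1) * M := by positivity
        linarith
    have h2 := Finset.sum_le_sum fun x (_ : x ∈ (univ : Finset Ω)) => h1 x
    rw [← Finset.mul_sum, Finset.sum_add_distrib, Finset.sum_const, Finset.card_univ,
      nsmul_eq_mul, mul_one, ← hXdef] at h2
    have h3 : (D + 1) * (32 * ∑ x, |f x - g x|) ≤ (D + 1) * X := by linarith
    have h4 := le_of_mul_le_mul_left h3 (by positivity)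
    linarith
  set m := (∑ x, g x) / X with hm
  have hmean : X * |m - 1| ≤ X / 32 := by
    have e : X * (m - 1) = -∑ x, (f x - g x) := by
      rw [Finset.sum_sub_distrib, hf1, hm]
      field_simp
      ring
    rw [← abs_of_pos hX, ← abs_mul, abs_of_pos hX, e, abs_neg]
    exact (Finset.abs_sum_le_sum_abs _ _).trans htrunc
  have hsq : ∑ x, g x ^ 2 ≤ M * X := by
    rw [← hf1, Finset.mul_sum]
    refine Finset.sum_le_sum fun x _ => ?_
    rw [sq]
    exact mul_le_mul (min_le_right _ _) (min_le_left _ _) (hg0 x) (Real.exp_pos _).le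
  have hvar : ∑ x, |semi Q s g x - m| ≤ X / 16 := by
    have h1 := var_decay hQ hK h g hs0
    have h2 := sq_sum_le_card_mul_sum_sq (s := (univ : Finset Ω)) (f := fun x => |semi Q s g x - m|)
    simp only [sq_abs, Finset.card_univ, ← hXdef] at h2
    have h3 : Real.exp (-(2 * s / K)) * M ≤ (1 / 16) ^ 2 := by
      rw [hM, ← Real.exp_add]
      have e1 : 16 * (D + 1) + 3 ≤ s / K := by
        rw [le_div_iff₀ hK]
        linarith
      have e2 : -(2 * s / K) + 32 * (D + 1) ≤ -6 := by
        have : 2 * s / K = 2 * (s / K) := by ring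
        rw [this]
        linarith
      refine (Real.exp_le_exp.2 e2).trans ?_
      have e3 : Real.exp (-6) = (Real.exp 1 ^ 6)⁻¹ := by
        rw [← Real.exp_nat_mul, ← Real.exp_neg]
        norm_num
      rw [e3, one_div, inv_pow]
      apply inv_anti₀ (by norm_num)
      have := Real.exp_one_gt_d9
      calc (16 : ℝ) ^ 2 ≤ 2.7 ^ 6 := by norm_num
        _ ≤ Real.exp 1 ^ 6 := pow_le_pow_left₀ (by norm_num) (by linarith) 6
    have h4 : ∑ x, (semi Q s g x - m) ^ 2 ≤ (1 / 16) ^ 2 * X :=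
      calc _ ≤ Real.exp (-(2 * s / K)) * ∑ x, g x ^ 2 := h1
        _ ≤ Real.exp (-(2 * s / K)) * (M * X) :=
          mul_le_mul_of_nonneg_left hsq (Real.exp_pos _).le
        _ = (Real.exp (-(2 * s / K)) * M) * X := by ring
        _ ≤ _ := mul_le_mul_of_nonneg_right h3 hX.le
    have h5 : (∑ x, |semi Q s g x - m|) ^ 2 ≤ (X / 16) ^ 2 := by
      refine h2.trans ((mul_le_mul_of_nonneg_left h4 hX.le).trans (le_of_eq (by ring)))
    exact (sq_le_sq₀ (Finset.sum_nonneg fun x _ => abs_nonneg _) (by positivity)).1 h5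
  have hfg := (sum_abs_semi_le hQ hs0 fun x => f x - g x).trans htrunc
  have tri : ∀ x, |semi Q s f x - 1| ≤
      |semi Q s (fun x => f x - g x) x| + |semi Q s g x - m| + |m - 1| := fun x => by
    rw [semi_sub]
    have e : semi Q s f x - 1 = (semi Q s f x - semi Q s g x) + (semi Q s g x - m) + (m - 1) := by
      ring
    rw [e]
    exact abs_add_three _ _ _
  refine (Finset.sum_le_sum fun x _ => tri x).trans ?_
  rw [Finset.sum_add_distrib, Finset.sum_add_distrib, Finset.sum_const, Finset.card_univ,
    nsmul_eq_mul, ← hXdef]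
  linarith

end Semigroup

/-! ### Connectivity of the switch chain -/

section Connectivity

variable {n d : ℕ}

lemma SwitchAdj.symm {A B : BG n} (h : SwitchAdj A B) : SwitchAdj B A := by
  obtain ⟨i₁, i₂, j₁, j₂, hi, hj, h1, h2, h3, h4, rfl⟩ := h
  refine ⟨i₁, i₂, j₂, j₁, hi, hj.symm, ?_, ?_, ?_, ?_, ?_⟩
  · simp [switchMove, hi, hj.symm]
  · simp [switchMove, hi.symm, hj]
  · simp [switchMove]
  · simp [switchMove]
  · funext i j
    simp only [switchMove]
    split_ifs <;> grind

lemma not_switchAdj_self (A : BG n) : ¬SwitchAdj A A := by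
  rintro ⟨i₁, i₂, j₁, j₂, hi, hj, h1, h2, h3, h4, h⟩
  have := congrFun (congrFun h i₁) j₁
  rw [h1] at this
  simp [switchMove] at this

lemma card_filter_comp {α : Type*} [Fintype α] (e : Equiv.Perm α) (f : α → Bool) :
    (univ.filter fun j => f (e j) = true).card = (univ.filter fun j => f j = true).card :=
  Finset.card_equiv e (by simp)

lemma switchMove_row {A : BG n} {i₁ i₂ j₁ j₂ : Fin n} (h1 : A i₁ j₁ = true) (h2 : A i₂ j₂ = true)
    (h3 : A i₁ j₂ = false) (h4 : A i₂ j₁ = false) (hi : i₁ ≠ i₂) (hj : j₁ ≠ j₂) (i j : Fin n) :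
    switchMove A i₁ i₂ j₁ j₂ i j =
      A i ((if i = i₁ ∨ i = i₂ then Equiv.swap j₁ j₂ else 1 : Equiv.Perm (Fin n)) j) := by
  by_cases hi1 : i = i₁
  · subst hi1
    by_cases hj1 : j = j₁
    · subst hj1; simp [switchMove, h3]
    · by_cases hj2 : j = j₂
      · subst hj2; simp [switchMove, hi, hj1, h1]
      · simp [switchMove, hj1, hj2, Equiv.swap_apply_of_ne_of_ne]
  · by_cases hi2 : i = i₂
    · subst hi2
      by_cases hj1 : j = j₁
      · subst hj1; simp [switchMove, h2, hi1, hj]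
      · by_cases hj2 : j = j₂
        · subst hj2; simp [switchMove, h4]
        · simp [switchMove, hj1, hj2, Equiv.swap_apply_of_ne_of_ne]
    · simp [switchMove, hi1, hi2]

lemma switchMove_transpose (A : BG n) (i₁ i₂ j₁ j₂ i j : Fin n) :
    switchMove A i₁ i₂ j₁ j₂ i j = switchMove (fun x y => A y x) j₁ j₂ i₁ i₂ j i := by
  simp only [switchMove, and_comm]
  grind

lemma switchMove_reg {A : BG n} (hA : IsBipReg n d A) {i₁ i₂ j₁ j₂ : Fin n} (h1 : A i₁ j₁ = true)
    (h2 : A i₂ j₂ = true) (h3 : A i₁ j₂ = false) (h4 : A i₂ j₁ = false) (hi : i₁ ≠ i₂)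
    (hj : j₁ ≠ j₂) : IsBipReg n d (switchMove A i₁ i₂ j₁ j₂) := by
  constructor
  · intro i
    simp only [switchMove_row h1 h2 h3 h4 hi hj]
    rw [card_filter_comp _ (A i)]
    exact hA.1 i
  · intro j
    simp only [switchMove_transpose A,
      switchMove_row (A := fun x y => A y x) h1 h2 h4 h3 hj hi]
    rw [card_filter_comp _ fun i => A i j]
    exact hA.2 j

/-- One graph can be transformed into the other by simple switchings. -/
def Conn (G H : OmegaB n d) : Prop :=
  Relation.ReflTransGen (fun G H : OmegaB n d => SwitchAdj G.1 H.1) G H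

/-- A row `i` below `k` at which the edges `(k, j)` and `(i, l)` can be switched. -/
lemma exists_row {A : BG n} (hA : IsBipReg n d A) {k j l : Fin n} (hj : A k j = true)
    (hl : A k l = false) (h : (univ.filter fun i => i < k ∧ A i l = true).card ≤
      (univ.filter fun i => i < k ∧ A i j = true).card) :
    ∃ i, k < i ∧ A i l = true ∧ A i j = false := by
  by_contra! hcon
  have hlt : (univ.filter fun i => A i l = true).card < (univ.filter fun i => A i j = true).card := by
    have split : ∀ c, (univ.filter fun i => A i c = true).card =
        (univ.filter fun i => i < k ∧ A i c = true).card +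
        (univ.filter fun i => ¬i < k ∧ A i c = true).card := by
      intro c
      rw [← Finset.card_filter_add_card_filter_not (s := univ.filter fun i => A i c = true)
        (fun i => i < k), Finset.filter_filter, Finset.filter_filter]
      simp only [and_comm]
    rw [split l, split j]
    refine add_lt_add_of_le_of_lt h (Finset.card_lt_card ?_)
    rw [Finset.ssubset_iff_of_subset]
    · exact ⟨k, by simp [hj], by simp [hl]⟩
    · intro i hi
      simp only [Finset.mem_filter, Finset.mem_univ, true_and] at hi ⊢
      refine ⟨hi.1, ?_⟩
      rcases eq_or_lt_of_le (not_lt.1 hi.1) with e | e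
      · subst e
        rw [hl] at hi
        exact absurd hi.2 (by simp)
      · simpa using hcon i e hi.2
  rw [hA.2, hA.2] at hlt
  exact lt_irrefl _ hlt

/-- The two graphs are made to agree one row after the other. In the row under treatment, a wrong
entry can be corrected by a switching with a lower row in one of the two graphs. -/
lemma conn_of_agree (m : ℕ) : ∀ (r : ℕ) (k : ℕ), n ≤ k + m → ∀ G G' : OmegaB n d,
    (∀ i : Fin n, i.1 < k → G.1 i = G'.1 i) →
    (∀ hk : k < n, (univ.filter fun j => G.1 ⟨k, hk⟩ j = true ∧ G'.1 ⟨k, hk⟩ j = false).card ≤ r) →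
    Conn G G' := by
  induction m with
  | zero =>
    intro r k hk G G' h _
    have : G = G' := Subtype.ext (funext fun i => h i (by omega))
    rw [this]
    exact Relation.ReflTransGen.refl
  | succ m ihm =>
    intro r
    induction r with
    | zero =>
      intro k hk G G' h h0
      refine ihm n (k + 1) (by omega) G G' ?_ fun _ => (Finset.card_le_univ _).trans (by simp)
      intro i hi
      rcases Nat.lt_succ_iff_lt_or_eq.1 hi with hi | hi
      · exact h i hi
      · have h1 := h0 (hi ▸ i.2)
        have e : (⟨k, hi ▸ i.2⟩ : Fin n) = i := Fin.ext hi.symm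
        rw [e] at h1
        have hsub : (univ.filter fun j => G.1 i j = true) ⊆ univ.filter fun j => G'.1 i j = true := by
          intro j hj
          simp only [Finset.mem_filter, Finset.mem_univ, true_and] at hj ⊢
          by_contra hne
          have := Finset.card_pos.2 (show (univ.filter fun j => G.1 i j = true ∧ G'.1 i j = false).Nonempty
            from ⟨j, Finset.mem_filter.2 ⟨Finset.mem_univ j, hj,
            Bool.eq_false_iff.2 hne⟩⟩)
          omega
        have heq := Finset.eq_of_subset_of_card_le hsub (by rw [G.2.1 i, G'.2.1 i])
        funext j
        have := Finset.ext_iff.1 heq j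
        simp only [Finset.mem_filter, Finset.mem_univ, true_and] at this
        exact Bool.eq_iff_iff.2 this
    | succ r ihr =>
      intro k hk G G' h hr
      by_cases hkn : k < n
      swap
      · exact ihr k hk G G' h fun h' => absurd h' hkn
      set k' : Fin n := ⟨k, hkn⟩ with hk'
      by_cases hz : (univ.filter fun j => G.1 k' j = true ∧ G'.1 k' j = false).card = 0
      · exact ihr k hk G G' h fun _ => by rw [← hk', hz]; omega
      obtain ⟨j, hj⟩ := Finset.card_pos.1 (Nat.pos_of_ne_zero hz)
      simp only [Finset.mem_filter, Finset.mem_univ, true_and] at hj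
      obtain ⟨l, hl⟩ : ∃ l, G'.1 k' l = true ∧ G.1 k' l = false := by
        by_contra! hcon
        have hsub : (univ.filter fun j => G'.1 k' j = true) ⊂
            univ.filter fun j => G.1 k' j = true := by
          rw [Finset.ssubset_iff_of_subset]
          · exact ⟨j, by simp [hj.1], by simp [hj.2]⟩
          · intro x hx
            simp only [Finset.mem_filter, Finset.mem_univ, true_and] at hx ⊢
            simpa using hcon x hx
        have := Finset.card_lt_card hsub
        rw [G.2.1, G'.2.1] at this
        exact lt_irrefl _ this
      have hjl : j ≠ l := by
        rintro rfl
        simp [hj.1] at hl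
      have hpre : ∀ c, (univ.filter fun i => i < k' ∧ G.1 i c = true) =
          univ.filter fun i => i < k' ∧ G'.1 i c = true := fun c => by
        refine Finset.filter_congr fun i _ => and_congr_right fun hi => ?_
        rw [h i hi]
      have hrk := hr hkn
      rw [← hk'] at hrk
      have hlt : ∀ S : Finset (Fin n),
          S ⊂ (univ.filter fun j => G.1 k' j = true ∧ G'.1 k' j = false) → S.card ≤ r := fun S hS => by
        have := Finset.card_lt_card hS
        omega
      rcases le_total (univ.filter fun i => i < k' ∧ G.1 i l = true).card
        (univ.filter fun i => i < k' ∧ G.1 i j = true).card with hc | hc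
      · obtain ⟨i, hi, h1, h2⟩ := exists_row G.2 hj.1 hl.2 hc
        let G₁ : OmegaB n d := ⟨switchMove G.1 k' i j l, switchMove_reg G.2 hj.1 h1 hl.2 h2 hi.ne hjl⟩
        have hadj : SwitchAdj G.1 G₁.1 := ⟨k', i, j, l, hi.ne, hjl, hj.1, h1, hl.2, h2, rfl⟩
        refine Relation.ReflTransGen.head hadj (ihr k hk G₁ G' ?_ ?_)
        · intro x hx
          rw [← h x hx]
          funext y
          have hx1 : x ≠ k' := fun e => by simp [e, hk'] at hx
          have hx2 : x ≠ i := fun e => by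
            have : k < i.1 := hi
            rw [e] at hx
            omega
          simp [G₁, switchMove, hx1, hx2]
        · intro _
          apply hlt
          rw [Finset.ssubset_iff_of_subset]
          · exact ⟨j, by simp [hj], by simp [G₁, switchMove, hk']⟩
          · intro x hx
            simp only [Finset.mem_filter, Finset.mem_univ, true_and, ← hk'] at hx ⊢
            refine ⟨?_, hx.2⟩
            have hxl : x ≠ l := fun e => by simp [e, hl.1] at hx
            have := hx.1
            by_cases hxj : x = j
            · rw [hxj]; exact hj.1
            · simpa [G₁, switchMove, hxl, hxj] using this
      · rw [hpre, hpre] at hc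
        obtain ⟨i, hi, h1, h2⟩ := exists_row G'.2 hl.1 hj.2 hc
        have hki : (⟨k, hkn⟩ : Fin n) ≠ i := hi.ne
        let G₁ : OmegaB n d :=
          ⟨switchMove G'.1 k' i l j, switchMove_reg G'.2 hl.1 h1 hj.2 h2 hi.ne hjl.symm⟩
        have hadj : SwitchAdj G'.1 G₁.1 := ⟨k', i, l, j, hi.ne, hjl.symm, hl.1, h1, hj.2, h2, rfl⟩
        refine Relation.ReflTransGen.tail (ihr k hk G G₁ ?_ ?_) hadj.symm
        · intro x hx
          rw [h x hx]
          funext y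
          have hx1 : x ≠ k' := fun e => by simp [e, hk'] at hx
          have hx2 : x ≠ i := fun e => by
            have : k < i.1 := hi
            rw [e] at hx
            omega
          simp [G₁, switchMove, hx1, hx2]
        · intro _
          apply hlt
          rw [Finset.ssubset_iff_of_subset]
          · exact ⟨j, by simp [hj], by simp [G₁, switchMove, hjl, hk', hki]⟩
          · intro x hx
            simp only [Finset.mem_filter, Finset.mem_univ, true_and, ← hk'] at hx ⊢
            refine ⟨hx.1, ?_⟩
            have hxl : x ≠ l := fun e => by simp [e, hl.2] at hx
            have := hx.2
            by_cases hxj : x = j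
            · rw [hxj]; exact hj.2
            · simpa [G₁, switchMove, hxl, hxj] using this

lemma conn_all (G G' : OmegaB n d) : Conn G G' :=
  conn_of_agree n n 0 (by omega) G G' (fun i hi => absurd hi (by omega))
    fun _ => (Finset.card_le_univ _).trans (by simp)

/-- For each `n` the switch chain satisfies some Poincaré inequality, being connected. -/
lemma exists_poincare (n d : ℕ) : ∃ K : ℝ, 0 < K ∧ ∀ u : OmegaB n d → ℝ, ∃ c,
    ∑ G, (u G - c) ^ 2 ≤ K * ∑ G : OmegaB n d, ∑ G' : OmegaB n d,
      if SwitchAdj G.1 G'.1 then (u G - u G') ^ 2 else 0 := by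
  by_cases hne : Nonempty (OmegaB n d)
  swap
  · rw [not_nonempty_iff] at hne
    exact ⟨1, one_pos, fun u => ⟨0, by simp⟩⟩
  obtain ⟨G₀⟩ := hne
  set E : (OmegaB n d → ℝ) → ℝ := fun u => ∑ G : OmegaB n d, ∑ G' : OmegaB n d,
      if SwitchAdj G.1 G'.1 then (u G - u G') ^ 2 else 0 with hE
  have nn : ∀ (u : OmegaB n d → ℝ) (G G' : OmegaB n d),
      0 ≤ if SwitchAdj G.1 G'.1 then (u G - u G') ^ 2 else 0 := fun u G G' => by
    split_ifs
    · exact sq_nonneg _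
    · exact le_rfl
  have hE0 : ∀ u, 0 ≤ E u := fun u =>
    Finset.sum_nonneg fun G _ => Finset.sum_nonneg fun G' _ => nn u G G'
  have step : ∀ (G G' : OmegaB n d), SwitchAdj G.1 G'.1 → ∀ u : OmegaB n d → ℝ,
      |u G' - u G| ≤ √(E u) := by
    intro G G' h u
    apply Real.abs_le_sqrt
    have h1 : (u G - u G') ^ 2 ≤ ∑ G' : OmegaB n d,
        if SwitchAdj G.1 G'.1 then (u G - u G') ^ 2 else 0 := by
      have := Finset.single_le_sum (f := fun G' : OmegaB n d =>
        if SwitchAdj G.1 G'.1 then (u G - u G') ^ 2 else 0) (fun G' _ => nn u G G')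
        (Finset.mem_univ G')
      simpa only [if_pos h] using this
    have h2 := Finset.single_le_sum (f := fun G : OmegaB n d => ∑ G' : OmegaB n d,
      if SwitchAdj G.1 G'.1 then (u G - u G') ^ 2 else 0)
      (fun G _ => Finset.sum_nonneg fun G' _ => nn u G G') (Finset.mem_univ G)
    calc (u G' - u G) ^ 2 = (u G - u G') ^ 2 := by ring
      _ ≤ _ := h1.trans h2
  have path : ∀ G' : OmegaB n d, ∃ k : ℕ, ∀ u : OmegaB n d → ℝ, |u G' - u G₀| ≤ k * √(E u) := by
    intro G'
    have hc := conn_all G₀ G'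
    unfold Conn at hc
    induction hc with
    | refl => exact ⟨0, fun u => by simp⟩
    | @tail G₁ G₂ _ h ih =>
      obtain ⟨k, hk⟩ := ih
      refine ⟨k + 1, fun u => ?_⟩
      have h1 := step _ _ h u
      have h2 := abs_add_le (u G₂ - u G₁) (u G₁ - u G₀)
      rw [sub_add_sub_cancel] at h2
      refine h2.trans ((add_le_add h1 (hk u)).trans (le_of_eq ?_))
      push_cast
      ring
  choose k hk using path
  refine ⟨∑ G', (k G' : ℝ) ^ 2 + 1, by positivity, fun u => ⟨u G₀, ?_⟩⟩
  have : ∑ G, (u G - u G₀) ^ 2 ≤ (∑ G', (k G' : ℝ) ^ 2) * E u := by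
    rw [Finset.sum_mul]
    refine Finset.sum_le_sum fun G _ => ?_
    have h1 := pow_le_pow_left₀ (abs_nonneg _) (hk G u) 2
    rwa [sq_abs, mul_pow, Real.sq_sqrt (hE0 u)] at h1
  refine this.trans ?_
  rw [add_mul, one_mul]
  linarith [hE0 u]

end Connectivity

/-! ### Mixing time -/

section Mixing

variable {Ω : Type*} [Fintype Ω] [DecidableEq Ω]

/-- The density of the half-half mixture of the point mass at `x₀` and the uniform measure. -/
def startF (x₀ : Ω) : Ω → ℝ := fun x =>
  1 / 2 * (Fintype.card Ω * Pi.single (M := fun _ => ℝ) x₀ (1 : ℝ) x) + 1 / 2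

lemma startF_pos (x₀ x : Ω) : 0 < startF x₀ x := by
  unfold startF
  by_cases h : x = x₀
  · subst h
    rw [Pi.single_eq_same]
    positivity
  · rw [Pi.single_eq_of_ne h]
    norm_num

lemma sum_startF (x₀ : Ω) : ∑ x, startF x₀ x = Fintype.card Ω := by
  simp only [startF, Finset.sum_add_distrib, ← Finset.mul_sum, Finset.sum_pi_single',
    Finset.mem_univ, if_true, Finset.sum_const, Finset.card_univ, nsmul_eq_mul]
  ring

lemma entS_startF (x₀ : Ω) :
    entS (startF x₀) ≤ Fintype.card Ω * Real.log (Fintype.card Ω) := by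
  have hX : (1 : ℝ) ≤ Fintype.card Ω := by
    exact_mod_cast Fintype.card_pos_iff.2 ⟨x₀⟩
  rw [entS, sum_startF, div_self (by linarith), Real.log_one, mul_zero, sub_zero,
    ← sum_startF x₀, Finset.sum_mul, sum_startF]
  refine Finset.sum_le_sum fun x _ => mul_le_mul_of_nonneg_left
    (Real.log_le_log (startF_pos x₀ x) ?_) (startF_pos x₀ x).le
  unfold startF
  by_cases h : x = x₀
  · subst h
    rw [Pi.single_eq_same]
    linarith
  · rw [Pi.single_eq_of_ne h]
    linarith

/-- Total variation bound, from the entropy at an intermediate time `t₁`. -/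
theorem tv_of_entropy {Q : Matrix Ω Ω ℝ} (hQ : IsGen Q) (x₀ : Ω) {K D : ℝ} (hK : 0 < K)
    (hD : 0 ≤ D)
    (h : ∀ u : Ω → ℝ, ∃ c, ∑ x, (u x - c) ^ 2 ≤ K * ((1 / 2) * ∑ x, ∑ y, Q x y * (u x - u y) ^ 2))
    {t₁ : ℝ} (ht₁ : 0 ≤ t₁) (hent : entS (semi Q t₁ (startF x₀)) ≤ D * Fintype.card Ω)
    {t : ℝ} (ht : t₁ + K * (16 * (D + 1) + 3) ≤ t) :
    tvDist (fun y => matExp (t • Q) x₀ y) (fun _ => (Fintype.card Ω : ℝ)⁻¹) ≤ 1 / 4 := by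
  have : Nonempty Ω := ⟨x₀⟩
  have h1 := l1_of_ent hQ hK hD h (semi_pos hQ ht₁ (startF_pos x₀))
    (by rw [sum_semi hQ, sum_startF]) hent (s := t - t₁) (by linarith)
  rw [← semi_add, sub_add_cancel] at h1
  have hX : (0 : ℝ) < Fintype.card Ω := by exact_mod_cast Fintype.card_pos
  have e : ∀ y, |semi Q t (startF x₀) y - 1| =
      Fintype.card Ω / 2 * |matExp (t • Q) x₀ y - (Fintype.card Ω : ℝ)⁻¹| := by
    intro y
    have e1 : startF x₀ = ((1 / 2 * Fintype.card Ω : ℝ) • Pi.single x₀ (1 : ℝ) : Ω → ℝ) +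
        fun _ => (1 / 2 : ℝ) := by
      funext x
      simp [startF, mul_assoc]
    have e2 : semi Q t (startF x₀) y = 1 / 2 * Fintype.card Ω * matExp (t • Q) x₀ y + 1 / 2 := by
      have e3 := semi_const hQ t (1 / 2) y
      rw [matExp_symm hQ]
      rw [semi] at e3 ⊢
      rw [e1, Matrix.mulVec_add, Matrix.mulVec_smul, Pi.add_apply, e3]
      simp
    rw [e2, ← abs_of_pos (show (0 : ℝ) < Fintype.card Ω / 2 by positivity), ← abs_mul]
    generalize matExp (t • Q) x₀ y = z
    congr 1
    field_simp
    ring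
  simp only [e] at h1
  rw [← Finset.mul_sum] at h1
  unfold tvDist
  refine le_of_mul_le_mul_left (a := (Fintype.card Ω : ℝ)) ?_ hX
  linarith

end Mixing

section Switch

variable {n d : ℕ}

/-- The rate of each switching. -/
def rate (n d : ℕ) : ℝ := 2 / ((n * d : ℝ) * ((n * d : ℝ) - 1))

lemma QuMat_apply (G G' : OmegaB n d) : QuMat n d G G' =
    (if SwitchAdj G.1 G'.1 then rate n d else 0) -
      if G = G' then (numNeighbors n d G : ℝ) * rate n d else 0 := by
  simp only [QuMat, Matrix.of_apply, Qu]
  by_cases h : G = G'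
  · subst h
    rw [if_pos rfl, if_pos rfl, if_neg (not_switchAdj_self _), rate]
    ring
  · rw [if_neg h, if_neg h, sub_zero, rate]

lemma rate_pos (hnd : 3 ≤ n * d) : 0 < rate n d := by
  have : (3 : ℝ) ≤ n * d := by exact_mod_cast hnd
  have : (0 : ℝ) < n * d - 1 := by linarith
  have : (0 : ℝ) < n * d := by linarith
  unfold rate
  positivity

lemma isGen_QuMat (hnd : 3 ≤ n * d) : IsGen (QuMat n d) where
  symm G G' := by
    rw [QuMat_apply, QuMat_apply]
    congr 1
    · exact if_congr ⟨SwitchAdj.symm, SwitchAdj.symm⟩ rfl rfl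
    · by_cases h : G = G'
      · subst h; rfl
      · rw [if_neg h, if_neg (Ne.symm h)]
  off G G' h := by
    rw [QuMat_apply, if_neg h, sub_zero]
    split_ifs
    · exact (rate_pos hnd).le
    · exact le_rfl
  row G := by
    simp only [QuMat_apply, Finset.sum_sub_distrib, Finset.sum_ite_eq, Finset.mem_univ, if_true]
    rw [← Finset.sum_filter, Finset.sum_const, nsmul_eq_mul, numNeighbors, sub_self]

lemma form_QuMat (F : OmegaB n d → OmegaB n d → ℝ) (hF : ∀ G, F G G = 0) :
    ∑ G, ∑ G', QuMat n d G G' * F G G' =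
      rate n d * ∑ G, ∑ G', if SwitchAdj G.1 G'.1 then F G G' else 0 := by
  rw [Finset.mul_sum]
  refine Finset.sum_congr rfl fun G _ => ?_
  rw [Finset.mul_sum]
  refine Finset.sum_congr rfl fun G' _ => ?_
  rw [QuMat_apply]
  by_cases h : G = G'
  · subst h
    rw [hF]
    simp
  · rw [if_neg h]
    split_ifs <;> simp

lemma log_card_le (hnd : 3 ≤ n * d) :
    Real.log (Fintype.card (OmegaB n d)) ≤ n * d * Real.log (n * d) := by
  rcases Nat.eq_zero_or_pos (Fintype.card (OmegaB n d)) with h0 | h0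
  · rw [h0, Nat.cast_zero, Real.log_zero]
    have : (3 : ℝ) ≤ n * d := by exact_mod_cast hnd
    exact mul_nonneg (by linarith) (Real.log_nonneg (by linarith))
  have s0 := sum_simple (d := d) fun _ : BG n => (1 : ℝ)
  simp only [Finset.sum_const, nsmul_eq_mul, mul_one, Finset.card_univ] at s0
  have hk : 1 ≤ kap n d := by
    have : (1 : ℝ) ≤ d.factorial := by exact_mod_cast d.factorial_pos
    unfold kap
    exact one_le_mul_of_one_le_of_one_le (one_le_pow₀ this) (one_le_pow₀ this)
  have h1 : ((simpleP n d).card : ℝ) ≤ (n * d : ℝ) ^ (n * d) := by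
    have := Finset.card_le_univ (simpleP n d)
    rw [Fintype.card_perm] at this
    have h2 : Fintype.card (Slot n d) = n * d := by simp
    rw [h2] at this
    exact_mod_cast this.trans (Nat.factorial_le_pow _)
  have h2 : (Fintype.card (OmegaB n d) : ℝ) ≤ (n * d : ℝ) ^ (n * d) := by
    refine le_trans ?_ (s0 ▸ h1)
    exact le_mul_of_one_le_left (Nat.cast_nonneg _) hk
  have := Real.log_le_log (by exact_mod_cast h0) h2
  rw [Real.log_pow] at this
  exact_mod_cast this

/-- Mixing within time `O(log |Ω|)` times the relaxation time, for each fixed `n`. -/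
lemma mixing_small (hnd : 3 ≤ n * d) : ∃ T : ℝ, 0 < T ∧ ∀ t, T ≤ t → ∀ G : OmegaB n d,
    tvDist (fun G' => matExp (t • QuMat n d) G G') (piU n d) ≤ 1 / 4 := by
  obtain ⟨K, hK, h⟩ := exists_poincare n d
  have hq := rate_pos hnd
  set D := Real.log (Fintype.card (OmegaB n d)) with hD
  have hD0 : 0 ≤ D := Real.log_natCast_nonneg _
  refine ⟨K * 2 / rate n d * (16 * (D + 1) + 3), by positivity, fun t ht G => ?_⟩
  refine tv_of_entropy (isGen_QuMat hnd) G (K := K * 2 / rate n d) (D := D) (by positivity) hD0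
    (fun u => ?_) le_rfl ?_ (by linarith)
  · obtain ⟨c, hc⟩ := h u
    refine ⟨c, hc.trans (le_of_eq ?_)⟩
    rw [form_QuMat (fun G G' => (u G - u G') ^ 2) (fun G => by simp)]
    field_simp
  · rw [semi_zero, mul_comm]
    exact entS_startF G

/-- Mixing for `n` large: after time of order `N log N`, with `N = n d`, the modified log-Sobolev
inequality has brought the entropy down to `O(log N)`, and then the spectral gap takes over. -/
lemma mixing_large (hd : 2 ≤ d) (hN : 200 * d ^ 6 ≤ n * d) (t : ℝ)
    (ht : n * d * (2 * d ^ 2 + 4 * d ^ 2 * Real.exp (5000 * d ^ 6) * (128 * d ^ 2 + 163)) *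
      Real.log (n * d) ≤ t) (G : OmegaB n d) :
    tvDist (fun G' => matExp (t • QuMat n d) G G') (piU n d) ≤ 1 / 4 := by
  have : Nonempty (OmegaB n d) := ⟨G⟩
  have hnd : 3 ≤ n * d := le_trans (by nlinarith [Nat.one_le_pow 6 d (by omega)]) hN
  have hnd' : (3 : ℝ) ≤ (n * d : ℝ) := by exact_mod_cast hnd
  have hd' : (2 : ℝ) ≤ d := by exact_mod_cast hd
  have hq := rate_pos hnd
  have hQ := isGen_QuMat hnd
  set N : ℝ := n * d with hNdef
  set l := Real.log N with hl
  have hlog : 1 ≤ l := by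
    rw [hl, Real.le_log_iff_exp_le (by linarith)]
    have := Real.exp_one_lt_d9
    linarith
  set e := Real.exp (5000 * d ^ 6) with he
  have he0 : 0 < e := Real.exp_pos _
  set A : ℝ := 2 * d ^ 2 * N with hA
  have hA0 : 0 < A := by positivity
  set K : ℝ := 4 * d ^ 2 * N * e with hK
  have hK0 : 0 < K := by positivity
  set B : ℝ := (8 * d ^ 2 + 8) * l with hB
  have hB0 : 0 ≤ B := by positivity
  have hmlsi : ∀ u : OmegaB n d → ℝ, (∀ x, 0 < u x) → entS u ≤
      A * ((1 / 2) * ∑ x, ∑ y, QuMat n d x y * phi (u x) (u y)) + B * ∑ x, u x := by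
    intro u hu
    have h1 := graph_mlsi hnd u hu
    rw [form_QuMat (fun G G' => phi (u G) (u G')) (fun G => by simp [phi])]
    set E := ∑ G : OmegaB n d, ∑ G' : OmegaB n d, if SwitchAdj G.1 G'.1 then phi (u G) (u G') else 0
      with hE
    have hE0 : 0 ≤ E := Finset.sum_nonneg fun G _ => Finset.sum_nonneg fun G' _ => by
      split_ifs
      · exact phi_nonneg (hu G) (hu G')
      · exact le_rfl
    refine h1.trans (add_le_add_left ?_ _)
    rw [← mul_assoc, ← mul_assoc]
    refine mul_le_mul_of_nonneg_right ?_ hE0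
    have : A * (1 / 2) * rate n d = 2 * d ^ 2 / (N - 1) := by
      rw [hA, rate, ← hNdef]
      have : N - 1 ≠ 0 := by linarith
      field_simp
    rw [this]
    exact div_le_div_of_nonneg_left (by positivity) (by linarith) (by linarith)
  have hpoin : ∀ u : OmegaB n d → ℝ, ∃ c, ∑ x, (u x - c) ^ 2 ≤
      K * ((1 / 2) * ∑ x, ∑ y, QuMat n d x y * (u x - u y) ^ 2) := by
    intro u
    obtain ⟨c, hc⟩ := graph_poincare hd hN u
    refine ⟨c, hc.trans ?_⟩
    rw [form_QuMat (fun G G' => (u G - u G') ^ 2) (fun G => by simp)]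
    set E := ∑ G : OmegaB n d, ∑ G' : OmegaB n d, if SwitchAdj G.1 G'.1 then (u G - u G') ^ 2 else 0
      with hE
    have hE0 : 0 ≤ E := Finset.sum_nonneg fun G _ => Finset.sum_nonneg fun G' _ => by
      split_ifs
      · exact sq_nonneg _
      · exact le_rfl
    have h1 : K * (1 / 2) * rate n d = e / (N - 1) * (4 * d ^ 2) := by
      rw [hK, rate, ← hNdef]
      have : N - 1 ≠ 0 := by linarith
      field_simp
    have h2 : K * (1 / 2 * (rate n d * E)) = e / (N - 1) * (4 * d ^ 2 * E) := by
      linear_combination E * h1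
    rw [h2]
    exact mul_le_mul_of_nonneg_right
      (div_le_div_of_nonneg_left he0.le (by linarith) (by linarith)) (by positivity)
  set X : ℝ := (Fintype.card (OmegaB n d) : ℝ) with hX
  have hX0 : 0 < X := by
    rw [hX]
    exact_mod_cast Fintype.card_pos
  -- The entropy is at most `D * X` from time `A * log N` on.
  set D : ℝ := (8 * d ^ 2 + 9) * l with hD
  refine tv_of_entropy hQ G (K := K) (D := D) (t₁ := A * l) hK0 (by positivity) hpoin
    (by positivity) ?_ ?_
  · have h1 := ent_decay hQ hA0 hmlsi (startF_pos G) (t := A * l) (by positivity)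
    have h2 : Real.exp (-(A * l / A)) = N⁻¹ := by
      rw [mul_div_cancel_left₀ _ hA0.ne', Real.exp_neg, hl, Real.exp_log (by linarith)]
    have h3 := entS_startF G
    have h4 := log_card_le hnd
    rw [← hX] at h3 h4
    rw [← hNdef, ← hl] at h4
    rw [h2, sum_startF, ← hX] at h1
    have hN0 : 0 < N := by linarith
    have h5 : N⁻¹ * (entS (startF G) - B * X) ≤ l * X := by
      rw [inv_mul_le_iff₀ hN0]
      have := mul_le_mul_of_nonneg_left h4 hX0.le
      nlinarith [mul_nonneg hB0 hX0.le]
    rw [hD]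
    rw [hB] at h1 h5
    linarith
  · refine le_trans ?_ ht
    have h1 : 16 * (D + 1) + 3 ≤ (128 * d ^ 2 + 163) * l := by
      rw [hD]
      nlinarith
    have h2 := mul_le_mul_of_nonneg_left h1 hK0.le
    refine (add_le_add_right h2 _).trans (le_of_eq ?_)
    rw [hA, hK]
    ring

end Switch

/-- Corollary 1.5: for every fixed `d ≥ 2`, the total variation mixing time of the
switch chain is at most `C_d · n · log n`: for all `t ≥ C_d n log n` and all starting
states, the chain is within total variation distance `1/4` of the uniform measure. -/
theorem switch_chain_mixing_upper (d : ℕ) (hd : 2 ≤ d) :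
    ∃ C : ℝ, 0 < C ∧
      ∀ n : ℕ, 2 * d ≤ n →
        ∀ t : ℝ, C * n * Real.log n ≤ t →
          ∀ G : OmegaB n d,
            tvDist (fun G' => matExp (t • QuMat n d) G G') (piU n d) ≤ 1 / 4 := by
  have hd' : (2 : ℝ) ≤ d := by exact_mod_cast hd
  have hex : ∀ n : ℕ, ∃ T : ℝ, 0 < T ∧ (3 ≤ n * d → ∀ t, T ≤ t → ∀ G : OmegaB n d,
      tvDist (fun G' => matExp (t • QuMat n d) G G') (piU n d) ≤ 1 / 4) := by
    intro n
    by_cases h : 3 ≤ n * d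
    · obtain ⟨T, hT, hT'⟩ := mixing_small h
      exact ⟨T, hT, fun _ => hT'⟩
    · exact ⟨1, one_pos, fun h' => absurd h' h⟩
  choose T hT hmix using hex
  set K : ℝ := 2 * d ^ 2 + 4 * d ^ 2 * Real.exp (5000 * d ^ 6) * (128 * d ^ 2 + 163) with hK
  have hK0 : 0 < K := by positivity
  -- The sum takes care of the finitely many `n` that are too small for the general argument.
  refine ⟨2 * d * K + ∑ n ∈ Finset.range (200 * d ^ 6), T n,
    add_pos_of_pos_of_nonneg (by positivity) (Finset.sum_nonneg fun n _ => (hT n).le), ?_⟩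
  intro n hn t ht G
  have hn4 : (4 : ℝ) ≤ n := by exact_mod_cast (show 4 ≤ n by omega)
  have hlog : 1 ≤ Real.log n := by
    rw [Real.le_log_iff_exp_le (by linarith)]
    have := Real.exp_one_lt_d9
    linarith
  have hS : 0 ≤ ∑ n ∈ Finset.range (200 * d ^ 6), T n := Finset.sum_nonneg fun n _ => (hT n).le
  by_cases hN : 200 * d ^ 6 ≤ n * d
  · refine mixing_large hd hN t (le_trans ?_ ht) G
    have hdn : (d : ℝ) ≤ n := by exact_mod_cast (show d ≤ n by omega)
    have h1 : Real.log (n * d) ≤ 2 * Real.log n := by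
      rw [Real.log_mul (by linarith) (by linarith)]
      have := Real.log_le_log (by linarith) hdn
      linarith
    rw [← hK]
    calc n * d * K * Real.log (n * d) ≤ n * d * K * (2 * Real.log n) :=
          mul_le_mul_of_nonneg_left h1 (by positivity)
      _ = 2 * d * K * n * Real.log n := by ring
      _ ≤ _ := by
        refine mul_le_mul_of_nonneg_right (mul_le_mul_of_nonneg_right ?_ (by linarith))
          (by linarith)
        linarith
  · have hnd : 3 ≤ n * d := by nlinarith
    have hmem : n ∈ Finset.range (200 * d ^ 6) := by
      rw [Finset.mem_range]
      nlinarith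
    refine hmix n hnd t (le_trans ?_ ht) G
    have h1 := Finset.single_le_sum (f := T) (fun n _ => (hT n).le) hmem
    have h2 : 1 ≤ (n : ℝ) * Real.log n := by nlinarith
    have h3 : 0 ≤ 2 * d * K := by positivity
    calc T n ≤ (2 * d * K + ∑ n ∈ Finset.range (200 * d ^ 6), T n) * 1 := by linarith
      _ ≤ (2 * d * K + ∑ n ∈ Finset.range (200 * d ^ 6), T n) * (n * Real.log n) :=
        mul_le_mul_of_nonneg_left h2 (by positivity)
      _ = _ := by ring
end
end

section
/- There are universal constants c, C > 0 with the following property. Let (Ω, π, Q) be a reversible Markov chain on a finite state space with fully supported stationary measure π, and let K > 0. Assume that Ent_π(f) ≤ K·E_π(f, log f) holds for every function f : Ω → (0,∞) satisfying f(ω) ≥ c for all ω ∈ Ω and E_π f = 1. Then (Ω, π, Q) satisfies the MLSI with constant C·K, i.e. Ent_π(f) ≤ C·K·E_π(f, log f) for every f : Ω → (0,∞). -/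
/-!
The idea is to truncate from below. For a mean-one `f`, put `g = max f (1/4)`. Truncation is a
monotone contraction both for `f` and for `log f`, so it does not increase the Dirichlet form
(`dirForm_max_le`). Conversely it loses only a constant factor of the entropy
(`entPi_le_entPi_max`): with `φ x = x log x - x + 1 ≥ 0` one has `Ent f = E[φ(f)]`, and the part of
this coming from `{f < 1/4}` is at most `p = P(f < 1/4)`. On that set `g = 1/4`, so `E[φ(g)]`
already contains `φ(1/4) p ≥ 0.4 p`. The mean `m` of `g` satisfies `0 ≤ m - 1 ≤ p/4`, hence
`Ent g = E[φ(g)] - φ(m)` differs from `E[φ(g)]` by at most `p/16`, a small fraction of it.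

Since `g / m` has mean one and is at least `(1/4) / (5/4) = 1/5`, the hypothesis applies to it, and
homogeneity of both functionals gives the claim, first for mean-one `f` and then in general.
-/

open Finset

noncomputable section

/-- `π` is a fully supported probability vector. -/
def IsProbVec {Ω : Type*} [Fintype Ω] (π : Ω → ℝ) : Prop :=
  (∀ ω, 0 < π ω) ∧ ∑ ω, π ω = 1

/-- `Q` is a reversible Markov generator with stationary measure `π`. -/
structure IsMarkovGenerator {Ω : Type*} [Fintype Ω] (π : Ω → ℝ) (Q : Ω → Ω → ℝ) : Prop where
  offdiag_nonneg : ∀ ω ω', ω ≠ ω' → 0 ≤ Q ω ω'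
  row_sum : ∀ ω, ∑ ω', Q ω ω' = 0
  reversible : ∀ ω ω', π ω * Q ω ω' = π ω' * Q ω' ω

theorem dirForm_smul {Ω : Type*} [Fintype Ω] (π : Ω → ℝ) (Q : Ω → Ω → ℝ) (f : Ω → ℝ)
    {s : ℝ} (hs : s ≠ 0) : dirForm π Q (fun ω => s * f ω) = s * dirForm π Q f := by
  unfold dirForm
  simp only [mul_div_mul_left _ _ hs, Finset.mul_sum]
  refine Finset.sum_congr rfl fun x _ => Finset.sum_congr rfl fun y _ => ?_
  ring

theorem entPi_smul {Ω : Type*} [Fintype Ω] (π f : Ω → ℝ) (hf : ∀ ω, 0 < f ω)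
    (hm : 0 < ∑ ω, π ω * f ω) {s : ℝ} (hs : 0 < s) :
    entPi π (fun ω => s * f ω) = s * entPi π f := by
  have h : ∑ ω, π ω * (s * f ω) = s * ∑ ω, π ω * f ω := by
    rw [Finset.mul_sum]
    exact Finset.sum_congr rfl fun x _ => by ring
  unfold entPi
  simp only [h]
  generalize ∑ ω, π ω * f ω = m at hm
  rw [Finset.mul_sum]
  refine Finset.sum_congr rfl fun x _ => ?_
  rw [Real.log_mul hs.ne' (hf x).ne', Real.log_mul hs.ne' hm.ne']
  ring

theorem max_term_le_of_le {a b t : ℝ} (ha : 0 < a) (hab : a ≤ b) :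
    (max b t - max a t) * Real.log (max b t / max a t) ≤ (b - a) * Real.log (b / a) := by
  have hA : 0 < max a t := lt_max_of_lt_left ha
  have hAB : max a t ≤ max b t := max_le_max_right t hab
  have hb : 0 < b := ha.trans_le hab
  have h1 : max b t - max a t ≤ b - a := by
    rcases max_cases b t with h | h <;> rcases max_cases a t with h' | h' <;> linarith
  have h2 : max b t / max a t ≤ b / a := by
    rw [div_le_div_iff₀ hA ha]
    rcases max_cases b t with ⟨h, h0⟩ | ⟨h, h0⟩ <;> rw [h]
    · exact mul_le_mul_of_nonneg_left (le_max_left a t) hb.le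
    · rw [max_eq_right (hab.trans h0.le), mul_comm]
      exact mul_le_mul_of_nonneg_right hab (hb.trans h0).le
  exact mul_le_mul h1 (Real.log_le_log (div_pos (hA.trans_le hAB) hA) h2)
    (Real.log_nonneg ((one_le_div hA).2 hAB)) (sub_nonneg.2 hab)

theorem max_term_le {a b : ℝ} (t : ℝ) (ha : 0 < a) (hb : 0 < b) :
    (max a t - max b t) * Real.log (max a t / max b t) ≤ (a - b) * Real.log (a / b) := by
  rcases le_total b a with h | h
  · exact max_term_le_of_le hb h
  · have := max_term_le_of_le (t := t) ha h
    rw [← inv_div (max b t), ← inv_div b, Real.log_inv, Real.log_inv]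
    linarith

theorem dirForm_max_le {Ω : Type*} [Fintype Ω] {π : Ω → ℝ} {Q : Ω → Ω → ℝ}
    (hπ : IsProbVec π) (hQ : IsMarkovGenerator π Q) (f : Ω → ℝ) (hf : ∀ ω, 0 < f ω) (t : ℝ) :
    dirForm π Q (fun ω => max (f ω) t) ≤ dirForm π Q f := by
  unfold dirForm
  refine mul_le_mul_of_nonneg_left ?_ (by norm_num)
  refine Finset.sum_le_sum fun x _ => ?_
  refine Finset.sum_le_sum fun y _ => ?_
  -- `Q` may be negative on the diagonal, where both terms vanish.
  by_cases hxy : x = y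
  · simp [hxy]
  · rw [mul_assoc, mul_assoc (π x * Q x y)]
    exact mul_le_mul_of_nonneg_left (max_term_le t (hf x) (hf y))
      (mul_nonneg (hπ.1 x).le (hQ.offdiag_nonneg x y hxy))

/-- The identity `Ent f = E[φ(f)] - φ(m)` with `φ x = x log x - x + 1` and `m = E f`. -/
theorem entPi_eq {Ω : Type*} [Fintype Ω] {π : Ω → ℝ} (hπ : IsProbVec π) (f : Ω → ℝ) {m : ℝ}
    (hm : ∑ ω, π ω * f ω = m) :
    entPi π f = ∑ ω, π ω * (f ω * Real.log (f ω) - f ω + 1) - (m * Real.log m - m + 1) := by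
  have h1 : ∑ ω, π ω * f ω * Real.log m = m * Real.log m := by rw [← Finset.sum_mul, hm]
  have h2 : ∑ ω, π ω * (f ω * Real.log (f ω) - f ω + 1)
      = ∑ ω, π ω * f ω * Real.log (f ω) - m + 1 := by
    conv_rhs => rw [← hm, ← hπ.2]
    rw [← Finset.sum_sub_distrib, ← Finset.sum_add_distrib]
    exact Finset.sum_congr rfl fun x _ => by ring
  unfold entPi
  rw [hm, h2]
  simp only [mul_sub, Finset.sum_sub_distrib, h1]
  ring

theorem phi_nonneg_s4 {x : ℝ} (hx : 0 < x) : 0 ≤ x * Real.log x - x + 1 := by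
  have h := Real.one_sub_inv_le_log_of_pos hx
  have := mul_le_mul_of_nonneg_left h hx.le
  rw [mul_sub, mul_inv_cancel₀ hx.ne'] at this
  linarith

theorem phi_quarter : 2 / 5 ≤ (1 / 4 : ℝ) * Real.log (1 / 4) - 1 / 4 + 1 := by
  have h : Real.log (1 / 4) = -(2 * Real.log 2) := by
    rw [show (1 / 4 : ℝ) = (2 ^ 2)⁻¹ by norm_num, Real.log_inv, Real.log_pow]
    norm_num
  have := Real.log_two_lt_d9
  rw [h]
  linarith

/-- Truncating a mean-one function at level `1/4` raises its mean by at most `1/4` and costs at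
most a factor `3` of its entropy. -/
theorem entPi_le_entPi_max {Ω : Type*} [Fintype Ω] {π : Ω → ℝ} (hπ : IsProbVec π) (f : Ω → ℝ)
    (hf : ∀ ω, 0 < f ω) (hm : ∑ ω, π ω * f ω = 1) :
    1 ≤ ∑ ω, π ω * max (f ω) (1 / 4) ∧ ∑ ω, π ω * max (f ω) (1 / 4) ≤ 5 / 4 ∧
      entPi π f ≤ 3 * entPi π (fun ω => max (f ω) (1 / 4)) := by
  -- `d` is the indicator of the set where the truncation acts, and `p` is its probability.
  set d : Ω → ℝ := fun ω => if f ω < 1 / 4 then 1 else 0 with hd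
  set p : ℝ := ∑ ω, π ω * d ω with hp
  set m : ℝ := ∑ ω, π ω * max (f ω) (1 / 4) with hmg
  have hp1 : p ≤ 1 := by
    rw [hp, ← hπ.2]
    refine Finset.sum_le_sum fun x _ => mul_le_of_le_one_right (hπ.1 x).le ?_
    simp only [hd]
    split_ifs <;> norm_num
  have hp0 : 0 ≤ p := by
    refine Finset.sum_nonneg fun x _ => mul_nonneg (hπ.1 x).le ?_
    simp only [hd]
    split_ifs <;> norm_num
  have hm1 : 1 ≤ m := by
    conv_lhs => rw [← hm]
    exact Finset.sum_le_sum fun x _ => mul_le_mul_of_nonneg_left (le_max_left _ _) (hπ.1 x).le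
  have hm2 : m ≤ 1 + p / 4 := by
    suffices m ≤ ∑ ω, π ω * f ω + p / 4 by linarith
    rw [hmg, hp, Finset.sum_div, ← Finset.sum_add_distrib]
    refine Finset.sum_le_sum fun x _ => ?_
    have : max (f x) (1 / 4) ≤ f x + d x / 4 := by
      simp only [hd]
      split_ifs with h
      · exact max_le (by linarith) (by linarith [hf x])
      · exact max_le (by linarith) (by linarith)
    have := mul_le_mul_of_nonneg_left this (hπ.1 x).le
    linarith
  refine ⟨hm1, by linarith, ?_⟩
  have e1 := entPi_eq hπ f hm
  have e2 := entPi_eq hπ (fun ω => max (f ω) (1 / 4)) hmg.symm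
  rw [Real.log_one] at e1
  set F : ℝ := ∑ ω, π ω * (f ω * Real.log (f ω) - f ω + 1)
  set G : ℝ := ∑ ω, π ω * (max (f ω) (1 / 4) * Real.log (max (f ω) (1 / 4))
    - max (f ω) (1 / 4) + 1)
  have hG : 2 / 5 * p ≤ G := by
    rw [hp, Finset.mul_sum]
    refine Finset.sum_le_sum fun x _ => ?_
    rw [mul_left_comm]
    refine mul_le_mul_of_nonneg_left ?_ (hπ.1 x).le
    simp only [hd]
    split_ifs with h
    · rw [max_eq_right h.le]
      linarith [phi_quarter]
    · rw [mul_zero]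
      exact phi_nonneg_s4 (lt_max_of_lt_left (hf x))
  have hFG : F ≤ G + 3 / 5 * p := by
    rw [hp, Finset.mul_sum, ← Finset.sum_add_distrib]
    refine Finset.sum_le_sum fun x _ => ?_
    rw [mul_left_comm, ← mul_add]
    refine mul_le_mul_of_nonneg_left ?_ (hπ.1 x).le
    simp only [hd]
    split_ifs with h
    · rw [max_eq_right h.le]
      have := mul_nonpos_of_nonneg_of_nonpos (hf x).le
        (Real.log_nonpos (hf x).le (by linarith))
      linarith [phi_quarter, hf x]
    · rw [max_eq_left (not_lt.1 h)]
      linarith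
  have hphi : m * Real.log m - m + 1 ≤ p / 16 := by
    have h1 : m * Real.log m ≤ m * (m - 1) :=
      mul_le_mul_of_nonneg_left (Real.log_le_sub_one_of_pos (by linarith)) (by linarith)
    have h2 : (m - 1) * (m - 1) ≤ (p / 4) * (1 / 4) :=
      mul_le_mul (by linarith) (by linarith) (by linarith) (by linarith)
    linarith
  rw [e1, e2]
  linarith

/-- Lemma 2.1: if the MLSI holds for all mean-one functions bounded below by `c`,
then the full MLSI holds up to a universal constant. -/
theorem mlsi_from_bounded_below_functions :
    ∃ c C : ℝ, 0 < c ∧ 0 < C ∧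
      ∀ (Ω : Type) [Fintype Ω] [Nonempty Ω] (π : Ω → ℝ) (Q : Ω → Ω → ℝ),
        IsProbVec π → IsMarkovGenerator π Q →
        ∀ K : ℝ, 0 < K →
          (∀ f : Ω → ℝ, (∀ ω, 0 < f ω) → (∀ ω, c ≤ f ω) → (∑ ω, π ω * f ω) = 1 →
            entPi π f ≤ K * dirForm π Q f) →
          ∀ f : Ω → ℝ, (∀ ω, 0 < f ω) →
            entPi π f ≤ C * K * dirForm π Q f := by
  refine ⟨1 / 5, 3, by norm_num, by norm_num, ?_⟩
  intro Ω _ _ π Q hπ hQ K hK H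
  have mean_one : ∀ f : Ω → ℝ, (∀ ω, 0 < f ω) → (∑ ω, π ω * f ω) = 1 →
      entPi π f ≤ 3 * K * dirForm π Q f := by
    intro f hf hm
    obtain ⟨h1, h2, h3⟩ := entPi_le_entPi_max hπ f hf hm
    set g : Ω → ℝ := fun ω => max (f ω) (1 / 4) with hg
    set m : ℝ := ∑ ω, π ω * max (f ω) (1 / 4) with hmg
    have hm0 : 0 < m := by linarith
    have hg0 : ∀ ω, 0 < g ω := fun ω => lt_max_of_lt_left (hf ω)
    have h := H (fun ω => m⁻¹ * g ω) (fun ω => mul_pos (inv_pos.2 hm0) (hg0 ω))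
      (fun ω => by
        rw [inv_mul_eq_div, le_div_iff₀ hm0]
        have : 1 / 4 ≤ g ω := le_max_right _ _
        linarith)
      (by
        simp only [mul_left_comm _ m⁻¹, ← Finset.mul_sum]
        exact inv_mul_cancel₀ hm0.ne')
    rw [entPi_smul π g hg0 hm0 (inv_pos.2 hm0), dirForm_smul π Q g (inv_pos.2 hm0).ne',
      mul_left_comm] at h
    have h4 : entPi π g ≤ K * dirForm π Q g := le_of_mul_le_mul_left h (inv_pos.2 hm0)
    have h5 := mul_le_mul_of_nonneg_left (dirForm_max_le hπ hQ f hf (1 / 4)) hK.le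
    linarith
  intro f hf
  have hm0 : 0 < ∑ ω, π ω * f ω :=
    Finset.sum_pos (fun ω _ => mul_pos (hπ.1 ω) (hf ω)) Finset.univ_nonempty
  set m : ℝ := ∑ ω, π ω * f ω with hmf
  have h := mean_one (fun ω => m⁻¹ * f ω) (fun ω => mul_pos (inv_pos.2 hm0) (hf ω))
    (by
      simp only [mul_left_comm _ m⁻¹, ← Finset.mul_sum]
      exact inv_mul_cancel₀ hm0.ne')
  rw [entPi_smul π f hf hm0 (inv_pos.2 hm0), dirForm_smul π Q f (inv_pos.2 hm0).ne',
    mul_left_comm] at h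
  exact le_of_mul_le_mul_left h (inv_pos.2 hm0)
end
end
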